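/- Fix an integer d ≥ 4 and set β = d/2 − 2. Let Eₙ = E[f₀(Qₙ)] and Vₙ = Var(f₀(Qₙ)). Then sup_{z ∈ ℝ} | μ_β^{⊗n}( (f₀(Qₙ) − Eₙ)/√Vₙ ≤ z ) − Φ(z) | tends to 0 as n → ∞, where Φ is the cumulative distribution function of the standard Gaussian distribution on ℝ (mean 0, variance 1). In particular, (f₀(Qₙ) − Eₙ)/√Vₙ converges in distribution to a standard Gaussian random variable. -/

import Mathlib

open MeasureTheory

/-- The `β`-distribution on the closed unit disk of `ℝ²`. -/
noncomputable def betaMeasure (β : ℝ) : Measure (EuclideanSpace ℝ (Fin 2)) :=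
  volume.withDensity fun x =>
    ENNReal.ofReal (if ‖x‖ ≤ 1 then (β + 1) / Real.pi * (1 - ‖x‖ ^ 2) ^ β else 0)

instance (β : ℝ) : SigmaFinite (betaMeasure β) :=
  SigmaFinite.withDensity_ofReal _

/-- The joint law of `n` i.i.d. points with law `μ_β`, realized on `(ℝ²)ⁿ`. -/
noncomputable def betaPi (β : ℝ) (n : ℕ) :
    Measure (Fin n → EuclideanSpace ℝ (Fin 2)) :=
  Measure.pi fun _ => betaMeasure β

/-- The number of vertices (extreme points) of the convex hull `Qₙ`, as a real. -/
noncomputable def vertCount {n : ℕ} (ω : Fin n → EuclideanSpace ℝ (Fin 2)) : ℝ :=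
  Nat.card (Set.extremePoints ℝ (convexHull ℝ (Set.range ω)))

/-- `E[f₀(Qₙ)]`. -/
noncomputable def meanF0 (β : ℝ) (n : ℕ) : ℝ :=
  ∫ ω, vertCount ω ∂ betaPi β n

/-- `Var(f₀(Qₙ)) = E[f₀(Qₙ)²] - (E[f₀(Qₙ)])²`. -/
noncomputable def varF0 (β : ℝ) (n : ℕ) : ℝ :=
  (∫ ω, vertCount ω ^ 2 ∂ betaPi β n) - meanF0 β n ^ 2

/-!
Divide the vicinity of the unit circle into `K` congruent cells of angle of order `1 / K` and depth
of order `1 / K ^ 2`, where `K ^ (2 * β + 3)` is slightly smaller than `n`, so that a cell receives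
a small power of `n` of the points. With overwhelming probability every sector contains a point very
close to the circle and no cell is crowded. On this event a point is a vertex if and only if it is
exposed among the points of the cell around it, so the vertex count is a sum of bounded functionals,
each of which depends only on the points in one small cell. Such functionals are almost uncorrelated
when their cells are disjoint, and the Stein–Tikhomirov method gives a differential inequality which
forces the characteristic function of the standardised sum to be close to the Gaussian one. By
Pólya's theorem, pointwise convergence of the characteristic functions is enough.

The method needs a lower bound of the right order on the variance. At a slightly coarser scale there
is a positive probability that a block of sectors contains exactly three points: two flanking ones
and a deeper one in the middle. Reflecting the middle point to a position next to a flanking point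
preserves the measure and removes a vertex. The differences between the indicators of such an event
and of its reflection are orthogonal for different blocks, and each has a covariance with the vertex
count that is bounded below, so by Bessel's inequality the variance is at least a constant multiple
of the number of blocks.
-/

section GaussianODE

open Complex in
private lemma norm_cexp_sq_half (s : ℝ) : ‖cexp ((s : ℂ) ^ 2 / 2)‖ = Real.exp (s ^ 2 / 2) := by
  rw [show (s : ℂ) ^ 2 / 2 = ((s ^ 2 / 2 : ℝ) : ℂ) by push_cast; ring, ← ofReal_exp, norm_real,
    Real.norm_of_nonneg (Real.exp_pos _).le]

open Complex in
theorem norm_sub_cexp_neg_sq_half_le {f f' : ℝ → ℂ} {t C : ℝ}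
    (hf : ∀ s, HasDerivAt f (f' s) s) (h0 : f 0 = 1)
    (hC : ∀ s, |s| ≤ |t| → ‖f' s + s * f s‖ ≤ C) :
    ‖f t - cexp (-(t : ℂ) ^ 2 / 2)‖ ≤ C * |t| := by
  have hC0 : 0 ≤ C := (norm_nonneg _).trans (hC 0 (by simp))
  have hexp (s : ℝ) : HasDerivAt (fun s : ℝ => cexp ((s : ℂ) ^ 2 / 2))
      (cexp ((s : ℂ) ^ 2 / 2) * s) s := by
    have := ((ofRealCLM.hasDerivAt (x := s)).pow 2).div_const 2
    exact HasDerivAt.cexp (by simpa using this)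
  -- After multiplying by the integrating factor, the hypothesis is a bound on a derivative.
  have hderiv (s : ℝ) : HasDerivAt (fun s : ℝ => f s * cexp ((s : ℂ) ^ 2 / 2))
      ((f' s + s * f s) * cexp ((s : ℂ) ^ 2 / 2)) s :=
    ((hf s).mul (hexp s)).congr_deriv (by ring)
  have hbound : ∀ s ∈ Set.uIcc 0 t,
      ‖(f' s + s * f s) * cexp ((s : ℂ) ^ 2 / 2)‖ ≤ C * Real.exp (t ^ 2 / 2) := by
    intro s hs
    have hst : |s| ≤ |t| := by simpa using Set.abs_sub_left_of_mem_uIcc hs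
    have hsq : s ^ 2 ≤ t ^ 2 := sq_le_sq.2 hst
    rw [norm_mul, norm_cexp_sq_half]
    gcongr
    exact hC s hst
  have hmvt := (convex_uIcc (0 : ℝ) t).norm_image_sub_le_of_norm_hasDerivWithin_le
    (fun s _ => (hderiv s).hasDerivWithinAt) hbound Set.left_mem_uIcc Set.right_mem_uIcc
  have hfactor : (f t - cexp (-(t : ℂ) ^ 2 / 2)) * cexp ((t : ℂ) ^ 2 / 2) =
      f t * cexp ((t : ℂ) ^ 2 / 2) - f 0 * cexp (((0 : ℝ) : ℂ) ^ 2 / 2) := by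
    rw [sub_mul, ← exp_add, h0]
    simp [neg_div]
  rw [← hfactor, norm_mul, norm_cexp_sq_half, sub_zero, Real.norm_eq_abs] at hmvt
  refine le_of_mul_le_mul_right ?_ (Real.exp_pos (t ^ 2 / 2))
  linarith

theorem norm_one_sub_cexp_neg_sub_le (x : ℝ) :
    ‖1 - Complex.exp (-(Complex.I * x)) - Complex.I * x‖ ≤ 2 * x ^ 2 := by
  have hnorm : ‖-(Complex.I * (x : ℂ))‖ = |x| := by simp
  rw [show 1 - Complex.exp (-(Complex.I * x)) - Complex.I * x =
    -(Complex.exp (-(Complex.I * x)) - 1 - -(Complex.I * x)) by ring, norm_neg]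
  rcases le_total |x| 1 with hx | hx
  · have := Complex.norm_exp_sub_one_sub_id_le (hnorm.trans_le hx)
    rw [hnorm, sq_abs] at this
    nlinarith [sq_nonneg x]
  · have hexp : ‖Complex.exp (-(Complex.I * x)) - 1‖ ≤ |x| := by
      simpa using Real.norm_exp_I_mul_ofReal_sub_one_le (x := -x)
    calc _ ≤ ‖Complex.exp (-(Complex.I * x)) - 1‖ + ‖-(Complex.I * (x : ℂ))‖ := norm_sub_le _ _
      _ ≤ |x| + |x| := by rw [hnorm]; gcongr
      _ ≤ 2 * x ^ 2 := by rw [← sq_abs]; nlinarith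

end GaussianODE

section Stein

variable {Ω ι : Type*} [MeasurableSpace Ω] {P : Measure Ω}

lemma charFun_map_eq_integral {W : Ω → ℝ} (hW : AEMeasurable W P) (t : ℝ) :
    charFun (P.map W) t = ∫ ω, Complex.exp (Complex.I * (t * W ω : ℝ)) ∂P := by
  rw [charFun_apply_real, integral_map hW (by fun_prop)]
  simp only [Complex.ofReal_mul, mul_comm Complex.I]

lemma hasDerivAt_charFun_map [IsFiniteMeasure P] {W : Ω → ℝ} (hW : Integrable W P) (t : ℝ) :
    HasDerivAt (charFun (P.map W))
      (∫ ω, Complex.I * W ω * Complex.exp (Complex.I * (t * W ω : ℝ)) ∂P) t := by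
  have hm : AEMeasurable W P := hW.aestronglyMeasurable.aemeasurable
  have hid : MemLp id ((1 : ℕ) : ENNReal) (P.map W) := by
    rw [memLp_map_measure_iff aestronglyMeasurable_id hm]
    simpa using memLp_one_iff_integrable.2 hW
  have hderiv := ((contDiff_charFun hid).differentiable (by simp) t).hasDerivAt
  rw [← iteratedDeriv_one, iteratedDeriv_charFun hid, integral_map hm (by fun_prop),
    ← integral_const_mul] at hderiv
  refine hderiv.congr_deriv (integral_congr_ae (.of_forall fun ω => ?_))
  simp only [pow_one, Complex.ofReal_mul, mul_comm Complex.I, mul_right_comm _ _ Complex.I]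

/-- The left side is the integrand of `φ'(s) + s φ(s)`, where `φ` is the characteristic function
of `W = ∑ j, X j`; the right side isolates the three error terms of Tikhomirov's method. -/
lemma tikhomirov_identity [Fintype ι] (X S : ι → ℝ) (s : ℝ) :
    Complex.I * (∑ j, X j : ℝ) * Complex.exp (Complex.I * (s * ∑ j, X j : ℝ)) +
        s * Complex.exp (Complex.I * (s * ∑ j, X j : ℝ)) =
      Complex.I * ∑ j, X j * Complex.exp (Complex.I * (s * (∑ k, X k - S j) : ℝ)) -
        s * ((∑ j, X j * S j - 1 : ℝ) * Complex.exp (Complex.I * (s * ∑ j, X j : ℝ))) +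
      Complex.I * ∑ j, X j * (Complex.exp (Complex.I * (s * ∑ k, X k : ℝ)) *
        (1 - Complex.exp (-(Complex.I * (s * S j : ℝ))) - Complex.I * (s * S j : ℝ))) := by
  set w := ∑ j, X j
  have hexp (j : ι) : Complex.exp (Complex.I * (s * (w - S j) : ℝ)) =
      Complex.exp (Complex.I * (s * w : ℝ)) * Complex.exp (-(Complex.I * (s * S j : ℝ))) := by
    rw [← Complex.exp_add]; congr 1; push_cast; ring
  set e := Complex.exp (Complex.I * (s * w : ℝ))
  simp_rw [hexp]
  have hsum : (∑ j, (X j * (e * Complex.exp (-(Complex.I * (s * S j : ℝ)))) : ℂ)) +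
      ∑ j, X j * (e * (1 - Complex.exp (-(Complex.I * (s * S j : ℝ))) -
        Complex.I * (s * S j : ℝ))) =
      w * e - Complex.I * s * (∑ j, X j * S j : ℝ) * e := by
    simp only [w]
    push_cast
    rw [← Finset.sum_add_distrib, Finset.sum_mul, Finset.mul_sum, Finset.sum_mul,
      ← Finset.sum_sub_distrib]
    exact Finset.sum_congr rfl fun j _ => by ring
  have hI : Complex.I * Complex.I = -1 := Complex.I_mul_I
  push_cast at hsum ⊢
  linear_combination (-Complex.I) * hsum + (s * e * ∑ j, (X j : ℂ) * S j) * hI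

lemma norm_integral_le_of_forall_norm_le [IsProbabilityMeasure P] {F : Type*} [NormedAddCommGroup F]
    [NormedSpace ℝ F] {f : Ω → F} {C : ℝ} (h : ∀ ω, ‖f ω‖ ≤ C) : ‖∫ ω, f ω ∂P‖ ≤ C := by
  simpa using norm_integral_le_of_norm_le_const (μ := P) (.of_forall h)

lemma norm_cexp_I_mul_ofReal (x : ℝ) : ‖Complex.exp (Complex.I * x)‖ = 1 := by
  simp [Complex.norm_exp]

lemma norm_tikhomirov_remainder_le {x w u b B s t : ℝ} (hx : |x| ≤ b) (hu : |u| ≤ B)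
    (hst : |s| ≤ |t|) :
    ‖(x : ℂ) * (Complex.exp (Complex.I * (s * w : ℝ)) *
      (1 - Complex.exp (-(Complex.I * (s * u : ℝ))) - Complex.I * (s * u : ℝ)))‖ ≤
      b * (2 * (t * B) ^ 2) := by
  have hsq : (s * u) ^ 2 ≤ (t * B) ^ 2 := by
    rw [sq_le_sq, abs_mul, abs_mul]
    exact mul_le_mul hst (hu.trans (le_abs_self B)) (abs_nonneg u) (abs_nonneg t)
  rw [norm_mul, norm_mul, Complex.norm_real, norm_cexp_I_mul_ofReal, one_mul]
  exact mul_le_mul hx ((norm_one_sub_cexp_neg_sub_le _).trans (by linarith)) (norm_nonneg _)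
    ((abs_nonneg x).trans hx)

lemma norm_integral_sum_sub_add_sum_le [Fintype ι] {f h : ι → Ω → ℂ} {g : Ω → ℂ} {e r τ : ℝ}
    (s : ℝ) (hf : ∀ j, Integrable (f j) P) (hg : Integrable g P) (hh : ∀ j, Integrable (h j) P)
    (hfe : ∀ j, ‖∫ ω, f j ω ∂P‖ ≤ e) (hgτ : ‖∫ ω, g ω ∂P‖ ≤ τ) (hhr : ∀ j, ‖∫ ω, h j ω ∂P‖ ≤ r) :
    ‖∫ ω, (Complex.I * ∑ j, f j ω - s * g ω + Complex.I * ∑ j, h j ω) ∂P‖ ≤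
      Fintype.card ι * e + |s| * τ + Fintype.card ι * r := by
  have hf' := (integrable_finsetSum Finset.univ fun j _ => hf j).const_mul Complex.I
  have hh' := (integrable_finsetSum Finset.univ fun j _ => hh j).const_mul Complex.I
  have hsub : Integrable (fun ω => Complex.I * ∑ j, f j ω - s * g ω) P :=
    hf'.sub (hg.const_mul _)
  rw [integral_add hsub hh', integral_sub hf' (hg.const_mul _), integral_const_mul,
    integral_const_mul, integral_const_mul,
    integral_finsetSum _ fun j _ => hf j, integral_finsetSum _ fun j _ => hh j]
  refine norm_add_le_of_le (norm_sub_le_of_le ?_ ?_) ?_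
  · rw [norm_mul, Complex.norm_I, one_mul, ← nsmul_eq_mul]
    exact (norm_sum_le _ _).trans (Finset.sum_le_card_nsmul _ _ _ fun j _ => hfe j)
  · rw [norm_mul, Complex.norm_real, Real.norm_eq_abs]
    gcongr
  · rw [norm_mul, Complex.norm_I, one_mul, ← nsmul_eq_mul]
    exact (norm_sum_le _ _).trans (Finset.sum_le_card_nsmul _ _ _ fun j _ => hhr j)

section Tikhomirov

variable [IsProbabilityMeasure P] [Fintype ι] {X S : ι → Ω → ℝ} {b B e τ t : ℝ}

lemma norm_integral_tikhomirov_le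
    (hXm : ∀ j, Measurable (X j)) (hSm : ∀ j, Measurable (S j))
    (hX : ∀ j ω, |X j ω| ≤ b) (hS : ∀ j ω, |S j ω| ≤ B)
    (he : ∀ j (s : ℝ), ‖∫ ω, (X j ω : ℂ) *
      Complex.exp (Complex.I * (s * (∑ k, X k ω - S j ω) : ℝ)) ∂P‖ ≤ e)
    (hτ : ∫ ω, |∑ j, X j ω * S j ω - 1| ∂P ≤ τ) {s : ℝ} (hst : |s| ≤ |t|) :
    ‖∫ ω, (Complex.I * (∑ j, X j ω : ℝ) * Complex.exp (Complex.I * (s * ∑ j, X j ω : ℝ)) +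
        s * Complex.exp (Complex.I * (s * ∑ j, X j ω : ℝ))) ∂P‖ ≤
      Fintype.card ι * e + |t| * τ + Fintype.card ι * (b * (2 * (t * B) ^ 2)) := by
  have hfar (j : ι) : Integrable (fun ω => (X j ω : ℂ) *
      Complex.exp (Complex.I * (s * (∑ k, X k ω - S j ω) : ℝ))) P :=
    .of_bound (by fun_prop) b (.of_forall fun ω => by
      rw [norm_mul, norm_cexp_I_mul_ofReal, mul_one, Complex.norm_real]; exact hX j ω)
  have hT : Integrable (fun ω => ∑ j, X j ω * S j ω - 1) P :=
    (integrable_finsetSum _ fun j _ => .of_bound (by fun_prop) (b * B) (.of_forall fun ω => by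
      rw [norm_mul]
      exact mul_le_mul (hX j ω) (hS j ω) (norm_nonneg _) ((abs_nonneg _).trans (hX j ω)))).sub
    (integrable_const 1)
  have hquad : Integrable (fun ω => (∑ j, X j ω * S j ω - 1 : ℝ) *
      Complex.exp (Complex.I * (s * ∑ j, X j ω : ℝ))) P :=
    hT.ofReal.mul_bdd (c := 1) (by fun_prop) (.of_forall fun ω => by
      rw [norm_cexp_I_mul_ofReal])
  have hquad_le : ‖∫ ω, ((∑ j, X j ω * S j ω - 1 : ℝ) : ℂ) *
      Complex.exp (Complex.I * (s * ∑ j, X j ω : ℝ)) ∂P‖ ≤ τ := by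
    refine (norm_integral_le_integral_norm _).trans ?_
    simpa only [norm_mul, norm_cexp_I_mul_ofReal, mul_one, Complex.norm_real,
      Real.norm_eq_abs] using hτ
  have hrem (j : ι) : Integrable (fun ω => (X j ω : ℂ) *
      (Complex.exp (Complex.I * (s * ∑ k, X k ω : ℝ)) *
        (1 - Complex.exp (-(Complex.I * (s * S j ω : ℝ))) - Complex.I * (s * S j ω : ℝ)))) P :=
    .of_bound (by fun_prop) _ (.of_forall fun ω =>
      norm_tikhomirov_remainder_le (hX j ω) (hS j ω) hst)
  simp_rw [fun ω => tikhomirov_identity (X · ω) (S · ω) s]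
  refine (norm_integral_sum_sub_add_sum_le s hfar hquad hrem (fun j => he j s) hquad_le
    fun j => norm_integral_le_of_forall_norm_le fun ω =>
      norm_tikhomirov_remainder_le (hX j ω) (hS j ω) hst).trans ?_
  have hτ0 : 0 ≤ τ := (integral_nonneg fun _ => abs_nonneg _).trans hτ
  gcongr

/-- Tikhomirov's form of Stein's method: `S j` is the part of `∑ k, X k` that depends on `X j`. -/
theorem norm_charFun_map_sum_sub_charFun_gaussianReal_le
    (hXm : ∀ j, Measurable (X j)) (hSm : ∀ j, Measurable (S j))
    (hX : ∀ j ω, |X j ω| ≤ b) (hS : ∀ j ω, |S j ω| ≤ B)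
    (he : ∀ j (s : ℝ), ‖∫ ω, (X j ω : ℂ) *
      Complex.exp (Complex.I * (s * (∑ k, X k ω - S j ω) : ℝ)) ∂P‖ ≤ e)
    (hτ : ∫ ω, |∑ j, X j ω * S j ω - 1| ∂P ≤ τ) (t : ℝ) :
    ‖charFun (P.map fun ω => ∑ j, X j ω) t -
        charFun (ProbabilityTheory.gaussianReal 0 1) t‖ ≤
      (Fintype.card ι * e + |t| * τ + Fintype.card ι * (b * (2 * (t * B) ^ 2))) * |t| := by
  have hW : Measurable fun ω => ∑ j, X j ω := by fun_prop
  have hWint : Integrable (fun ω => ∑ j, X j ω) P :=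
    integrable_finsetSum _ fun j _ => .of_bound (hXm j).aestronglyMeasurable b (.of_forall (hX j))
  have : IsProbabilityMeasure (P.map fun ω => ∑ j, X j ω) :=
    Measure.isProbabilityMeasure_map hW.aemeasurable
  have hgauss : charFun (ProbabilityTheory.gaussianReal 0 1) t =
      Complex.exp (-(t : ℂ) ^ 2 / 2) := by
    simp [ProbabilityTheory.charFun_gaussianReal, neg_div]
  rw [hgauss]
  refine norm_sub_cexp_neg_sq_half_le (fun s => hasDerivAt_charFun_map hWint s) (by simp)
    fun s hst => ?_
  rw [charFun_map_eq_integral hW.aemeasurable, ← integral_const_mul, ← integral_add]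
  · exact norm_integral_tikhomirov_le hXm hSm hX hS he hτ hst
  · refine (hWint.ofReal.const_mul _).mul_bdd (c := 1) (by fun_prop) (.of_forall fun ω => ?_)
    rw [norm_cexp_I_mul_ofReal]
  · exact (Integrable.of_bound (by fun_prop) 1 (.of_forall fun ω => by
      rw [norm_cexp_I_mul_ofReal])).const_mul _

end Tikhomirov

end Stein

section Kolmogorov

open Filter Topology ProbabilityTheory

lemma continuous_cdf (μ : Measure ℝ) [IsProbabilityMeasure μ] [NullSingletonClass μ] :
    Continuous (cdf μ) := by
  refine continuous_iff_continuousAt.2 fun x => ?_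
  rw [(monotone_cdf μ).continuousAt_iff_leftLim_eq_rightLim, (cdf μ).rightLim_eq]
  have hjump := (cdf μ).measure_singleton x
  rw [measure_cdf, measure_singleton] at hjump
  exact le_antisymm ((monotone_cdf μ).leftLim_le le_rfl)
    (sub_nonpos.1 (ENNReal.ofReal_eq_zero.1 hjump.symm))

section Polya

variable {α : Type*} {l : Filter α} {ν : α → Measure ℝ} {μ : Measure ℝ}

lemma abs_cdf_sub_cdf_le {ν' : Measure ℝ} {a b z ε : ℝ} (hz : z ∈ Set.Icc a b)
    (ha : |cdf ν' a - cdf μ a| ≤ ε) (hb : |cdf ν' b - cdf μ b| ≤ ε)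
    (hab : cdf μ b - cdf μ a ≤ ε) : |cdf ν' z - cdf μ z| ≤ 2 * ε := by
  have := monotone_cdf ν' hz.1
  have := monotone_cdf ν' hz.2
  have := monotone_cdf μ hz.1
  have := monotone_cdf μ hz.2
  rw [abs_le] at *
  constructor <;> linarith

lemma eventually_abs_cdf_sub_le_of_mem_nhds (hc : Continuous (cdf μ))
    (h : ∀ x, Tendsto (fun n => cdf (ν n) x) l (𝓝 (cdf μ x))) {ε : ℝ} (hε : 0 < ε) (x : ℝ) :
    ∃ s ∈ 𝓝 x, ∀ᶠ n in l, ∀ z ∈ s, |cdf (ν n) z - cdf μ z| ≤ 2 * ε := by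
  obtain ⟨δ, hδ, hδε⟩ := Metric.continuousAt_iff.1 (hc.continuousAt (x := x)) (ε / 2) (half_pos hε)
  have hl := hδε (x := x - δ / 2) (by rw [Real.dist_eq, abs_lt]; constructor <;> linarith)
  have hu := hδε (x := x + δ / 2) (by rw [Real.dist_eq, abs_lt]; constructor <;> linarith)
  rw [Real.dist_eq, abs_lt] at hl hu
  refine ⟨Set.Icc (x - δ / 2) (x + δ / 2), Icc_mem_nhds (by linarith) (by linarith), ?_⟩
  filter_upwards [(h (x - δ / 2)).eventually (Metric.closedBall_mem_nhds _ hε),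
    (h (x + δ / 2)).eventually (Metric.closedBall_mem_nhds _ hε)] with n hn₁ hn₂ z hz
  exact abs_cdf_sub_cdf_le hz hn₁ hn₂ (by linarith)

lemma eventually_forall_abs_cdf_sub_le (hc : Continuous (cdf μ))
    (h : ∀ x, Tendsto (fun n => cdf (ν n) x) l (𝓝 (cdf μ x))) {ε : ℝ} (hε : 0 < ε) :
    ∀ᶠ n in l, ∀ z, |cdf (ν n) z - cdf μ z| ≤ 2 * ε := by
  obtain ⟨a, ha⟩ := ((tendsto_cdf_atBot μ).eventually (gt_mem_nhds hε)).exists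
  obtain ⟨b, hb⟩ := ((tendsto_cdf_atTop μ).eventually (lt_mem_nhds (sub_lt_self 1 hε))).exists
  have hcompact : ∀ᶠ n in l, ∀ z ∈ Set.Icc a b, |cdf (ν n) z - cdf μ z| ≤ 2 * ε := by
    refine isCompact_Icc.induction_on
      (p := fun s => ∀ᶠ n in l, ∀ z ∈ s, |cdf (ν n) z - cdf μ z| ≤ 2 * ε) (by simp)
      (fun s t hst ht => ht.mono fun n hn z hz => hn z (hst hz))
      (fun s t hs ht => (hs.and ht).mono fun n hn z hz => hz.elim (hn.1 z) (hn.2 z))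
      fun x _ => ?_
    obtain ⟨s, hs, hsn⟩ := eventually_abs_cdf_sub_le_of_mem_nhds hc h hε x
    exact ⟨s, mem_nhdsWithin_of_mem_nhds hs, hsn⟩
  filter_upwards [hcompact, (h a).eventually (Metric.ball_mem_nhds _ hε),
    (h b).eventually (Metric.ball_mem_nhds _ hε)] with n hn hna hnb z
  simp only [Real.dist_eq, abs_lt] at hna hnb
  rcases le_or_gt z a with hza | hza
  · have := monotone_cdf (ν n) hza
    have := monotone_cdf μ hza
    rw [abs_le]
    constructor <;> linarith [cdf_nonneg (ν n) z, cdf_nonneg μ z]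
  rcases le_or_gt b z with hbz | hbz
  · have := monotone_cdf (ν n) hbz
    have := monotone_cdf μ hbz
    rw [abs_le]
    constructor <;> linarith [cdf_le_one (ν n) z, cdf_le_one μ z]
  · exact hn z ⟨hza.le, hbz.le⟩

/-- Pólya's theorem. -/
theorem tendsto_iSup_abs_cdf_sub (hc : Continuous (cdf μ))
    (h : ∀ x, Tendsto (fun n => cdf (ν n) x) l (𝓝 (cdf μ x))) :
    Tendsto (fun n => ⨆ z, |cdf (ν n) z - cdf μ z|) l (𝓝 0) := by
  refine Metric.tendsto_nhds.2 fun ε hε => ?_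
  filter_upwards [eventually_forall_abs_cdf_sub_le hc h (show 0 < ε / 4 by linarith)] with n hn
  rw [Real.dist_eq, sub_zero, abs_of_nonneg (Real.iSup_nonneg fun z => abs_nonneg _)]
  linarith [ciSup_le hn]

end Polya

theorem tendsto_iSup_abs_cdf_sub_of_tendsto_charFun {ν : ℕ → Measure ℝ} {μ : Measure ℝ}
    [hν : ∀ n, IsProbabilityMeasure (ν n)] [hμ : IsProbabilityMeasure μ] [NullSingletonClass μ]
    (h : ∀ t, Tendsto (fun n => charFun (ν n) t) atTop (𝓝 (charFun μ t))) :
    Tendsto (fun n => ⨆ z, |cdf (ν n) z - cdf μ z|) atTop (𝓝 0) := by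
  have hweak := ProbabilityMeasure.tendsto_of_tendsto_charFun (μ := fun n => ⟨ν n, hν n⟩)
    (μ₀ := ⟨μ, hμ⟩) h
  refine tendsto_iSup_abs_cdf_sub (continuous_cdf μ) fun x => ?_
  simp only [cdf_eq_real]
  refine (ENNReal.tendsto_toReal (measure_ne_top _ _)).comp
    (ProbabilityMeasure.tendsto_measure_of_null_frontier_of_tendsto' hweak ?_)
  rw [frontier_Iic]
  exact measure_singleton (μ := μ) x

end Kolmogorov

section Local

lemma integral_norm_le_of_eq_zero_off {Ω F : Type*} [MeasurableSpace Ω] [NormedAddCommGroup F]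
    {P : Measure Ω} [IsFiniteMeasure P] {f : Ω → F} {A : Set Ω} {C : ℝ} (hA : MeasurableSet A)
    (hC : ∀ ω, ‖f ω‖ ≤ C) (hf : ∀ᵐ ω ∂P, ω ∉ A → f ω = 0) :
    ∫ ω, ‖f ω‖ ∂P ≤ C * P.real A := by
  calc ∫ ω, ‖f ω‖ ∂P ≤ ∫ ω, A.indicator (fun _ => C) ω ∂P := by
        refine integral_mono_of_nonneg (.of_forall fun _ => norm_nonneg _)
          ((integrable_const C).indicator hA) ?_
        filter_upwards [hf] with ω hω
        by_cases hωA : ω ∈ A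
        · simpa only [Set.indicator_of_mem hωA] using hC ω
        · simp [hω hωA, hωA]
    _ = C * P.real A := by rw [integral_indicator_const _ hA, smul_eq_mul, mul_comm]

lemma integral_comp_of_measurePreserving {α γ F : Type*} [MeasurableSpace α] [MeasurableSpace γ]
    [NormedAddCommGroup F] [NormedSpace ℝ F] {μ : Measure α} {ν : Measure γ} {g : α → γ}
    (hg : MeasurePreserving g μ ν) {f : γ → F} (hf : AEStronglyMeasurable f ν) :
    ∫ x, f (g x) ∂μ = ∫ y, f y ∂ν := by
  rw [← hg.map_eq, integral_map hg.measurable.aemeasurable (by rwa [hg.map_eq])]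

lemma measurePreserving_piecewise_id {α : Type*} [MeasurableSpace α] {μ : Measure α} {σ : α → α}
    (hσ : MeasurePreserving σ μ μ) {U : Set α} [∀ x, Decidable (x ∈ U)] (hU : MeasurableSet U)
    (hinv : σ ⁻¹' U = U) : MeasurePreserving (U.piecewise σ id) μ μ := by
  have hm : Measurable (U.piecewise σ id) := hσ.measurable.piecewise hU measurable_id
  refine ⟨hm, Measure.ext fun s hs => ?_⟩
  have hinter : σ ⁻¹' s ∩ U = σ ⁻¹' (s ∩ U) := by rw [Set.preimage_inter, hinv]
  rw [Measure.map_apply hm hs, Set.piecewise_preimage, Set.ite, Set.preimage_id,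
    measure_union (Set.disjoint_left.2 fun x h₁ h₂ => h₂.2 h₁.2) (hs.diff hU), hinter,
    hσ.measure_preimage (hs.inter hU).nullMeasurableSet, measure_inter_add_sdiff s hU]

variable {κ E F : Type*}

/-- `LocalOn D φ`: the value of the configuration functional `φ` is determined by those points of
the configuration which lie in `D`. Two configurations are compared index by index: a point may be
changed as long as it is outside `D` before and after. -/
def LocalOn (D : Set E) (φ : (κ → E) → F) : Prop :=
  ∀ ω ω', (∀ i, ω i = ω' i ∨ (ω i ∉ D ∧ ω' i ∉ D)) → φ ω = φ ω'

lemma LocalOn.mono {D D' : Set E} {φ : (κ → E) → F} (h : LocalOn D φ) (hD : D ⊆ D') :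
    LocalOn D' φ := fun ω ω' hω =>
  h ω ω' fun i => (hω i).imp_right fun hi => ⟨fun hi' => hi.1 (hD hi'), fun hi' => hi.2 (hD hi')⟩

lemma LocalOn.comp {G : Type*} {D : Set E} {φ : (κ → E) → F} (h : LocalOn D φ) (g : F → G) :
    LocalOn D fun ω => g (φ ω) := fun ω ω' hω => congrArg g (h ω ω' hω)

lemma LocalOn.comp₂ {G H : Type*} {D : Set E} {φ : (κ → E) → F} {ψ : (κ → E) → G}
    (hφ : LocalOn D φ) (hψ : LocalOn D ψ) (g : F → G → H) :
    LocalOn D fun ω => g (φ ω) (ψ ω) := fun ω ω' hω =>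
  congrArg₂ g (hφ ω ω' hω) (hψ ω ω' hω)

lemma LocalOn.sum {ι : Type*} [AddCommMonoid F] {s : Finset ι} {D : Set E} {φ : ι → (κ → E) → F}
    (h : ∀ j ∈ s, LocalOn D (φ j)) : LocalOn D fun ω => ∑ j ∈ s, φ j ω := fun ω ω' hω =>
  Finset.sum_congr rfl fun j hj => h j hj ω ω' hω

open Classical in
/-- Resampling outside `D`: the first point of a pair is replaced by the second one unless one of
the two lies in `D`. Applied to two independent configurations index by index, it yields a
configuration of the same law which agrees with the first one as far as `D` is concerned and with
the second one as far as possible elsewhere. -/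
noncomputable def resample (D : Set E) : E × E → E :=
  fun p => ((Dᶜ ×ˢ Dᶜ).piecewise Prod.swap id p).1

open Classical in
lemma resample_of_notMem {D : Set E} {p : E × E} (h₁ : p.1 ∉ D) (h₂ : p.2 ∉ D) :
    resample D p = p.2 := by
  rw [resample, Set.piecewise_eq_of_mem _ _ _ (Set.mk_mem_prod h₁ h₂), Prod.fst_swap]

open Classical in
lemma resample_of_mem {D : Set E} {p : E × E} (h : p.1 ∈ D ∨ p.2 ∈ D) : resample D p = p.1 := by
  rw [resample, Set.piecewise_eq_of_notMem, id]
  rintro ⟨h₁, h₂⟩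
  exact h.elim h₁ h₂

open Classical in
lemma measurePreserving_resample [MeasurableSpace E] {D : Set E} (hD : MeasurableSet D)
    (μ : Measure E) [IsProbabilityMeasure μ] :
    MeasurePreserving (resample D) (μ.prod μ) μ :=
  measurePreserving_fst.comp (measurePreserving_piecewise_id Measure.measurePreserving_swap
    (hD.compl.prod hD.compl) (Set.preimage_swap_prod _ _))

lemma LocalOn.apply_resample {D : Set E} {φ : (κ → E) → F} (hφ : LocalOn D φ) (w : κ → E × E) :
    φ (fun i => resample D (w i)) = φ fun i => (w i).1 := by
  refine hφ _ _ fun i => ?_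
  by_cases h : (w i).1 ∈ D ∨ (w i).2 ∈ D
  · exact .inl (resample_of_mem h)
  · rw [not_or] at h
    rw [resample_of_notMem h.1 h.2]
    exact .inr h.symm

lemma LocalOn.apply_resample_of_disjoint {D D' : Set E} {ψ : (κ → E) → F} (hψ : LocalOn D' ψ)
    (hdis : Disjoint D D') {w : κ → E × E} (hw : ∀ i, w i ∉ D ×ˢ D' ∪ D' ×ˢ D) :
    ψ (fun i => resample D (w i)) = ψ fun i => (w i).2 := by
  refine hψ _ _ fun i => ?_
  by_cases h : (w i).1 ∈ D ∨ (w i).2 ∈ D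
  · right
    rw [resample_of_mem h]
    have hwi := hw i
    have hdis' (x) (hx : x ∈ D) : x ∉ D' := Set.disjoint_left.1 hdis hx
    have := hdis' (w i).1
    have := hdis' (w i).2
    simp only [Set.mem_union, Set.mem_prod] at hwi
    tauto
  · rw [not_or] at h
    exact .inl (resample_of_notMem h.1 h.2)

lemma measurableSet_exists_mem_prod [MeasurableSpace E] [Countable κ] {D D' : Set E}
    (hD : MeasurableSet D) (hD' : MeasurableSet D') :
    MeasurableSet {w : κ → E × E | ∃ i, w i ∈ D ×ˢ D' ∪ D' ×ˢ D} := by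
  rw [Set.ofPred_exists]
  exact .iUnion fun i => measurable_pi_apply i ((hD.prod hD').union (hD'.prod hD))

lemma measureReal_exists_mem_prod_le [MeasurableSpace E] [Fintype κ] (μ : κ → Measure E)
    [∀ i, IsProbabilityMeasure (μ i)] {D D' : Set E} (hD : MeasurableSet D)
    (hD' : MeasurableSet D') :
    (Measure.pi fun i => (μ i).prod (μ i)).real {w | ∃ i, w i ∈ D ×ˢ D' ∪ D' ×ˢ D} ≤
      ∑ i, 2 * ((μ i).real D * (μ i).real D') := by
  rw [Set.ofPred_exists]
  refine (measureReal_iUnion_fintype_le _).trans (Finset.sum_le_sum fun i _ => ?_)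
  have heval := (measurePreserving_eval (fun i => (μ i).prod (μ i)) i).measureReal_preimage
    ((hD.prod hD').union (hD'.prod hD)).nullMeasurableSet
  calc _ = ((μ i).prod (μ i)).real (D ×ˢ D' ∪ D' ×ˢ D) := heval
    _ ≤ (μ i).real D * (μ i).real D' + (μ i).real D' * (μ i).real D := by
        simpa only [measureReal_prod_prod] using
          measureReal_union_le (μ := (μ i).prod (μ i)) (D ×ˢ D') (D' ×ˢ D)
    _ = _ := by ring

variable [MeasurableSpace E] [Fintype κ] {𝕜 : Type*} [RCLike 𝕜]

lemma integral_mul_integral_pi_eq (μ : κ → Measure E) [∀ i, IsProbabilityMeasure (μ i)]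
    (φ ψ : (κ → E) → 𝕜) :
    (∫ ω, φ ω ∂Measure.pi μ) * ∫ ω, ψ ω ∂Measure.pi μ =
      ∫ w, φ (fun i => (w i).1) * ψ (fun i => (w i).2) ∂Measure.pi fun i => (μ i).prod (μ i) := by
  rw [← integral_prod_mul φ ψ]
  exact ((measurePreserving_arrowProdEquivProdArrow E E κ μ μ).integral_comp'
    fun z => φ z.1 * ψ z.2).symm

lemma integral_mul_pi_eq_of_localOn (μ : κ → Measure E) [∀ i, IsProbabilityMeasure (μ i)]
    {D : Set E} (hD : MeasurableSet D) {φ ψ : (κ → E) → 𝕜} (hφm : Measurable φ)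
    (hψm : Measurable ψ) (hφ : LocalOn D φ) :
    ∫ ω, φ ω * ψ ω ∂Measure.pi μ =
      ∫ w, φ (fun i => (w i).1) * ψ (fun i => resample D (w i))
        ∂Measure.pi fun i => (μ i).prod (μ i) := by
  have hres := measurePreserving_pi _ _ fun i => measurePreserving_resample hD (μ i)
  rw [← integral_comp_of_measurePreserving hres (f := fun ω => φ ω * ψ ω)
    (hφm.mul hψm).aestronglyMeasurable]
  simp only [hφ.apply_resample]

/-- Functionals of disjoint regions are almost uncorrelated: they would be independent for a
Poisson number of points, and a fixed number of points costs the probability that some index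
contributes to both regions in the coupling by `resample`. -/
theorem norm_integral_mul_sub_integral_mul_integral_le (μ : κ → Measure E)
    [∀ i, IsProbabilityMeasure (μ i)] {D D' : Set E} (hD : MeasurableSet D)
    (hD' : MeasurableSet D') (hdis : Disjoint D D') {φ ψ : (κ → E) → 𝕜} (hφm : Measurable φ)
    (hψm : Measurable ψ) (hφ : LocalOn D φ) (hψ : LocalOn D' ψ) {a a' : ℝ}
    (ha : ∀ ω, ‖φ ω‖ ≤ a) (ha' : ∀ ω, ‖ψ ω‖ ≤ a') :
    ‖∫ ω, φ ω * ψ ω ∂Measure.pi μ - (∫ ω, φ ω ∂Measure.pi μ) * ∫ ω, ψ ω ∂Measure.pi μ‖ ≤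
      4 * a * a' * ∑ i, (μ i).real D * (μ i).real D' := by
  obtain ⟨ω₀⟩ := nonempty_of_isProbabilityMeasure (Measure.pi μ)
  have ha0 : 0 ≤ a := (norm_nonneg _).trans (ha ω₀)
  have ha'0 : 0 ≤ a' := (norm_nonneg _).trans (ha' ω₀)
  have hres := measurePreserving_pi _ _ fun i => measurePreserving_resample hD (μ i)
  have hint {g : (κ → E × E) → κ → E} (hg : Measurable g) :
      Integrable (fun w => φ (fun i => (w i).1) * ψ (g w))
        (Measure.pi fun i => (μ i).prod (μ i)) :=
    .of_bound ((hφm.comp (by fun_prop)).mul (hψm.comp hg)).aestronglyMeasurable (a * a')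
      (.of_forall fun w => by
        rw [norm_mul]; exact mul_le_mul (ha _) (ha' _) (norm_nonneg _) ha0)
  have hbound (w : κ → E × E) : ‖φ (fun i => (w i).1) * ψ (fun i => resample D (w i)) -
      φ (fun i => (w i).1) * ψ (fun i => (w i).2)‖ ≤ a * (a' + a') := by
    rw [← mul_sub, norm_mul]
    exact mul_le_mul (ha _) (norm_sub_le_of_le (ha' _) (ha' _)) (norm_nonneg _) ha0
  rw [integral_mul_pi_eq_of_localOn μ hD hφm hψm hφ, integral_mul_integral_pi_eq,
    ← integral_sub (hint hres.measurable) (hint (by fun_prop))]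
  calc _ ≤ a * (a' + a') * (Measure.pi fun i => (μ i).prod (μ i)).real
        {w | ∃ i, w i ∈ D ×ˢ D' ∪ D' ×ˢ D} := by
        refine (norm_integral_le_integral_norm _).trans (integral_norm_le_of_eq_zero_off
          (measurableSet_exists_mem_prod hD hD') hbound (.of_forall fun w hw => ?_))
        simp only [Set.mem_ofPred_eq, not_exists] at hw
        rw [hψ.apply_resample_of_disjoint hdis hw, sub_self]
    _ ≤ a * (a' + a') * ∑ i, 2 * ((μ i).real D * (μ i).real D') := by
        gcongr
        exact measureReal_exists_mem_prod_le μ hD hD'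
    _ = _ := by rw [← Finset.mul_sum]; ring

end Local

section LocalCLT

open ProbabilityTheory

section Variance

variable {Ω ι : Type*} [MeasurableSpace Ω] {P : Measure Ω} [IsProbabilityMeasure P]

lemma integral_abs_sub_le_sqrt_variance_add {T : Ω → ℝ} (hT : MemLp T 2 P) (m : ℝ) :
    ∫ ω, |T ω - m| ∂P ≤ √Var[T; P] + |∫ ω, T ω ∂P - m| := by
  have hTint : Integrable T P := hT.integrable one_le_two
  have hdev : MemLp (fun ω => |T ω - ∫ ω, T ω ∂P|) 2 P := (hT.sub (memLp_const _)).abs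
  have hsq : (∫ ω, |T ω - ∫ ω, T ω ∂P| ∂P) ^ 2 ≤ Var[T; P] := by
    have hnonneg := variance_nonneg (fun ω => |T ω - ∫ ω, T ω ∂P|) P
    rw [variance_eq_sub hdev] at hnonneg
    simp only [Pi.pow_apply, sq_abs] at hnonneg
    rw [variance_eq_integral hT.aestronglyMeasurable.aemeasurable]
    linarith
  calc ∫ ω, |T ω - m| ∂P ≤ ∫ ω, (|T ω - ∫ ω, T ω ∂P| + |∫ ω, T ω ∂P - m|) ∂P :=
        integral_mono (hTint.sub (integrable_const m)).abs
          ((hdev.integrable one_le_two).add (integrable_const _)) fun ω => abs_sub_le _ _ _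
    _ = ∫ ω, |T ω - ∫ ω, T ω ∂P| ∂P + |∫ ω, T ω ∂P - m| := by
        rw [integral_add (hdev.integrable one_le_two) (integrable_const _)]
        simp
    _ ≤ _ := by gcongr; exact Real.le_sqrt_of_sq_le hsq

lemma variance_sum_le_of_covariance_le [Fintype ι] {Y : ι → Ω → ℝ} (hY : ∀ j, MemLp (Y j) 2 P)
    {N : ι → Finset ι} {d e v : ℝ} (he : 0 ≤ e) (hv : 0 ≤ v) (hN : ∀ j, ((N j).card : ℝ) ≤ d)
    (hfar : ∀ j, ∀ k ∉ N j, cov[Y j, Y k; P] ≤ e) (hnear : ∀ j k, cov[Y j, Y k; P] ≤ v) :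
    Var[fun ω => ∑ j, Y j ω; P] ≤ Fintype.card ι * (Fintype.card ι * e + d * v) := by
  classical
  rw [variance_fun_sum hY, ← nsmul_eq_mul]
  refine Finset.sum_le_card_nsmul _ _ _ fun j _ => ?_
  calc ∑ k, cov[Y j, Y k; P] ≤ ∑ k, (e + if k ∈ N j then v else 0) := by
        refine Finset.sum_le_sum fun k _ => ?_
        split_ifs with hk
        · linarith [hnear j k]
        · linarith [hfar j k hk]
    _ = Fintype.card ι * e + (N j).card * v := by
        simp [Finset.sum_add_distrib]
    _ ≤ _ := by gcongr; exact hN j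

end Variance

variable {ι κ E : Type*} [Fintype ι]

open Classical in
/-- The indices `k` whose region `D k` meets `D j`: the dependency neighbourhood of `j`. -/
noncomputable def overlap (D : ι → Set E) (j : ι) : Finset ι := {k | ¬Disjoint (D j) (D k)}

lemma mem_overlap {D : ι → Set E} {j k : ι} : k ∈ overlap D j ↔ ¬Disjoint (D j) (D k) := by
  simp [overlap]

/-- The region seen by `j` together with all its dependency neighbours. -/
def fatten (D : ι → Set E) (j : ι) : Set E := ⋃ k ∈ overlap D j, D k

lemma card_overlap_fatten_le {D : ι → Set E} {d : ℕ} (hd : ∀ j, (overlap D j).card ≤ d) (j : ι) :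
    (overlap (fatten D) j).card ≤ d ^ 3 := by
  classical
  have hsub : overlap (fatten D) j ⊆
      ((overlap D j).biUnion (overlap D)).biUnion (overlap D) := by
    intro k hk
    obtain ⟨x, hxj, hxk⟩ := Set.not_disjoint_iff.1 (mem_overlap.1 hk)
    simp only [fatten, Set.mem_iUnion] at hxj hxk
    obtain ⟨a, ha, hxa⟩ := hxj
    obtain ⟨b, hb, hxb⟩ := hxk
    refine Finset.mem_biUnion.2 ⟨b, Finset.mem_biUnion.2 ⟨a, ha, ?_⟩, ?_⟩
    · exact mem_overlap.2 (Set.not_disjoint_iff.2 ⟨x, hxa, hxb⟩)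
    · rw [mem_overlap, disjoint_comm]
      exact mem_overlap.1 hb
  calc _ ≤ _ := Finset.card_le_card hsub
    _ ≤ d * d * d := Finset.card_biUnion_le_card_mul _ _ _ (fun a _ => hd a) |>.trans
        (Nat.mul_le_mul_right d ((Finset.card_biUnion_le_card_mul _ _ _ fun a _ => hd a).trans
          (Nat.mul_le_mul_right d (hd j))))
    _ = d ^ 3 := by ring

variable [MeasurableSpace E] [Fintype κ] {μ : Measure E} [IsProbabilityMeasure μ]
  {D : ι → Set E} {X : ι → (κ → E) → ℝ} {b p : ℝ} {d : ℕ}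

omit [Fintype ι] [IsProbabilityMeasure μ] in
lemma measureReal_biUnion_le (hDp : ∀ j, μ.real (D j) ≤ p) (s : Finset ι) :
    μ.real (⋃ k ∈ s, D k) ≤ s.card * p := by
  rw [← nsmul_eq_mul]
  exact (measureReal_biUnion_finset_le s D).trans
    (Finset.sum_le_card_nsmul _ _ _ fun k _ => hDp k)

omit [IsProbabilityMeasure μ] in
lemma measureReal_fatten_le (hp : 0 ≤ p) (hDp : ∀ j, μ.real (D j) ≤ p)
    (hd : ∀ j, (overlap D j).card ≤ d) (j : ι) : μ.real (fatten D j) ≤ d * p :=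
  (measureReal_biUnion_le hDp _).trans (by gcongr; exact_mod_cast hd j)

lemma measurableSet_fatten (hD : ∀ j, MeasurableSet (D j)) (j : ι) :
    MeasurableSet (fatten D j) :=
  Finset.measurableSet_biUnion _ fun k _ => hD k

lemma norm_integral_mul_comp_far_le {𝕜 : Type*} [RCLike 𝕜] (hD : ∀ j, MeasurableSet (D j))
    (hDp : ∀ j, μ.real (D j) ≤ p) (hXm : ∀ j, Measurable (X j)) (hXloc : ∀ j, LocalOn (D j) (X j))
    (hXb : ∀ j ω, |X j ω| ≤ b) {j : ι} (hX0 : ∫ ω, X j ω ∂Measure.pi (fun _ => μ) = 0)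
    {g : ℝ → 𝕜} (hg : Measurable g) {a : ℝ} (ha : 0 ≤ a)
    (hga : ∀ ω : κ → E, ‖g (∑ k, X k ω - ∑ k ∈ overlap D j, X k ω)‖ ≤ a) :
    ‖∫ ω, (X j ω : 𝕜) * g (∑ k, X k ω - ∑ k ∈ overlap D j, X k ω) ∂Measure.pi fun _ => μ‖ ≤
      4 * b * a * (Fintype.card ι * (Fintype.card κ * p ^ 2)) := by
  classical
  set far := (overlap D j)ᶜ
  have hfar (ω : κ → E) : ∑ k, X k ω - ∑ k ∈ overlap D j, X k ω = ∑ k ∈ far, X k ω := by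
    rw [sub_eq_iff_eq_add', Finset.sum_add_sum_compl]
  have hfar_loc : LocalOn (⋃ k ∈ far, D k) fun ω => g (∑ k ∈ far, X k ω) :=
    (LocalOn.sum fun k hk => (hXloc k).mono (Set.subset_biUnion_of_mem hk)).comp g
  have hdis : Disjoint (D j) (⋃ k ∈ far, D k) := by
    simp only [Set.disjoint_iUnion_right]
    exact fun k hk => not_not.1 fun h => Finset.mem_compl.1 hk (mem_overlap.2 h)
  have hb : 0 ≤ b := by
    obtain ⟨ω⟩ := nonempty_of_isProbabilityMeasure (Measure.pi fun _ : κ => μ)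
    exact (abs_nonneg _).trans (hXb j ω)
  have hdec := norm_integral_mul_sub_integral_mul_integral_le (𝕜 := 𝕜) (fun _ : κ => μ) (hD j)
    (Finset.measurableSet_biUnion far fun k _ => hD k) hdis (φ := fun ω => (X j ω : 𝕜))
    (ψ := fun ω => g (∑ k ∈ far, X k ω)) (RCLike.measurable_ofReal.comp (hXm j))
    (hg.comp (by fun_prop)) ((hXloc j).comp _) hfar_loc
    (a := b) (a' := a) (fun ω => by simpa using hXb j ω) (fun ω => by simpa only [hfar] using hga ω)
  rw [integral_ofReal, hX0, RCLike.ofReal_zero, zero_mul, sub_zero, Finset.sum_const,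
    nsmul_eq_mul, Finset.card_univ] at hdec
  simp only [hfar]
  refine hdec.trans ?_
  have hp : 0 ≤ p := measureReal_nonneg.trans (hDp j)
  have hfar_mass : μ.real (⋃ k ∈ far, D k) ≤ Fintype.card ι * p :=
    (measureReal_biUnion_le hDp far).trans (by gcongr; exact Finset.card_le_univ far)
  calc _ ≤ 4 * b * a * (Fintype.card κ * (p * (Fintype.card ι * p))) := by
        gcongr; exact hDp j
    _ = _ := by ring

omit [MeasurableSpace E] [Fintype κ] in
lemma abs_sum_overlap_le (hd : ∀ j, (overlap D j).card ≤ d) (hXb : ∀ j ω, |X j ω| ≤ b) (j : ι)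
    (ω : κ → E) : |∑ k ∈ overlap D j, X k ω| ≤ d * b := by
  calc |∑ k ∈ overlap D j, X k ω| ≤ (overlap D j).card • b :=
        (Finset.abs_sum_le_sum_abs _ _).trans (Finset.sum_le_card_nsmul _ _ _ fun k _ => hXb k ω)
    _ ≤ d * b := by
        rw [nsmul_eq_mul]
        exact mul_le_mul_of_nonneg_right (mod_cast hd j) ((abs_nonneg _).trans (hXb j ω))

omit [MeasurableSpace E] [Fintype κ] in
lemma abs_sum_sub_sum_overlap_le (hXb : ∀ j ω, |X j ω| ≤ b) (j : ι) (ω : κ → E) :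
    |∑ k, X k ω - ∑ k ∈ overlap D j, X k ω| ≤ Fintype.card ι * b := by
  classical
  rw [← Finset.sum_add_sum_compl (overlap D j), add_sub_cancel_left]
  calc _ ≤ (overlap D j)ᶜ.card • b := (Finset.abs_sum_le_sum_abs _ _).trans
        (Finset.sum_le_card_nsmul _ _ _ fun k _ => hXb k ω)
    _ ≤ Fintype.card ι * b := by
        rw [nsmul_eq_mul]
        exact mul_le_mul_of_nonneg_right (mod_cast Finset.card_le_univ _)
          ((abs_nonneg _).trans (hXb j ω))

omit [MeasurableSpace E] [Fintype κ] in
lemma abs_mul_sum_overlap_le (hd : ∀ j, (overlap D j).card ≤ d) (hXb : ∀ j ω, |X j ω| ≤ b) (j : ι)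
    (ω : κ → E) : |X j ω * ∑ k ∈ overlap D j, X k ω| ≤ d * b ^ 2 := by
  rw [abs_mul]
  calc _ ≤ b * (d * b) := mul_le_mul (hXb j ω) (abs_sum_overlap_le hd hXb j ω) (abs_nonneg _)
        ((abs_nonneg _).trans (hXb j ω))
    _ = d * b ^ 2 := by ring

omit [MeasurableSpace E] [Fintype κ] in
lemma localOn_fatten_mul_sum_overlap (hXloc : ∀ j, LocalOn (D j) (X j)) (j : ι) :
    LocalOn (fatten D j) fun ω => X j ω * ∑ k ∈ overlap D j, X k ω := by
  have hk {k : ι} (hk : k ∈ overlap D j) : LocalOn (fatten D j) (X k) :=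
    (hXloc k).mono (Set.subset_biUnion_of_mem hk)
  have hj : LocalOn (fatten D j) (X j) := by
    by_cases hjj : j ∈ overlap D j
    · exact hk hjj
    · rw [mem_overlap, not_not, disjoint_self, Set.bot_eq_empty] at hjj
      exact (hXloc j).mono (hjj ▸ Set.empty_subset _)
  exact hj.comp₂ (LocalOn.sum fun k => hk) (· * ·)

lemma covariance_mul_sum_overlap_le_of_notMem (hD : ∀ j, MeasurableSet (D j))
    (hDp : ∀ j, μ.real (D j) ≤ p) (hd : ∀ j, (overlap D j).card ≤ d)
    (hXm : ∀ j, Measurable (X j)) (hXloc : ∀ j, LocalOn (D j) (X j))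
    (hXb : ∀ j ω, |X j ω| ≤ b) {j k : ι} (hk : k ∉ overlap (fatten D) j) :
    cov[fun ω => X j ω * ∑ l ∈ overlap D j, X l ω, fun ω => X k ω * ∑ l ∈ overlap D k, X l ω;
      Measure.pi fun _ => μ] ≤ 4 * (d * b ^ 2) ^ 2 * (Fintype.card κ * (d * p) ^ 2) := by
  have hmem (j : ι) : MemLp (fun ω => X j ω * ∑ l ∈ overlap D j, X l ω) 2
      (Measure.pi fun _ : κ => μ) :=
    .of_bound (by fun_prop) _ (.of_forall (abs_mul_sum_overlap_le hd hXb j))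
  have hdec := norm_integral_mul_sub_integral_mul_integral_le (fun _ : κ => μ)
    (measurableSet_fatten hD j) (measurableSet_fatten hD k) (not_not.1 fun h => hk
      (mem_overlap.2 h)) (by fun_prop) (by fun_prop) (localOn_fatten_mul_sum_overlap hXloc j)
    (localOn_fatten_mul_sum_overlap hXloc k) (abs_mul_sum_overlap_le hd hXb j)
    (abs_mul_sum_overlap_le hd hXb k)
  rw [covariance_eq_sub (hmem j) (hmem k)]
  refine (le_abs_self _).trans (hdec.trans ?_)
  have hp : 0 ≤ p := measureReal_nonneg.trans (hDp j)
  rw [Finset.sum_const, nsmul_eq_mul, Finset.card_univ]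
  calc _ ≤ 4 * (d * b ^ 2) * (d * b ^ 2) * (Fintype.card κ * (d * p * (d * p))) := by
        gcongr
        · exact measureReal_fatten_le hp hDp hd j
        · exact measureReal_fatten_le hp hDp hd k
    _ = _ := by ring

lemma covariance_le_of_abs_le {Ω : Type*} [MeasurableSpace Ω] {P : Measure Ω}
    [IsProbabilityMeasure P] {Y Z : Ω → ℝ} {a : ℝ} (hY : Measurable Y) (hZ : Measurable Z)
    (hYa : ∀ ω, |Y ω| ≤ a) (hZa : ∀ ω, |Z ω| ≤ a) : cov[Y, Z; P] ≤ 2 * a ^ 2 := by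
  obtain ⟨ω₀⟩ := nonempty_of_isProbabilityMeasure P
  have ha : 0 ≤ a := (abs_nonneg _).trans (hYa ω₀)
  have hprod : |∫ ω, (Y * Z) ω ∂P| ≤ a * a := by
    refine norm_integral_le_of_forall_norm_le (f := Y * Z) fun ω => ?_
    rw [Pi.mul_apply, norm_mul]
    exact mul_le_mul (hYa ω) (hZa ω) (norm_nonneg _) ha
  have hmean : |(∫ ω, Y ω ∂P) * ∫ ω, Z ω ∂P| ≤ a * a := by
    rw [abs_mul]
    exact mul_le_mul (norm_integral_le_of_forall_norm_le (f := Y) hYa)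
      (norm_integral_le_of_forall_norm_le (f := Z) hZa) (abs_nonneg _) ha
  rw [covariance_eq_sub (.of_bound hY.aestronglyMeasurable a (.of_forall hYa))
    (.of_bound hZ.aestronglyMeasurable a (.of_forall hZa))]
  linarith [(abs_le.1 hprod).2, (abs_le.1 hmean).1]

lemma variance_sum_mul_sum_overlap_le (hD : ∀ j, MeasurableSet (D j))
    (hDp : ∀ j, μ.real (D j) ≤ p) (hd : ∀ j, (overlap D j).card ≤ d)
    (hXm : ∀ j, Measurable (X j)) (hXloc : ∀ j, LocalOn (D j) (X j))
    (hXb : ∀ j ω, |X j ω| ≤ b) :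
    Var[fun ω => ∑ j, X j ω * ∑ k ∈ overlap D j, X k ω; Measure.pi fun _ => μ] ≤
      4 * d ^ 4 * Fintype.card ι ^ 2 * b ^ 4 * (Fintype.card κ * p ^ 2) +
        2 * d ^ 5 * Fintype.card ι * b ^ 4 := by
  refine (variance_sum_le_of_covariance_le (N := overlap (fatten D)) (d := (d ^ 3 : ℕ))
    (v := 2 * ((d : ℝ) * b ^ 2) ^ 2)
    (fun j => .of_bound (by fun_prop) _ (.of_forall (abs_mul_sum_overlap_le hd hXb j)))
    (by positivity) (by positivity) (fun j => Nat.cast_le.2 (card_overlap_fatten_le hd j))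
    (fun j k hk => covariance_mul_sum_overlap_le_of_notMem hD hDp hd hXm hXloc hXb hk)
    fun j k => covariance_le_of_abs_le (by fun_prop) (by fun_prop)
      (abs_mul_sum_overlap_le hd hXb j) (abs_mul_sum_overlap_le hd hXb k)).trans_eq ?_
  push_cast
  ring

lemma abs_integral_sum_mul_sum_overlap_sub_integral_sq_le (hD : ∀ j, MeasurableSet (D j))
    (hDp : ∀ j, μ.real (D j) ≤ p) (hXm : ∀ j, Measurable (X j))
    (hXloc : ∀ j, LocalOn (D j) (X j)) (hXb : ∀ j ω, |X j ω| ≤ b)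
    (hX0 : ∀ j, ∫ ω, X j ω ∂Measure.pi (fun _ => μ) = 0) :
    |∫ ω, ∑ j, X j ω * ∑ k ∈ overlap D j, X k ω ∂Measure.pi (fun _ => μ) -
        ∫ ω, (∑ j, X j ω) ^ 2 ∂Measure.pi (fun _ => μ)| ≤
      4 * Fintype.card ι ^ 3 * b ^ 2 * (Fintype.card κ * p ^ 2) := by
  set c := (Fintype.card ι : ℝ)
  set P := Measure.pi fun _ : κ => μ
  have hfar_le := abs_sum_sub_sum_overlap_le (D := D) hXb
  have hfar (j : ι) : |∫ ω, X j ω * (∑ k, X k ω - ∑ k ∈ overlap D j, X k ω) ∂P| ≤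
      4 * b * (c * b) * (c * (Fintype.card κ * p ^ 2)) := by
    obtain ⟨ω₀⟩ := nonempty_of_isProbabilityMeasure P
    exact norm_integral_mul_comp_far_le hD hDp hXm hXloc hXb (hX0 j) measurable_id
      ((abs_nonneg _).trans (hfar_le j ω₀)) (hfar_le j)
  have hnear_int : Integrable (fun ω => ∑ j, X j ω * ∑ k ∈ overlap D j, X k ω) P :=
    integrable_finsetSum _ fun j _ => .of_bound (by fun_prop) _
      (.of_forall (abs_mul_sum_overlap_le (fun j => Finset.card_le_univ _) hXb j))
  have hfar_int (j : ι) :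
      Integrable (fun ω => X j ω * (∑ k, X k ω - ∑ k ∈ overlap D j, X k ω)) P :=
    .of_bound (by fun_prop) (b * (c * b)) (.of_forall fun ω => by
      rw [norm_mul]
      exact mul_le_mul (hXb j ω) (hfar_le j ω) (abs_nonneg _) ((abs_nonneg _).trans (hXb j ω)))
  have hsplit (ω : κ → E) : (∑ j, X j ω) ^ 2 = ∑ j, X j ω * ∑ k ∈ overlap D j, X k ω +
      ∑ j, X j ω * (∑ k, X k ω - ∑ k ∈ overlap D j, X k ω) := by
    simp only [mul_sub, Finset.sum_sub_distrib, sq, Finset.sum_mul]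
    ring
  simp_rw [hsplit]
  rw [integral_add hnear_int (integrable_finsetSum _ fun j _ => hfar_int j),
    integral_finsetSum _ fun j _ => hfar_int j, sub_add_cancel_left, abs_neg]
  calc _ ≤ c * (4 * b * (c * b) * (c * (Fintype.card κ * p ^ 2))) := by
        rw [← nsmul_eq_mul]
        exact (Finset.abs_sum_le_sum_abs _ _).trans
          (Finset.sum_le_card_nsmul _ _ _ fun j _ => hfar j)
    _ = _ := by ring

theorem norm_charFun_map_sum_sub_charFun_gaussianReal_le_of_localOn
    (hD : ∀ j, MeasurableSet (D j)) (hDp : ∀ j, μ.real (D j) ≤ p)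
    (hd : ∀ j, (overlap D j).card ≤ d) (hXm : ∀ j, Measurable (X j))
    (hXloc : ∀ j, LocalOn (D j) (X j)) (hXb : ∀ j ω, |X j ω| ≤ b)
    (hX0 : ∀ j, ∫ ω, X j ω ∂Measure.pi (fun _ => μ) = 0)
    {η : ℝ} (hX1 : |∫ ω, (∑ j, X j ω) ^ 2 ∂Measure.pi (fun _ => μ) - 1| ≤ η) (t : ℝ) :
    ‖charFun ((Measure.pi fun _ => μ).map fun ω => ∑ j, X j ω) t -
        charFun (gaussianReal 0 1) t‖ ≤
      (4 * Fintype.card ι ^ 2 * b * (Fintype.card κ * p ^ 2) +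
        |t| * (√(4 * d ^ 4 * Fintype.card ι ^ 2 * b ^ 4 * (Fintype.card κ * p ^ 2) +
          2 * d ^ 5 * Fintype.card ι * b ^ 4) +
          (4 * Fintype.card ι ^ 3 * b ^ 2 * (Fintype.card κ * p ^ 2) + η)) +
        2 * d ^ 2 * Fintype.card ι * b ^ 3 * t ^ 2) * |t| := by
  have hT : MemLp (fun ω => ∑ j, X j ω * ∑ k ∈ overlap D j, X k ω) 2
      (Measure.pi fun _ : κ => μ) :=
    memLp_finsetSum _ fun j _ => .of_bound (by fun_prop) _
      (.of_forall (abs_mul_sum_overlap_le hd hXb j))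
  have hexp (j : ι) (s : ℝ) := norm_integral_mul_comp_far_le (𝕜 := ℂ) hD hDp hXm hXloc hXb
    (hX0 j) (g := fun x => Complex.exp (Complex.I * (s * x : ℝ))) (by fun_prop) zero_le_one
    fun ω => (norm_cexp_I_mul_ofReal _).le
  refine (norm_charFun_map_sum_sub_charFun_gaussianReal_le hXm (by fun_prop) hXb
    (abs_sum_overlap_le hd hXb) hexp ((integral_abs_sub_le_sqrt_variance_add hT 1).trans
      (add_le_add (Real.sqrt_le_sqrt (variance_sum_mul_sum_overlap_le hD hDp hd hXm hXloc hXb))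
        ((abs_sub_le _ _ _).trans (add_le_add
          (abs_integral_sum_mul_sum_overlap_sub_integral_sq_le hD hDp hXm hXloc hXb hX0) hX1))))
      t).trans_eq ?_
  ring

end LocalCLT

section Approximation

open ProbabilityTheory

variable {Ω : Type*} [MeasurableSpace Ω] {P : Measure Ω}

lemma norm_cexp_I_mul_ofReal_sub_le (x y : ℝ) :
    ‖Complex.exp (Complex.I * x) - Complex.exp (Complex.I * y)‖ ≤ |x - y| := by
  have hfactor : Complex.exp (Complex.I * x) - Complex.exp (Complex.I * y) =
      Complex.exp (Complex.I * y) * (Complex.exp (Complex.I * (x - y : ℝ)) - 1) := by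
    rw [mul_sub, ← Complex.exp_add, mul_one]
    congr 2
    push_cast
    ring
  rw [hfactor, norm_mul, norm_cexp_I_mul_ofReal, one_mul]
  exact Real.norm_exp_I_mul_ofReal_sub_one_le

lemma norm_charFun_map_sub_charFun_map_le [IsProbabilityMeasure P] {X Y : Ω → ℝ}
    (hX : Integrable X P) (hY : Integrable Y P) (t : ℝ) :
    ‖charFun (P.map X) t - charFun (P.map Y) t‖ ≤ |t| * ∫ ω, |X ω - Y ω| ∂P := by
  have hexp {Z : Ω → ℝ} (hZ : Integrable Z P) :
      Integrable (fun ω => Complex.exp (Complex.I * (t * Z ω : ℝ))) P :=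
    .of_bound (by fun_prop) 1 (.of_forall fun ω => (norm_cexp_I_mul_ofReal _).le)
  rw [charFun_map_eq_integral hX.aemeasurable, charFun_map_eq_integral hY.aemeasurable,
    ← integral_sub (hexp hX) (hexp hY), ← integral_const_mul]
  refine (norm_integral_le_integral_norm _).trans (integral_mono ((hexp hX).sub (hexp hY)).norm
    ((hX.sub hY).abs.const_mul _) fun ω => ?_)
  refine (norm_cexp_I_mul_ofReal_sub_le _ _).trans_eq ?_
  rw [← mul_sub, abs_mul]

variable [IsProbabilityMeasure P] {V W : Ω → ℝ} {M ε : ℝ} {G : Set Ω}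

lemma integral_mem_Icc (hV : Measurable V) (hVM : ∀ ω, V ω ∈ Set.Icc 0 M) :
    ∫ ω, V ω ∂P ∈ Set.Icc 0 M := by
  refine ⟨integral_nonneg fun ω => (hVM ω).1, ?_⟩
  have hint := Integrable.of_mem_Icc 0 M hV.aemeasurable (.of_forall hVM) (μ := P)
  simpa using integral_mono hint (integrable_const M) fun ω => (hVM ω).2

lemma integral_abs_sub_le_of_eqOn (hVM : ∀ ω, V ω ∈ Set.Icc 0 M) (hWM : ∀ ω, W ω ∈ Set.Icc 0 M)
    (hG : MeasurableSet G) (hGε : P.real Gᶜ ≤ ε) (hVW : ∀ᵐ ω ∂P, ω ∈ G → V ω = W ω) :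
    ∫ ω, |W ω - V ω| ∂P ≤ M * ε := by
  obtain ⟨ω₀⟩ := nonempty_of_isProbabilityMeasure P
  have hM : 0 ≤ M := (hVM ω₀).1.trans (hVM ω₀).2
  refine (integral_norm_le_of_eq_zero_off (f := fun ω => W ω - V ω) hG.compl (fun ω => ?_)
    ?_).trans (mul_le_mul_of_nonneg_left hGε hM)
  · exact abs_sub_le_of_nonneg_of_le (hWM ω).1 (hWM ω).2 (hVM ω).1 (hVM ω).2
  · filter_upwards [hVW] with ω hω hωG
    rw [hω (not_not.1 hωG), sub_self]

lemma integral_abs_sub_integral_sub_le_of_eqOn (hV : Measurable V) (hW : Measurable W)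
    (hVM : ∀ ω, V ω ∈ Set.Icc 0 M) (hWM : ∀ ω, W ω ∈ Set.Icc 0 M) (hG : MeasurableSet G)
    (hGε : P.real Gᶜ ≤ ε) (hVW : ∀ᵐ ω ∂P, ω ∈ G → V ω = W ω) :
    ∫ ω, |(W ω - ∫ ω, W ω ∂P) - (V ω - ∫ ω, V ω ∂P)| ∂P ≤ 2 * M * ε := by
  have hVint := Integrable.of_mem_Icc 0 M hV.aemeasurable (.of_forall hVM) (μ := P)
  have hWint := Integrable.of_mem_Icc 0 M hW.aemeasurable (.of_forall hWM) (μ := P)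
  have hL1 := integral_abs_sub_le_of_eqOn hVM hWM hG hGε hVW
  have hmean : |∫ ω, W ω ∂P - ∫ ω, V ω ∂P| ≤ M * ε := by
    rw [← integral_sub hWint hVint]
    exact abs_integral_le_integral_abs.trans hL1
  have habs : Integrable (fun ω => |W ω - V ω|) P := (hWint.sub hVint).abs
  calc _ ≤ ∫ ω, (|W ω - V ω| + |∫ ω, W ω ∂P - ∫ ω, V ω ∂P|) ∂P := by
        refine integral_mono ((hWint.sub (integrable_const _)).sub
          (hVint.sub (integrable_const _))).abs (habs.add (integrable_const _)) fun ω => ?_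
        dsimp only
        rw [sub_sub_sub_comm]
        exact abs_sub _ _
    _ = ∫ ω, |W ω - V ω| ∂P + |∫ ω, W ω ∂P - ∫ ω, V ω ∂P| := by
        rw [integral_add habs (integrable_const _)]
        simp
    _ ≤ 2 * M * ε := by linarith

lemma abs_variance_sub_variance_le_of_eqOn (hV : Measurable V) (hW : Measurable W)
    (hVM : ∀ ω, V ω ∈ Set.Icc 0 M) (hWM : ∀ ω, W ω ∈ Set.Icc 0 M) (hG : MeasurableSet G)
    (hGε : P.real Gᶜ ≤ ε) (hVW : ∀ᵐ ω ∂P, ω ∈ G → V ω = W ω) :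
    |Var[W; P] - Var[V; P]| ≤ 4 * M ^ 2 * ε := by
  obtain ⟨ω₀⟩ := nonempty_of_isProbabilityMeasure P
  have hM : 0 ≤ M := (hVM ω₀).1.trans (hVM ω₀).2
  set v := ∫ ω, V ω ∂P
  set w := ∫ ω, W ω ∂P
  have hdev {x y : ℝ} (hx : x ∈ Set.Icc 0 M) (hy : y ∈ Set.Icc 0 M) : |x - y| ≤ M :=
    abs_sub_le_of_nonneg_of_le hx.1 hx.2 hy.1 hy.2
  have hVdev (ω : Ω) : |V ω - v| ≤ M := hdev (hVM ω) (integral_mem_Icc hV hVM)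
  have hWdev (ω : Ω) : |W ω - w| ≤ M := hdev (hWM ω) (integral_mem_Icc hW hWM)
  have hVsq : Integrable (fun ω => (V ω - v) ^ 2) P := .of_bound (by fun_prop) (M ^ 2)
    (.of_forall fun ω => by simpa using pow_le_pow_left₀ (abs_nonneg _) (hVdev ω) 2)
  have hWsq : Integrable (fun ω => (W ω - w) ^ 2) P := .of_bound (by fun_prop) (M ^ 2)
    (.of_forall fun ω => by simpa using pow_le_pow_left₀ (abs_nonneg _) (hWdev ω) 2)
  have hdiff : Integrable (fun ω => |(W ω - w) - (V ω - v)| * (2 * M)) P :=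
    Integrable.of_bound (by fun_prop) (2 * M * (2 * M)) (.of_forall fun ω => by
      rw [Real.norm_eq_abs, abs_mul, abs_abs, abs_of_nonneg (by positivity : 0 ≤ 2 * M)]
      gcongr
      linarith [abs_sub (W ω - w) (V ω - v), hVdev ω, hWdev ω])
  rw [variance_eq_integral hV.aemeasurable, variance_eq_integral hW.aemeasurable,
    ← integral_sub hWsq hVsq]
  calc _ ≤ ∫ ω, |(W ω - w) - (V ω - v)| * (2 * M) ∂P := by
        refine abs_integral_le_integral_abs.trans
          (integral_mono (hWsq.sub hVsq).abs hdiff fun ω => ?_)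
        dsimp only
        rw [sq_sub_sq, mul_comm, abs_mul]
        gcongr
        linarith [abs_add_le (W ω - w) (V ω - v), hVdev ω, hWdev ω]
    _ ≤ 2 * M * ε * (2 * M) := by
        rw [integral_mul_const]
        gcongr
        exact integral_abs_sub_integral_sub_le_of_eqOn hV hW hVM hWM hG hGε hVW
    _ = _ := by ring

lemma norm_charFun_map_standardized_sub_le_of_eqOn (hV : Measurable V) (hW : Measurable W)
    (hVM : ∀ ω, V ω ∈ Set.Icc 0 M) (hWM : ∀ ω, W ω ∈ Set.Icc 0 M) (hG : MeasurableSet G)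
    (hGε : P.real Gᶜ ≤ ε) (hVW : ∀ᵐ ω ∂P, ω ∈ G → V ω = W ω) {σ : ℝ} (hσ : 0 < σ) (t : ℝ) :
    ‖charFun (P.map fun ω => (V ω - ∫ ω, V ω ∂P) / σ) t -
        charFun (P.map fun ω => (W ω - ∫ ω, W ω ∂P) / σ) t‖ ≤ |t| * (2 * M * ε / σ) := by
  have hVint := Integrable.of_mem_Icc 0 M hV.aemeasurable (.of_forall hVM) (μ := P)
  have hWint := Integrable.of_mem_Icc 0 M hW.aemeasurable (.of_forall hWM) (μ := P)
  rw [norm_sub_rev]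
  refine (norm_charFun_map_sub_charFun_map_le ((hWint.sub (integrable_const _)).div_const σ)
    ((hVint.sub (integrable_const _)).div_const σ) t).trans ?_
  gcongr
  simp only [← sub_div, abs_div, abs_of_pos hσ, integral_div]
  gcongr
  exact integral_abs_sub_integral_sub_le_of_eqOn hV hW hVM hWM hG hGε hVW

end Approximation

section LocalApproximation

open ProbabilityTheory

variable {ι κ E : Type*} [Fintype ι] [Fintype κ] [MeasurableSpace E] {μ : Measure E}
  [IsProbabilityMeasure μ] {D : ι → Set E} {Y : ι → (κ → E) → ℝ} {V : (κ → E) → ℝ}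
  {B p M ε : ℝ} {d : ℕ} {G : Set (κ → E)}

theorem norm_charFun_map_standardized_sub_charFun_gaussianReal_le
    (hD : ∀ j, MeasurableSet (D j)) (hDp : ∀ j, μ.real (D j) ≤ p)
    (hd : ∀ j, (overlap D j).card ≤ d) (hYm : ∀ j, Measurable (Y j))
    (hYloc : ∀ j, LocalOn (D j) (Y j)) (hYB : ∀ j ω, Y j ω ∈ Set.Icc 0 B)
    (hBM : Fintype.card ι * B ≤ M) (hVm : Measurable V) (hVM : ∀ ω, V ω ∈ Set.Icc 0 M)
    (hG : MeasurableSet G) (hGε : (Measure.pi fun _ => μ).real Gᶜ ≤ ε)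
    (hVY : ∀ᵐ ω ∂Measure.pi fun _ => μ, ω ∈ G → V ω = ∑ j, Y j ω) {σ b : ℝ} (hσ : 0 < σ)
    (hσV : σ ^ 2 = Var[V; Measure.pi fun _ => μ]) (hb : b = B / σ) (t : ℝ) :
    ‖charFun ((Measure.pi fun _ => μ).map fun ω =>
          (V ω - ∫ ω, V ω ∂Measure.pi fun _ => μ) / σ) t - charFun (gaussianReal 0 1) t‖ ≤
      |t| * (2 * M * ε / σ) +
      (4 * Fintype.card ι ^ 2 * b * (Fintype.card κ * p ^ 2) +
        |t| * (√(4 * d ^ 4 * Fintype.card ι ^ 2 * b ^ 4 * (Fintype.card κ * p ^ 2) +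
          2 * d ^ 5 * Fintype.card ι * b ^ 4) +
          (4 * Fintype.card ι ^ 3 * b ^ 2 * (Fintype.card κ * p ^ 2) + 4 * M ^ 2 * ε / σ ^ 2)) +
        2 * d ^ 2 * Fintype.card ι * b ^ 3 * t ^ 2) * |t| := by
  set P := Measure.pi fun _ : κ => μ
  set W : (κ → E) → ℝ := fun ω => ∑ j, Y j ω
  have hWm : Measurable W := Finset.measurable_fun_sum _ fun j _ => hYm j
  have hWM (ω : κ → E) : W ω ∈ Set.Icc 0 M := by
    refine ⟨Finset.sum_nonneg fun j _ => (hYB j ω).1, le_trans ?_ hBM⟩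
    simpa using Finset.sum_le_card_nsmul Finset.univ _ B fun j _ => (hYB j ω).2
  have hYint (j : ι) : Integrable (Y j) P :=
    .of_mem_Icc 0 B (hYm j).aemeasurable (.of_forall (hYB j))
  set X : ι → (κ → E) → ℝ := fun j ω => (Y j ω - ∫ ω, Y j ω ∂P) / σ
  have hsum (ω : κ → E) : ∑ j, X j ω = (W ω - ∫ ω, W ω ∂P) / σ := by
    rw [integral_finsetSum _ fun j _ => hYint j, ← Finset.sum_div, Finset.sum_sub_distrib]
  have hvar : |∫ ω, (∑ j, X j ω) ^ 2 ∂P - 1| ≤ 4 * M ^ 2 * ε / σ ^ 2 := by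
    simp_rw [hsum, div_pow, integral_div, ← variance_eq_integral hWm.aemeasurable]
    rw [div_sub_one (by positivity), abs_div, abs_of_nonneg (sq_nonneg σ), hσV]
    exact div_le_div_of_nonneg_right
      (abs_variance_sub_variance_le_of_eqOn hVm hWm hVM hWM hG hGε hVY) (variance_nonneg _ _)
  have hXb (j : ι) (ω : κ → E) : |X j ω| ≤ b := by
    have hmean := integral_mem_Icc (P := P) (hYm j) (hYB j)
    rw [abs_div, abs_of_pos hσ, hb]
    gcongr
    exact abs_sub_le_of_nonneg_of_le (hYB j ω).1 (hYB j ω).2 hmean.1 hmean.2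
  have hX0 (j : ι) : ∫ ω, X j ω ∂P = 0 := by
    rw [integral_div, integral_sub (hYint j) (integrable_const _)]
    simp
  have hclt := norm_charFun_map_sum_sub_charFun_gaussianReal_le_of_localOn (X := X) hD hDp hd
    (fun j => by fun_prop) (fun j => (hYloc j).comp fun y => (y - ∫ ω, Y j ω ∂P) / σ) hXb hX0 hvar t
  simp only [hsum] at hclt
  rw [← sub_add_sub_cancel _ (charFun (P.map fun ω => (W ω - ∫ ω, W ω ∂P) / σ) t)]
  exact norm_add_le_of_le
    (norm_charFun_map_standardized_sub_le_of_eqOn hVm hWm hVM hWM hG hGε hVY hσ t) hclt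

end LocalApproximation

section VarianceLowerBound

open ProbabilityTheory

variable {Ω ι : Type*} [MeasurableSpace Ω] [Fintype ι] {P : Measure Ω}

lemma half_sum_le_variance_of_le_covariance [IsFiniteMeasure P] {V : Ω → ℝ} {l : ι → Ω → ℝ}
    {a : ι → ℝ} (hV : MemLp V 2 P) (hl : ∀ j, MemLp (l j) 2 P)
    (hVl : ∀ j, a j ≤ cov[V, l j; P]) (hvar : ∀ j, Var[l j; P] ≤ 2 * a j)
    (horth : ∀ j k, j ≠ k → cov[l j, l k; P] = 0) :
    1 / 2 * ∑ j, a j ≤ Var[V; P] := by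
  have hS : MemLp (fun ω => ∑ j, l j ω) 2 P := memLp_finsetSum _ fun j _ => hl j
  have hcov : ∑ j, a j ≤ cov[V, fun ω => ∑ j, l j ω; P] := by
    rw [covariance_fun_sum_right hl hV]
    exact Finset.sum_le_sum fun j _ => hVl j
  have hvarS : Var[fun ω => ∑ j, l j ω; P] ≤ 2 * ∑ j, a j := by
    rw [variance_fun_sum hl, Finset.mul_sum]
    refine Finset.sum_le_sum fun j _ => ?_
    rw [Finset.sum_eq_single j (fun k _ hk => horth j k hk.symm) (by simp),
      covariance_self (hl j).aemeasurable]
    exact hvar j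
  have hsq : 0 ≤ Var[fun ω => V ω - 1 / 2 * ∑ j, l j ω; P] := variance_nonneg _ _
  rw [variance_fun_sub hV (hS.const_mul _), variance_const_mul, covariance_const_mul_right] at hsq
  linarith

section Involution

variable {V : Ω → ℝ} {A : Set Ω} {T : Ω → Ω}

/-- The difference of the indicators of the event `A` and of its image under the involution `T`. -/
noncomputable def swapDiff (A : Set Ω) (T : Ω → Ω) (ω : Ω) : ℝ :=
  A.indicator 1 ω - A.indicator 1 (T ω)

lemma memLp_indicator_one [IsFiniteMeasure P] (hA : MeasurableSet A) :
    MemLp (A.indicator (1 : Ω → ℝ)) 2 P :=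
  (memLp_const (1 : ℝ)).indicator hA

lemma memLp_swapDiff [IsFiniteMeasure P] (hA : MeasurableSet A) (hT : MeasurePreserving T P P) :
    MemLp (swapDiff A T) 2 P :=
  (memLp_indicator_one hA).sub ((memLp_indicator_one hA).comp_measurePreserving hT)

lemma variance_swapDiff_le [IsProbabilityMeasure P] (hA : MeasurableSet A)
    (hT : MeasurePreserving T P P) : Var[swapDiff A T; P] ≤ 2 * P.real A := by
  have hint : Integrable (A.indicator (1 : Ω → ℝ)) P :=
    (memLp_indicator_one hA).integrable one_le_two
  have hintT : Integrable (fun ω => A.indicator (1 : Ω → ℝ) (T ω)) P :=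
    hT.integrable_comp_of_integrable hint
  calc Var[swapDiff A T; P] ≤ ∫ ω, swapDiff A T ω ^ 2 ∂P :=
        variance_le_expectation_sq (memLp_swapDiff hA hT).aestronglyMeasurable
    _ ≤ ∫ ω, A.indicator 1 ω + A.indicator 1 (T ω) ∂P := by
        refine integral_mono (memLp_swapDiff hA hT).integrable_sq (hint.add hintT) fun ω => ?_
        by_cases h₁ : ω ∈ A <;> by_cases h₂ : T ω ∈ A <;> norm_num [swapDiff, h₁, h₂]
    _ = 2 * P.real A := by
        rw [integral_add hint hintT,
          integral_comp_of_measurePreserving hT hint.aestronglyMeasurable,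
          integral_indicator_one hA]
        ring

lemma measureReal_le_covariance_swapDiff [IsProbabilityMeasure P] (hV : MemLp V 2 P)
    (hA : MeasurableSet A) (hT : MeasurePreserving T P P) (hTT : ∀ ω, T (T ω) = ω)
    (hgain : ∀ᵐ ω ∂P, ω ∈ A → 1 ≤ V ω - V (T ω)) :
    P.real A ≤ cov[V, swapDiff A T; P] := by
  have hVT : MemLp (fun ω => V (T ω)) 2 P := hV.comp_measurePreserving hT
  have hind : MemLp (A.indicator (1 : Ω → ℝ)) 2 P := memLp_indicator_one hA
  have hindT : MemLp (fun ω => A.indicator (1 : Ω → ℝ) (T ω)) 2 P := hind.comp_measurePreserving hT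
  have hswap : cov[V, fun ω => A.indicator (1 : Ω → ℝ) (T ω); P] =
      cov[fun ω => V (T ω), A.indicator 1; P] := by
    conv_lhs => rw [← hT.map_eq]
    rw [covariance_map_fun (by rw [hT.map_eq]; exact hV.aestronglyMeasurable)
      (by rw [hT.map_eq]; exact hindT.aestronglyMeasurable) hT.aemeasurable]
    simp only [hTT]
  have hmean : ∫ ω, (V ω - V (T ω)) ∂P = 0 := by
    rw [integral_sub (hV.integrable one_le_two) (hVT.integrable one_le_two),
      integral_comp_of_measurePreserving hT hV.aestronglyMeasurable, sub_self]
  calc P.real A = ∫ ω, A.indicator 1 ω ∂P := (integral_indicator_one hA).symm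
    _ ≤ ∫ ω, (V ω - V (T ω)) * A.indicator 1 ω ∂P := by
        refine integral_mono_ae (hind.integrable one_le_two)
          ((hV.sub hVT).integrable_mul hind) ?_
        filter_upwards [hgain] with ω hω
        by_cases hωA : ω ∈ A
        · simpa [hωA] using hω hωA
        · simp [hωA]
    _ = cov[fun ω => V ω - V (T ω), A.indicator 1; P] := by
        rw [← sub_zero (∫ ω, _ ∂P), ← zero_mul (∫ ω, A.indicator 1 ω ∂P), ← hmean]
        exact (covariance_eq_sub (hV.sub hVT) hind).symm
    _ = cov[V, swapDiff A T; P] := by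
        rw [covariance_fun_sub_left hV hVT hind, ← hswap,
          ← covariance_fun_sub_right hV hind hindT]
        rfl

lemma covariance_eq_zero_of_comp_eq_neg {X Y : Ω → ℝ} (hT : MeasurePreserving T P P)
    (hXm : AEStronglyMeasurable X P) (hYm : AEStronglyMeasurable Y P)
    (hX : ∀ ω, X (T ω) = -X ω) (hY : ∀ ω, Y (T ω) = Y ω) : cov[X, Y; P] = 0 := by
  have h : cov[X, Y; P] = cov[fun ω => -X ω, Y; P] := by
    conv_lhs => rw [← hT.map_eq]
    rw [covariance_map_fun (by rwa [hT.map_eq]) (by rwa [hT.map_eq]) hT.aemeasurable]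
    simp only [hX, hY]
  rw [covariance_fun_neg_left] at h
  linarith

end Involution

lemma half_sum_measureReal_le_variance [IsProbabilityMeasure P] {V : Ω → ℝ} {A : ι → Set Ω}
    {T : ι → Ω → Ω} (hV : MemLp V 2 P) (hA : ∀ j, MeasurableSet (A j))
    (hT : ∀ j, MeasurePreserving (T j) P P) (hTT : ∀ j ω, T j (T j ω) = ω)
    (hgain : ∀ j, ∀ᵐ ω ∂P, ω ∈ A j → 1 ≤ V ω - V (T j ω))
    (hmem : ∀ j k, j ≠ k → ∀ ω, T j ω ∈ A k ↔ ω ∈ A k)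
    (hmemT : ∀ j k, j ≠ k → ∀ ω, T k (T j ω) ∈ A k ↔ T k ω ∈ A k) :
    1 / 2 * ∑ j, P.real (A j) ≤ Var[V; P] := by
  refine half_sum_le_variance_of_le_covariance (l := fun j => swapDiff (A j) (T j)) hV
    (fun j => memLp_swapDiff (hA j) (hT j))
    (fun j => measureReal_le_covariance_swapDiff hV (hA j) (hT j) (hTT j) (hgain j))
    (fun j => variance_swapDiff_le (hA j) (hT j)) fun j k hjk => ?_
  refine covariance_eq_zero_of_comp_eq_neg (hT j) (memLp_swapDiff (hA j) (hT j)).1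
    (memLp_swapDiff (hA k) (hT k)).1 (fun ω => ?_) fun ω => ?_
  · simp only [swapDiff, hTT, neg_sub]
  · classical simp only [swapDiff, Set.indicator_apply, Pi.one_apply, hmem j k hjk, hmemT j k hjk]

end VarianceLowerBound

section Pattern

variable {κ τ E : Type*} {P : τ → Set E} {C : Set E}

/-- The configurations in which the points inside `C` are as many as the indices `t : τ` and can be
labelled by them in such a way that the point labelled `t` lies in `P t` (for `P t ⊆ C`). -/
def patternEvent (κ : Type*) (P : τ → Set E) (C : Set E) : Set (κ → E) :=
  {ω | ∃ g : τ ↪ κ, (∀ t, ω (g t) ∈ P t) ∧ ∀ i ∉ Set.range g, ω i ∉ C}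

lemma localOn_patternEvent (hP : ∀ t, P t ⊆ C) :
    LocalOn C fun ω : κ → E => ω ∈ patternEvent κ P C := by
  have key : ∀ ω ω' : κ → E, (∀ i, ω i = ω' i ∨ (ω i ∉ C ∧ ω' i ∉ C)) →
      ω ∈ patternEvent κ P C → ω' ∈ patternEvent κ P C := by
    rintro ω ω' h ⟨g, hg, hC⟩
    refine ⟨g, fun t => ?_, fun i hi => ?_⟩
    · rcases h (g t) with heq | hne
      · exact heq ▸ hg t
      · exact absurd (hP t (hg t)) hne.1
    · rcases h i with heq | hne
      · exact heq ▸ hC i hi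
      · exact hne.2
  exact fun ω ω' h => propext ⟨key ω ω' h, key ω' ω fun i => (h i).imp Eq.symm And.symm⟩

/-- The set to which the point of index `i` is confined if `P` is realised by the points with
indices in the range of `g` and no other point is allowed in `C`. -/
noncomputable def patternBox (P : τ → Set E) (C : Set E) (g : τ ↪ κ) : κ → Set E :=
  Function.extend g P fun _ => Cᶜ

lemma patternBox_apply (g : τ ↪ κ) (t : τ) : patternBox P C g (g t) = P t :=
  g.injective.extend_apply P _ t

lemma patternBox_of_notMem (g : τ ↪ κ) {i : κ} (hi : i ∉ Set.range g) : patternBox P C g i = Cᶜ :=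
  Function.extend_apply' P _ i hi

lemma patternEvent_eq_iUnion :
    patternEvent κ P C = ⋃ g : τ ↪ κ, Set.univ.pi (patternBox P C g) := by
  ext ω
  simp only [patternEvent, Set.mem_ofPred_eq, Set.mem_iUnion, Set.mem_univ_pi]
  refine exists_congr fun g => ⟨fun ⟨hg, hC⟩ i => ?_, fun h => ⟨fun t => ?_, fun i hi => ?_⟩⟩
  · by_cases hi : i ∈ Set.range g
    · obtain ⟨t, rfl⟩ := hi
      exact patternBox_apply (P := P) (C := C) g t ▸ hg t
    · exact patternBox_of_notMem (P := P) g hi ▸ hC i hi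
  · exact patternBox_apply (P := P) (C := C) g t ▸ h (g t)
  · exact (patternBox_of_notMem (P := P) (C := C) g hi ▸ h i : ω i ∈ Cᶜ)

lemma disjoint_pi_patternBox (hP : ∀ t, P t ⊆ C) (hdis : ∀ s t, s ≠ t → Disjoint (P s) (P t))
    {g h : τ ↪ κ} (hgh : g ≠ h) :
    Disjoint (Set.univ.pi (patternBox P C g)) (Set.univ.pi (patternBox P C h)) := by
  obtain ⟨t, ht⟩ : ∃ t, g t ≠ h t := by
    by_contra! hcon
    exact hgh (Function.Embedding.ext hcon)
  refine Set.disjoint_univ_pi.2 ⟨g t, ?_⟩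
  rw [patternBox_apply]
  by_cases hr : g t ∈ Set.range h
  · obtain ⟨s, hs⟩ := hr
    rw [← hs, patternBox_apply]
    exact hdis t s fun hts => ht (by rw [← hs, hts])
  · rw [patternBox_of_notMem h hr]
    exact Set.disjoint_compl_right_iff_subset.2 (hP t)

variable [MeasurableSpace E]

lemma measurableSet_patternBox (hP : ∀ t, MeasurableSet (P t)) (hC : MeasurableSet C) (g : τ ↪ κ)
    (i : κ) : MeasurableSet (patternBox P C g i) := by
  by_cases hi : i ∈ Set.range g
  · obtain ⟨t, rfl⟩ := hi
    exact (patternBox_apply (C := C) g t).symm ▸ hP t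
  · exact (patternBox_of_notMem (P := P) g hi).symm ▸ hC.compl

lemma measurableSet_patternEvent [Finite κ] (hP : ∀ t, MeasurableSet (P t)) (hC : MeasurableSet C) :
    MeasurableSet (patternEvent κ P C) := by
  rw [patternEvent_eq_iUnion]
  exact .iUnion fun g => .univ_pi (measurableSet_patternBox hP hC g)

variable [Fintype κ] [Fintype τ] {μ : Measure E} [IsProbabilityMeasure μ] {p p' : ℝ}

lemma pow_mul_one_sub_pow_le_measureReal_pi_patternBox (hC : MeasurableSet C) (hp : 0 ≤ p)
    (hpP : ∀ t, p ≤ μ.real (P t)) (hp' : μ.real C ≤ p') (hp1 : p' ≤ 1) (g : τ ↪ κ) :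
    p ^ Fintype.card τ * (1 - p') ^ Fintype.card κ ≤
      (Measure.pi fun _ : κ => μ).real (Set.univ.pi (patternBox P C g)) := by
  classical
  have hp0 : 0 ≤ p' := measureReal_nonneg.trans hp'
  rw [Measure.real, Measure.pi_pi, ENNReal.toReal_prod,
    ← Finset.prod_mul_prod_compl (Finset.univ.map g)]
  refine mul_le_mul ?_ ?_ (pow_nonneg (by linarith) _)
    (Finset.prod_nonneg fun _ _ => ENNReal.toReal_nonneg)
  · rw [Finset.prod_map, Fintype.card, ← Finset.prod_const]
    refine Finset.prod_le_prod (fun _ _ => hp) fun t _ => ?_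
    rw [patternBox_apply]
    exact hpP t
  · refine (pow_le_pow_of_le_one (by linarith) (by linarith)
      (Finset.card_le_univ (Finset.univ.map g)ᶜ)).trans ?_
    rw [← Finset.prod_const]
    refine Finset.prod_le_prod (fun _ _ => by linarith) fun i hi => ?_
    rw [patternBox_of_notMem g (by simpa using hi)]
    calc 1 - p' ≤ 1 - μ.real C := by linarith
      _ = μ.real Cᶜ := (probReal_compl_eq_one_sub hC).symm

lemma descFactorial_mul_le_measureReal_patternEvent (hPm : ∀ t, MeasurableSet (P t))
    (hC : MeasurableSet C) (hP : ∀ t, P t ⊆ C) (hdis : ∀ s t, s ≠ t → Disjoint (P s) (P t))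
    (hp : 0 ≤ p) (hpP : ∀ t, p ≤ μ.real (P t)) (hp' : μ.real C ≤ p') (hp1 : p' ≤ 1) :
    (Fintype.card κ).descFactorial (Fintype.card τ) *
        (p ^ Fintype.card τ * (1 - p') ^ Fintype.card κ) ≤
      (Measure.pi fun _ : κ => μ).real (patternEvent κ P C) := by
  classical
  rw [patternEvent_eq_iUnion,
    measureReal_iUnion_fintype (fun _ _ => disjoint_pi_patternBox hP hdis)
      fun g => .univ_pi (measurableSet_patternBox hPm hC g),
    ← Fintype.card_embedding_eq, ← nsmul_eq_mul, ← Finset.card_univ]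
  exact Finset.card_nsmul_le_sum _ _ _ fun g _ =>
    pow_mul_one_sub_pow_le_measureReal_pi_patternBox hC hp hpP hp' hp1 g

end Pattern

/-! ### Polar coordinates in the plane -/

section Polar

/-- The Euclidean plane, in which the points are sampled. -/
abbrev Plane := EuclideanSpace ℝ (Fin 2)

/-- The identification of `ℂ` with the plane; it transports `Complex.arg` and rotations. -/
noncomputable abbrev toPlane : ℂ ≃ₗᵢ[ℝ] Plane :=
  Complex.orthonormalBasisOneI.repr

/-- The point with polar coordinates `(ρ, θ)`. -/
noncomputable def polarPoint (ρ θ : ℝ) : Plane :=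
  toPlane (ρ * Complex.exp (θ * Complex.I))

/-- The polar angle in `(-π, π]`, with value `0` at the origin. -/
noncomputable def polarAngle (x : Plane) : ℝ :=
  Complex.arg (toPlane.symm x)

/-- The height of a point in direction `φ`, as a linear functional on the plane. -/
noncomputable def height (φ : ℝ) : StrongDual ℝ Plane :=
  innerSL ℝ (polarPoint 1 φ)

lemma polarPoint_norm_polarAngle (x : Plane) : polarPoint ‖x‖ (polarAngle x) = x := by
  rw [polarPoint, polarAngle, ← toPlane.symm.norm_map x, Complex.norm_mul_exp_arg_mul_I,
    LinearIsometryEquiv.apply_symm_apply]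

lemma norm_polarPoint {ρ : ℝ} (hρ : 0 ≤ ρ) (θ : ℝ) : ‖polarPoint ρ θ‖ = ρ := by
  rw [polarPoint, LinearIsometryEquiv.norm_map, norm_mul, Complex.norm_exp_ofReal_mul_I, mul_one,
    Complex.norm_of_nonneg hρ]

lemma height_polarPoint (φ ρ θ : ℝ) : height φ (polarPoint ρ θ) = ρ * Real.cos (φ - θ) := by
  rw [height, innerSL_apply_apply, polarPoint, polarPoint, LinearIsometryEquiv.inner_map_map,
    Complex.inner, Real.cos_sub]
  simp only [Complex.mul_re, Complex.mul_im, Complex.conj_re, Complex.conj_im,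
    Complex.exp_ofReal_mul_I_re, Complex.exp_ofReal_mul_I_im, Complex.ofReal_re, Complex.ofReal_im]
  ring

lemma smul_polarPoint (c ρ θ : ℝ) : c • polarPoint ρ θ = polarPoint (c * ρ) θ := by
  rw [polarPoint, polarPoint, ← map_smul, Complex.real_smul, Complex.ofReal_mul, mul_assoc]

lemma polarPoint_add_int_mul_two_pi (ρ θ : ℝ) (k : ℤ) :
    polarPoint ρ (θ + k * (2 * Real.pi)) = polarPoint ρ θ := by
  have hexp := Complex.exp_periodic.int_mul k (θ * Complex.I)
  rw [polarPoint, polarPoint, ← hexp]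
  congr 3
  push_cast
  ring

lemma height_add_int_mul_two_pi (φ : ℝ) (k : ℤ) (x : Plane) :
    height (φ + k * (2 * Real.pi)) x = height φ x := by
  rw [height, polarPoint_add_int_mul_two_pi, height]

lemma height_le_norm (φ : ℝ) (x : Plane) : height φ x ≤ ‖x‖ := by
  rw [← polarPoint_norm_polarAngle x, height_polarPoint, norm_polarPoint (norm_nonneg _)]
  exact mul_le_of_le_one_right (norm_nonneg _) (Real.cos_le_one _)

lemma exists_eq_smul_height (f : StrongDual ℝ Plane) : ∃ φ R : ℝ, 0 ≤ R ∧ f = R • height φ := by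
  let v := (InnerProductSpace.toDual ℝ Plane).symm f
  refine ⟨polarAngle v, ‖v‖, norm_nonneg v, ?_⟩
  ext y
  rw [← InnerProductSpace.toDual_symm_apply, smul_apply, height,
    innerSL_apply_apply, smul_eq_mul, ← real_inner_smul_left, smul_polarPoint, mul_one,
    polarPoint_norm_polarAngle]

lemma exists_int_abs_add_mul_two_pi_sub_le_pi (a b : ℝ) :
    ∃ k : ℤ, |a + k * (2 * Real.pi) - b| ≤ Real.pi := by
  have := Real.pi_pos
  let s := (b - a) / (2 * Real.pi)
  refine ⟨round s, ?_⟩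
  have hs : a + round s * (2 * Real.pi) - b = -(s - round s) * (2 * Real.pi) := by
    simp only [s]
    field_simp
    ring
  rw [hs, abs_mul, abs_neg, abs_of_pos (by positivity : 0 < 2 * Real.pi)]
  nlinarith [abs_sub_round s]

lemma exists_polarPoint_eq_of_abs_sub_le_pi (x : Plane) (φ : ℝ) :
    ∃ θ, x = polarPoint ‖x‖ θ ∧ |φ - θ| ≤ Real.pi := by
  obtain ⟨k, hk⟩ := exists_int_abs_add_mul_two_pi_sub_le_pi (polarAngle x) φ
  exact ⟨polarAngle x + k * (2 * Real.pi),
    by rw [polarPoint_add_int_mul_two_pi, polarPoint_norm_polarAngle], by rwa [abs_sub_comm]⟩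

lemma exists_polarAngle_polarPoint_add {ρ : ℝ} (hρ : 0 < ρ) (θ : ℝ) :
    ∃ k : ℤ, θ = polarAngle (polarPoint ρ θ) + k * (2 * Real.pi) := by
  have hangle : polarAngle (polarPoint ρ θ) = toIocMod Real.two_pi_pos (-Real.pi) θ := by
    rw [polarAngle, polarPoint, LinearIsometryEquiv.symm_apply_apply, Complex.exp_mul_I,
      Complex.arg_mul_cos_add_sin_mul_I_eq_toIocMod hρ]
  refine ⟨toIocDiv Real.two_pi_pos (-Real.pi) θ, ?_⟩
  rw [hangle, ← zsmul_eq_mul, toIocMod_add_toIocDiv_zsmul]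

lemma measurable_polarAngle : Measurable polarAngle :=
  Complex.measurable_arg.comp toPlane.symm.continuous.measurable

/-- Rotation of the plane by the angle `α`. -/
noncomputable def rotate (α : ℝ) : Plane ≃ₗᵢ[ℝ] Plane :=
  (toPlane.symm.trans (rotation (Circle.exp α))).trans toPlane

/-- The reflection of the plane that maps the polar angle `θ` to `α - θ`. -/
noncomputable def reflect (α : ℝ) : Plane ≃ₗᵢ[ℝ] Plane :=
  (toPlane.symm.trans (Complex.conjLIE.trans (rotation (Circle.exp α)))).trans toPlane

lemma rotate_polarPoint (α ρ θ : ℝ) : rotate α (polarPoint ρ θ) = polarPoint ρ (θ + α) := by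
  simp only [rotate, polarPoint, LinearIsometryEquiv.trans_apply,
    LinearIsometryEquiv.symm_apply_apply, rotation_apply, Circle.coe_exp]
  rw [mul_left_comm, ← Complex.exp_add]
  congr 3
  push_cast
  ring

lemma reflect_polarPoint (α ρ θ : ℝ) : reflect α (polarPoint ρ θ) = polarPoint ρ (α - θ) := by
  simp only [reflect, polarPoint, LinearIsometryEquiv.trans_apply,
    LinearIsometryEquiv.symm_apply_apply, rotation_apply, Circle.coe_exp, Complex.conjLIE_apply,
    map_mul, Complex.conj_ofReal, ← Complex.exp_conj, Complex.conj_I]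
  rw [mul_left_comm, ← Complex.exp_add]
  congr 3
  push_cast
  ring

lemma reflect_reflect (α : ℝ) (x : Plane) : reflect α (reflect α x) = x := by
  rw [← polarPoint_norm_polarAngle x, reflect_polarPoint, reflect_polarPoint, sub_sub_cancel]

end Polar

section Sectors

variable {m : ℕ}

/-- The opening angle of each of `m` equal sectors of the plane. -/
noncomputable def sectorAngle (m : ℕ) : ℝ :=
  2 * Real.pi / m

/-- The index of the sector `[2πk/m, 2π(k+1)/m)` of polar angles that contains `x`. -/
noncomputable def sectorIndex (m : ℕ) (x : Plane) : ZMod m :=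
  ((⌊m * polarAngle x / (2 * Real.pi)⌋ : ℤ) : ZMod m)

/-- The part of the sector with index `c` (out of `m`) at distance at least `r` from the origin. -/
def outerSector (m : ℕ) (c : ZMod m) (r : ℝ) : Set Plane :=
  {x | sectorIndex m x = c ∧ r ≤ ‖x‖}

lemma sectorAngle_pos (hm : 0 < m) : 0 < sectorAngle m := by
  have := Real.pi_pos
  unfold sectorAngle
  positivity

lemma measurableSet_sectorIndex_eq (c : ZMod m) : MeasurableSet {x | sectorIndex m x = c} :=
  (measurable_const.mul measurable_polarAngle |>.div_const _ |> Int.measurable_floor.comp)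
    (DiscreteMeasurableSpace.forall_measurableSet {k : ℤ | (k : ZMod m) = c})

lemma measurableSet_outerSector (c : ZMod m) (r : ℝ) : MeasurableSet (outerSector m c r) :=
  (measurableSet_sectorIndex_eq c).inter (measurableSet_le measurable_const measurable_norm)

lemma sectorIndex_polarPoint (m : ℕ) {ρ : ℝ} (hρ : 0 < ρ) (θ : ℝ) :
    sectorIndex m (polarPoint ρ θ) = ((⌊m * θ / (2 * Real.pi)⌋ : ℤ) : ZMod m) := by
  obtain ⟨k, hk⟩ := exists_polarAngle_polarPoint_add hρ θ
  have := Real.pi_pos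
  have hshift : (m : ℝ) * θ / (2 * Real.pi) =
      m * polarAngle (polarPoint ρ θ) / (2 * Real.pi) + ((m * k : ℤ) : ℝ) := by
    nth_rw 1 [hk]
    push_cast
    field_simp
  rw [hshift, Int.floor_add_intCast]
  simp [sectorIndex]

lemma exists_polarPoint_of_sectorIndex_eq (hm : 0 < m) {x : Plane} {k : ℤ}
    (h : sectorIndex m x = k) :
    ∃ θ, x = polarPoint ‖x‖ θ ∧ k * sectorAngle m ≤ θ ∧ θ < (k + 1) * sectorAngle m := by
  have hw : 0 < 2 * Real.pi / m := by have := Real.pi_pos; positivity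
  rw [sectorIndex, ZMod.intCast_eq_intCast_iff_dvd_sub] at h
  obtain ⟨j, hj⟩ := h
  refine ⟨polarAngle x + j * (2 * Real.pi),
    by rw [polarPoint_add_int_mul_two_pi, polarPoint_norm_polarAngle], ?_⟩
  have hk : (k : ℝ) = ⌊m * polarAngle x / (2 * Real.pi)⌋ + m * j := by
    rw [sub_eq_iff_eq_add'] at hj
    exact_mod_cast hj
  have hθ : polarAngle x + j * (2 * Real.pi) =
      (m * polarAngle x / (2 * Real.pi) + m * j) * sectorAngle m := by
    rw [sectorAngle]
    field_simp
  rw [hθ]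
  exact ⟨mul_le_mul_of_nonneg_right (by linarith [Int.floor_le (m * polarAngle x / (2 * Real.pi))])
      hw.le,
    mul_lt_mul_of_pos_right (by linarith [Int.lt_floor_add_one (m * polarAngle x / (2 * Real.pi))])
      hw⟩

lemma sectorIndex_polarPoint_eq (hm : 0 < m) {ρ θ : ℝ} (hρ : 0 < ρ) {k : ℤ}
    (h1 : k * sectorAngle m ≤ θ) (h2 : θ < (k + 1) * sectorAngle m) :
    sectorIndex m (polarPoint ρ θ) = k := by
  have := Real.pi_pos
  have hm' : (0 : ℝ) < m := by exact_mod_cast hm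
  rw [sectorIndex_polarPoint m hρ, (Int.floor_eq_iff (z := k)).2]
  rw [le_div_iff₀ (by positivity), div_lt_iff₀ (by positivity)]
  rw [sectorAngle, ← mul_div_assoc, div_le_iff₀ hm'] at h1
  rw [sectorAngle, ← mul_div_assoc, lt_div_iff₀ hm'] at h2
  constructor <;> linarith

lemma preimage_rotate_outerSector (hm : 0 < m) (k : ℤ) {r : ℝ} (hr : 0 < r) :
    rotate (k * sectorAngle m) ⁻¹' outerSector m k r = outerSector m 0 r := by
  have := Real.pi_pos
  ext x
  simp only [outerSector, Set.mem_preimage, Set.mem_ofPred_eq, LinearIsometryEquiv.norm_map]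
  refine and_congr_left fun hx => ?_
  have hx0 : 0 < ‖x‖ := hr.trans_le hx
  have hshift : (m : ℝ) * (polarAngle x + k * sectorAngle m) / (2 * Real.pi) =
      m * polarAngle x / (2 * Real.pi) + (k : ℝ) := by
    rw [sectorAngle]
    field_simp
  rw [← polarPoint_norm_polarAngle x, rotate_polarPoint, sectorIndex_polarPoint _ hx0,
    sectorIndex_polarPoint _ hx0, hshift, Int.floor_add_intCast]
  simp

end Sectors

section BetaMeasure

variable {β : ℝ}

/-- The density of `betaMeasure β` with respect to Lebesgue measure, as a function of the norm. -/
noncomputable def betaProfile (β r : ℝ) : ℝ :=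
  if r ≤ 1 then (β + 1) / Real.pi * (1 - r ^ 2) ^ β else 0

lemma measurable_betaProfile (β : ℝ) : Measurable (betaProfile β) :=
  Measurable.ite (measurableSet_le measurable_id measurable_const) (by fun_prop) measurable_const

lemma measurable_ofReal_betaProfile_norm (β : ℝ) :
    Measurable fun x : Plane => ENNReal.ofReal (betaProfile β ‖x‖) :=
  ((measurable_betaProfile β).comp measurable_norm).ennreal_ofReal

lemma betaProfile_nonneg (hβ : -1 ≤ β) {r : ℝ} (hr : 0 ≤ r) : 0 ≤ betaProfile β r := by
  rw [betaProfile]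
  split_ifs with h
  · have h1 : 0 ≤ β + 1 := by linarith
    have h2 : 0 ≤ 1 - r ^ 2 := by nlinarith
    have := Real.pi_pos
    positivity
  · exact le_rfl

lemma betaMeasure_eq_withDensity_betaProfile (β : ℝ) :
    betaMeasure β = volume.withDensity fun x => ENNReal.ofReal (betaProfile β ‖x‖) :=
  rfl

lemma integral_mul_one_sub_sq_rpow (hβ : 0 ≤ β) (a : ℝ) :
    ∫ y in a..1, 2 * y * (β + 1) * (1 - y ^ 2) ^ β = (1 - a ^ 2) ^ (β + 1) := by
  have hderiv (y : ℝ) : HasDerivAt (fun y : ℝ => -(1 - y ^ 2) ^ (β + 1))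
      (2 * y * (β + 1) * (1 - y ^ 2) ^ β) y := by
    have hsq : HasDerivAt (fun y : ℝ => 1 - y ^ 2) (-(2 * y)) y := by
      simpa using (hasDerivAt_pow 2 y).const_sub 1
    have hpow := (hsq.rpow_const (p := β + 1) (Or.inr (by linarith))).neg
    rw [add_sub_cancel_right] at hpow
    exact hpow.congr_deriv (by ring)
  have : Continuous fun y : ℝ => (1 - y ^ 2) ^ β :=
    Continuous.rpow_const (by fun_prop) fun _ => Or.inr hβ
  rw [intervalIntegral.integral_eq_sub_of_hasDerivAt (fun y _ => hderiv y)
    (Continuous.intervalIntegrable (by fun_prop) _ _)]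
  simp [Real.zero_rpow (show β + 1 ≠ 0 by linarith)]

lemma integral_fun_norm_plane (f : ℝ → ℝ) :
    ∫ x : Plane, f ‖x‖ = 2 * Real.pi * ∫ r in Set.Ioi 0, r * f r := by
  have hball : (volume : Measure Plane).real (Metric.ball 0 1) = Real.pi := by
    rw [Measure.real, EuclideanSpace.volume_ball_fin_two]
    simp [Real.pi_pos.le]
  rw [integral_fun_norm_addHaar volume f, finrank_euclideanSpace_fin, hball]
  simp only [Nat.add_one_sub_one, pow_one, smul_eq_mul, nsmul_eq_mul, Nat.cast_ofNat]
  ring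

lemma measureReal_betaMeasure_le_norm (hβ : 0 ≤ β) {a : ℝ} (ha : 0 ≤ a) (ha1 : a ≤ 1) :
    (betaMeasure β).real {x | a ≤ ‖x‖} = (1 - a ^ 2) ^ (β + 1) := by
  have hS : MeasurableSet {x : Plane | a ≤ ‖x‖} := measurableSet_le (by fun_prop) (by fun_prop)
  have hpos (x : Plane) := betaProfile_nonneg (by linarith : -1 ≤ β) (norm_nonneg x)
  have hradial : ∫ r in Set.Ioi (0 : ℝ), r * (Set.Ici a).indicator (betaProfile β) r =
      ∫ r in Set.Icc a 1, r * ((β + 1) / Real.pi * (1 - r ^ 2) ^ β) := by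
    rw [← integral_Ici_eq_integral_Ioi, ← integral_indicator measurableSet_Ici,
      ← integral_indicator measurableSet_Icc]
    congr 1 with r
    rcases lt_or_ge r a with har | har
    · simp [Set.indicator, har.not_ge]
    · simp [Set.indicator, betaProfile, har, ha.trans har]
  calc (betaMeasure β).real {x | a ≤ ‖x‖}
    _ = ∫ x in {x : Plane | a ≤ ‖x‖}, betaProfile β ‖x‖ := by
      rw [Measure.real, betaMeasure_eq_withDensity_betaProfile, withDensity_apply _ hS,
        integral_eq_lintegral_of_nonneg_ae (.of_forall hpos)
          ((measurable_betaProfile β).comp measurable_norm).aestronglyMeasurable]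
    _ = ∫ x : Plane, (Set.Ici a).indicator (betaProfile β) ‖x‖ := by
      rw [← integral_indicator hS]
      rfl
    _ = ∫ r in Set.Icc a 1, 2 * r * (β + 1) * (1 - r ^ 2) ^ β := by
      rw [integral_fun_norm_plane, hradial, ← integral_const_mul]
      congr 1 with r
      have := Real.pi_pos
      field_simp
    _ = (1 - a ^ 2) ^ (β + 1) := by
      rw [integral_Icc_eq_integral_Ioc, ← intervalIntegral.integral_of_le ha1,
        integral_mul_one_sub_sq_rpow hβ]

lemma isProbabilityMeasure_betaMeasure (hβ : 0 ≤ β) : IsProbabilityMeasure (betaMeasure β) := by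
  have huniv := measureReal_betaMeasure_le_norm hβ le_rfl zero_le_one
  simp only [norm_nonneg, Set.ofPred_true] at huniv
  exact ⟨(ENNReal.toReal_eq_one_iff _).1 (by simpa [Measure.real] using huniv)⟩

lemma betaMeasure_absolutelyContinuous (β : ℝ) : betaMeasure β ≪ volume :=
  withDensity_absolutelyContinuous _ _

instance (β : ℝ) : NullSingletonClass (betaMeasure β) :=
  ⟨fun x => betaMeasure_absolutelyContinuous β (measure_singleton x)⟩

lemma ae_norm_le_one_betaMeasure (β : ℝ) : ∀ᵐ x ∂betaMeasure β, ‖x‖ ≤ 1 := by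
  rw [betaMeasure_eq_withDensity_betaProfile, ae_withDensity_iff
    (measurable_ofReal_betaProfile_norm β)]
  refine .of_forall fun x hx => ?_
  by_contra h
  simp [betaProfile, h] at hx

lemma measurePreserving_betaMeasure (β : ℝ) (e : Plane ≃ₗᵢ[ℝ] Plane) :
    MeasurePreserving e (betaMeasure β) (betaMeasure β) := by
  have he : Measurable e := e.continuous.measurable
  refine ⟨he, Measure.ext fun s hs => ?_⟩
  rw [Measure.map_apply he hs, betaMeasure_eq_withDensity_betaProfile,
    withDensity_apply _ (he hs), withDensity_apply _ hs,
    ← e.measurePreserving.setLIntegral_comp_preimage hs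
      (measurable_ofReal_betaProfile_norm β)]
  simp only [LinearIsometryEquiv.norm_map]

lemma measureReal_betaMeasure_outerSector (hβ : 0 ≤ β) {m : ℕ} (hm : 0 < m) (c : ZMod m) {r : ℝ}
    (hr : 0 < r) (hr1 : r ≤ 1) :
    (betaMeasure β).real (outerSector m c r) = (1 - r ^ 2) ^ (β + 1) / m := by
  have := isProbabilityMeasure_betaMeasure hβ
  have : NeZero m := ⟨hm.ne'⟩
  have hrot (c : ZMod m) :
      (betaMeasure β).real (outerSector m c r) = (betaMeasure β).real (outerSector m 0 r) := by
    obtain ⟨k, rfl⟩ := ZMod.intCast_surjective c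
    rw [← (measurePreserving_betaMeasure β (rotate (k * sectorAngle m))).measureReal_preimage
      (measurableSet_outerSector _ _).nullMeasurableSet, preimage_rotate_outerSector hm k hr]
  have hunion : {x : Plane | r ≤ ‖x‖} =
      ⋃ c ∈ (Finset.univ : Finset (ZMod m)), outerSector m c r := by
    ext x
    simp [outerSector]
  have htotal := measureReal_betaMeasure_le_norm hβ hr.le hr1
  rw [hunion, measureReal_biUnion_finset
      (fun a _ b _ hab => Set.disjoint_left.2 fun x hxa hxb => hab (hxa.1.symm.trans hxb.1))
      (fun c _ => measurableSet_outerSector c r)] at htotal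
  simp only [hrot, Finset.sum_const, Finset.card_univ, ZMod.card, nsmul_eq_mul] at htotal
  rw [hrot, ← htotal]
  field_simp

end BetaMeasure

section Pi

variable {κ E : Type*} [Fintype κ] [MeasurableSpace E] {μ : Measure E} [IsProbabilityMeasure μ]

lemma ae_pi_forall {p : E → Prop} (h : ∀ᵐ x ∂μ, p x) :
    ∀ᵐ ω ∂Measure.pi fun _ : κ => μ, ∀ i, p (ω i) :=
  ae_all_iff.2 fun i =>
    (measurePreserving_eval (fun _ : κ => μ) i).quasiMeasurePreserving.ae h

lemma ae_pi_injective [MeasurableEq E] [NullSingletonClass μ] :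
    ∀ᵐ ω ∂Measure.pi fun _ : κ => μ, Function.Injective ω := by
  have hne (i j : κ) (hij : i ≠ j) : ∀ᵐ ω ∂Measure.pi fun _ : κ => μ, ω i ≠ ω j := by
    have hindep := ProbabilityTheory.iIndepFun_pi (μ := fun _ : κ => μ)
      (X := fun _ x => x) (fun _ => aemeasurable_id')
    have hlaw := (ProbabilityTheory.indepFun_iff_map_prod_eq_prod_map_map
      (measurable_pi_apply i).aemeasurable (measurable_pi_apply j).aemeasurable).1
      (hindep.indepFun hij)
    rw [(measurePreserving_eval (fun _ : κ => μ) i).map_eq,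
      (measurePreserving_eval (fun _ : κ => μ) j).map_eq] at hlaw
    have hdiag : (μ.prod μ) (Set.diagonal E) = 0 := by
      rw [Measure.measure_prod_null measurableSet_diagonal]
      refine .of_forall fun x => ?_
      have hfiber : Prod.mk x ⁻¹' Set.diagonal E = {x} := by
        ext y
        simp [eq_comm]
      simp [hfiber]
    rw [← hlaw, Measure.map_apply (by fun_prop) measurableSet_diagonal] at hdiag
    exact measure_eq_zero_iff_ae_notMem.1 hdiag
  have hall : ∀ᵐ ω ∂Measure.pi fun _ : κ => μ, ∀ i j : κ, i ≠ j → ω i ≠ ω j := by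
    simp only [ae_all_iff]
    exact fun i j hij => hne i j hij
  filter_upwards [hall] with ω hω i j hij
  exact not_imp_not.1 (hω i j) hij

end Pi

/-! ### Vertices and exposing directions -/

section Exposed

variable {κ : Type*}

/-- In some direction the point `ω i` is higher than `s` and strictly higher than every other point
`ω k` lying in `D`. For `D = univ` and very negative `s` this says that `ω i` is a vertex of the
convex hull of all the points. A smaller `D` makes the condition local, and a larger `s` allows
ignoring points far away in angle. -/
def ExposedIn (s : ℝ) (D : Set Plane) (ω : κ → Plane) (i : κ) : Prop :=
  ∃ φ, s < height φ (ω i) ∧ ∀ k ≠ i, ω k ∈ D → height φ (ω k) < height φ (ω i)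

open Classical in
/-- The number of points that are exposed, above the height `s`, among all the points; almost
surely this is the number of vertices of the convex hull when `s < -1`. -/
noncomputable def exposedCount [Fintype κ] (s : ℝ) (ω : κ → Plane) : ℝ :=
  (Finset.univ.filter (ExposedIn s Set.univ ω)).card

lemma mem_extremePoints_convexHull_range_iff [Finite κ] {s : ℝ} {ω : κ → Plane}
    (hω : Function.Injective ω) {i : κ} (hs : s < -‖ω i‖) :
    ω i ∈ Set.extremePoints ℝ (convexHull ℝ (Set.range ω)) ↔ ExposedIn s Set.univ ω i := by
  constructor
  · rw [(convex_convexHull ℝ _).mem_extremePoints_iff_mem_sdiff_convexHull_sdiff]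
    rintro ⟨-, hnot⟩
    have hothers : ω i ∉ convexHull ℝ (ω '' {k | k ≠ i}) := by
      refine fun h => hnot (convexHull_mono ?_ h)
      rintro _ ⟨k, hk, rfl⟩
      exact ⟨subset_convexHull ℝ _ ⟨k, rfl⟩, fun h => hk (hω h)⟩
    obtain ⟨f, u, hlt, hgt⟩ := geometric_hahn_banach_closed_point (convex_convexHull ℝ _)
      ((Set.toFinite (ω '' {k | k ≠ i})).isClosed_convexHull (𝕜 := ℝ)) hothers
    obtain ⟨φ, R, hR, rfl⟩ := exists_eq_smul_height f
    have hsφ : s < height φ (ω i) := by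
      have := height_le_norm φ (-ω i)
      rw [map_neg, norm_neg] at this
      linarith
    refine ⟨φ, hsφ, fun k hk _ => lt_of_mul_lt_mul_left ?_ hR⟩
    exact (hlt (ω k) (subset_convexHull ℝ _ ⟨k, hk, rfl⟩)).trans hgt
  · -- The face of maximal height has an extreme point, which can only be `ω i`.
    rintro ⟨φ, -, hφ⟩
    have hcompact : IsCompact (convexHull ℝ (Set.range ω)) :=
      (Set.finite_range ω).isCompact_convexHull ℝ
    have hface : IsExposed ℝ _ ((height φ).toExposed (convexHull ℝ (Set.range ω))) :=
      ContinuousLinearMap.toExposed.isExposed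
    obtain ⟨y, hy, hmax⟩ := hcompact.exists_isMaxOn
      ⟨ω i, subset_convexHull ℝ _ ⟨i, rfl⟩⟩ (height φ).continuous.continuousOn
    obtain ⟨x, hx⟩ := (hface.isCompact hcompact).extremePoints_nonempty ⟨y, hy, hmax⟩
    have hxext := hface.isExtreme.extremePoints_subset_extremePoints hx
    obtain ⟨k, rfl⟩ := extremePoints_convexHull_subset hxext
    obtain rfl : k = i := by
      by_contra hki
      exact (hφ k hki trivial).not_ge (hx.1.2 _ (subset_convexHull ℝ _ ⟨i, rfl⟩))
    exact hxext

lemma vertCount_eq_exposedCount {n : ℕ} {s : ℝ} {ω : Fin n → Plane} (hω : Function.Injective ω)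
    (hs : ∀ i, s < -‖ω i‖) : vertCount ω = exposedCount s ω := by
  classical
  have hvert : Set.extremePoints ℝ (convexHull ℝ (Set.range ω)) =
      ω '' {i | ExposedIn s Set.univ ω i} := by
    ext x
    constructor
    · intro hx
      obtain ⟨i, rfl⟩ := extremePoints_convexHull_subset hx
      exact ⟨i, (mem_extremePoints_convexHull_range_iff hω (hs i)).1 hx, rfl⟩
    · rintro ⟨i, hi, rfl⟩
      exact (mem_extremePoints_convexHull_range_iff hω (hs i)).2 hi
  rw [vertCount, exposedCount, hvert, Nat.card_image_of_injective hω, Nat.card_eq_fintype_card,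
    Fintype.card_subtype]
  rfl

lemma measurableSet_exposedIn [Finite κ] (s : ℝ) {D : Set Plane} (hD : MeasurableSet D) (i : κ) :
    MeasurableSet {ω : κ → Plane | ExposedIn s D ω i} := by
  classical
  have := Fintype.ofFinite κ
  let U (T : Finset κ) : Set (κ → Plane) :=
    {ω | ∃ φ, s < height φ (ω i) ∧ ∀ k ∈ T.erase i, height φ (ω k) < height φ (ω i)}
  have hU (T : Finset κ) : IsOpen (U T) := by
    simp only [U, Set.ofPred_exists, Set.ofPred_and, Set.ofPred_forall]
    refine isOpen_iUnion fun φ => (isOpen_lt (by fun_prop) (by fun_prop)).inter ?_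
    exact isOpen_biInter_finset fun k _ => isOpen_lt (by fun_prop) (by fun_prop)
  have hunion : {ω : κ → Plane | ExposedIn s D ω i} =
      ⋃ T : Finset κ, {ω | ∀ k, ω k ∈ D ↔ k ∈ T} ∩ U T := by
    ext ω
    simp only [U, ExposedIn, Set.mem_ofPred_eq, Set.mem_iUnion, Set.mem_inter_iff,
      Finset.mem_erase]
    constructor
    · rintro ⟨φ, hs, h⟩
      exact ⟨Finset.univ.filter fun k => ω k ∈ D, by simp, φ, hs,
        fun k hk => h k hk.1 (by simpa using hk.2)⟩
    · rintro ⟨T, hT, φ, hs, h⟩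
      exact ⟨φ, hs, fun k hki hkD => h k ⟨hki, (hT k).1 hkD⟩⟩
  rw [hunion]
  refine .iUnion fun T => .inter ?_ (hU T).measurableSet
  simp only [Set.ofPred_forall]
  refine .iInter fun k => measurableSet_setOfPred.2 ?_
  exact (measurableSet_setOfPred.1 (hD.preimage (measurable_pi_apply k))).iff measurable_const

variable [Fintype κ]

lemma measurable_card_filter {Ω : Type*} [MeasurableSpace Ω] {p : Ω → κ → Prop}
    [∀ ω, DecidablePred (p ω)] (hp : ∀ i, MeasurableSet {ω | p ω i}) :
    Measurable fun ω => ((Finset.univ.filter (p ω)).card : ℝ) := by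
  simp only [Finset.card_filter, Nat.cast_sum, Nat.cast_ite, Nat.cast_one, Nat.cast_zero]
  exact Finset.measurable_fun_sum _ fun i _ =>
    Measurable.ite (hp i) measurable_const measurable_const

lemma measurable_exposedCount (s : ℝ) : Measurable (exposedCount s : (κ → Plane) → ℝ) := by
  classical
  exact measurable_card_filter fun i => measurableSet_exposedIn s MeasurableSet.univ i

lemma exposedCount_mem_Icc (s : ℝ) (ω : κ → Plane) :
    exposedCount s ω ∈ Set.Icc (0 : ℝ) (Fintype.card κ) := by
  classical
  refine ⟨Nat.cast_nonneg _, ?_⟩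
  unfold exposedCount
  exact_mod_cast Finset.card_le_univ _

end Exposed

section Blocks

variable {m : ℕ}

/-- The union of the `L` consecutive outer sectors with indices `c, …, c + L - 1`. -/
def block (m : ℕ) (c : ZMod m) (L : ℕ) (r : ℝ) : Set Plane :=
  {x | (∃ i < L, sectorIndex m x = c + i) ∧ r ≤ ‖x‖}

lemma block_eq_biUnion (c : ZMod m) (L : ℕ) (r : ℝ) :
    block m c L r = ⋃ i ∈ Finset.range L, outerSector m (c + i) r := by
  ext x
  simp only [block, outerSector, Set.mem_ofPred_eq, Set.mem_iUnion, Finset.mem_range, exists_prop]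
  tauto

lemma measurableSet_block (c : ZMod m) (L : ℕ) (r : ℝ) : MeasurableSet (block m c L r) := by
  rw [block_eq_biUnion]
  exact Finset.measurableSet_biUnion _ fun i _ => measurableSet_outerSector _ r

lemma measureReal_betaMeasure_block_le {β : ℝ} (hβ : 0 ≤ β) (hm : 0 < m) (c : ZMod m) (L : ℕ)
    {r : ℝ} (hr : 0 < r) (hr1 : r ≤ 1) :
    (betaMeasure β).real (block m c L r) ≤ L * ((1 - r ^ 2) ^ (β + 1) / m) := by
  rw [block_eq_biUnion]
  refine (measureReal_biUnion_finset_le _ _).trans_eq ?_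
  simp only [measureReal_betaMeasure_outerSector hβ hm _ hr hr1, Finset.sum_const,
    Finset.card_range, nsmul_eq_mul]

lemma polarPoint_mem_block (hm : 0 < m) {k : ℤ} {L : ℕ} {r ρ θ : ℝ} (hρ : 0 < ρ) (hr : r ≤ ρ)
    (h1 : k * sectorAngle m ≤ θ) (h2 : θ < (k + L) * sectorAngle m) :
    polarPoint ρ θ ∈ block m k L r := by
  have hw := sectorAngle_pos hm
  set j := ⌊θ / sectorAngle m⌋ with hj
  have hkj : k ≤ j := Int.le_floor.2 ((le_div_iff₀ hw).2 h1)
  have hjL : j < k + L := Int.floor_lt.2 (by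
    push_cast
    rwa [div_lt_iff₀ hw])
  refine ⟨⟨(j - k).toNat, by lia, ?_⟩, by rwa [norm_polarPoint hρ.le]⟩
  rw [sectorIndex_polarPoint_eq hm hρ ((le_div_iff₀ hw).1 (Int.floor_le _))
    ((div_lt_iff₀ hw).1 (Int.lt_floor_add_one _)), ← hj]
  have hcast : (((j - k).toNat : ℤ) : ZMod m) = ((j - k : ℤ) : ZMod m) := by
    rw [Int.toNat_of_nonneg (by lia)]
  push_cast at hcast
  rw [hcast, add_sub_cancel]

end Blocks

/-! ### Localization of exposedness near the boundary of the disk -/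

section Localization

lemma abs_lt_of_lt_mul_cos {ρ t δ : ℝ} (hρ : 0 ≤ ρ) (hρ1 : ρ ≤ 1) (ht : |t| ≤ Real.pi)
    (hδ : 0 ≤ δ) (hδ2 : δ ≤ 1 / 2) (h : 1 - 2 * δ ^ 2 < ρ * Real.cos t) : |t| < Real.pi * δ := by
  have := Real.pi_pos
  have hcos : 0 ≤ Real.cos t := by
    by_contra! hneg
    nlinarith
  have hbound := Real.cos_le_one_sub_mul_cos_sq ht
  have hsq : 2 / Real.pi ^ 2 * t ^ 2 < 2 * δ ^ 2 := by nlinarith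
  rw [div_mul_eq_mul_div, div_lt_iff₀ (by positivity)] at hsq
  exact abs_lt_of_sq_lt_sq (by linarith) (by positivity)

lemma exists_polarPoint_eq_of_lt_height {x : Plane} {φ δ : ℝ} (hx : ‖x‖ ≤ 1) (hδ : 0 ≤ δ)
    (hδ2 : δ ≤ 1 / 2) (h : 1 - 2 * δ ^ 2 < height φ x) :
    ∃ θ, x = polarPoint ‖x‖ θ ∧ |φ - θ| < Real.pi * δ := by
  obtain ⟨θ, hθ, hπ⟩ := exists_polarPoint_eq_of_abs_sub_le_pi x φ
  rw [hθ, height_polarPoint] at h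
  exact ⟨θ, hθ, abs_lt_of_lt_mul_cos (norm_nonneg x) hx hπ hδ hδ2 h⟩

variable {K : ℕ}

/-- The threshold height that, up to events of small probability, every vertex exceeds in its
exposing directions. -/
noncomputable def nearBoundary (K : ℕ) : ℝ :=
  1 - 2 * sectorAngle K ^ 2

/-- The neighbourhood of the outer sector `c` that contains all points competing with a point of
this sector for being exposed. -/
noncomputable def cell (K : ℕ) (c : ZMod K) : Set Plane :=
  block K (c - 7) 15 (nearBoundary K)

lemma polarPoint_angle_eq_of_sectorIndex (hK : 0 < K) {φ : ℝ} :
    ∃ c : ZMod K, ∀ x : Plane, sectorIndex K x = c →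
      ∃ θ, x = polarPoint ‖x‖ θ ∧ |φ - θ| ≤ sectorAngle K := by
  have hw := sectorAngle_pos hK
  refine ⟨(⌊φ / sectorAngle K⌋ : ℤ), fun x hx => ?_⟩
  obtain ⟨θ, hθ, h1, h2⟩ := exists_polarPoint_of_sectorIndex_eq hK hx
  have h3 := (le_div_iff₀ hw).1 (Int.floor_le (φ / sectorAngle K))
  have h4 := (div_lt_iff₀ hw).1 (Int.lt_floor_add_one (φ / sectorAngle K))
  exact ⟨θ, hθ, abs_le.2 ⟨by linarith, by linarith⟩⟩

lemma mem_cell_of_lt_height (hK : 0 < K) (hw : sectorAngle K ≤ 1 / 2) {x y : Plane} {φ : ℝ}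
    (hx : ‖x‖ ≤ 1) (hy : ‖y‖ ≤ 1) (hxφ : nearBoundary K < height φ x)
    (hyφ : nearBoundary K < height φ y) : y ∈ cell K (sectorIndex K x) := by
  have hw0 := sectorAngle_pos hK
  have hy0 : nearBoundary K < ‖y‖ := hyφ.trans_le (height_le_norm φ y)
  obtain ⟨k, hk⟩ := ZMod.intCast_surjective (sectorIndex K x)
  obtain ⟨θ, hθ, h1, h2⟩ := exists_polarPoint_of_sectorIndex_eq hK hk.symm
  obtain ⟨l, hl⟩ := exists_int_abs_add_mul_two_pi_sub_le_pi φ θ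
  rw [← height_add_int_mul_two_pi φ l] at hxφ hyφ
  set ψ := φ + l * (2 * Real.pi)
  rw [hθ, height_polarPoint] at hxφ
  have hxψ := abs_lt.1 (abs_lt_of_lt_mul_cos (norm_nonneg x) hx hl hw0.le hw hxφ)
  obtain ⟨θ', hθ', hyψ⟩ := exists_polarPoint_eq_of_lt_height hy hw0.le hw hyφ
  rw [abs_lt] at hyψ
  have : Real.pi * sectorAngle K ≤ 7 / 2 * sectorAngle K := by
    nlinarith [Real.pi_lt_d2]
  have hcast : ((k : ZMod K) - 7) = ((k - 7 : ℤ) : ZMod K) := by push_cast; rfl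
  rw [cell, ← hk, hcast, hθ']
  refine polarPoint_mem_block hK (lt_of_le_of_lt ?_ hy0) hy0.le ?_ ?_
  · unfold nearBoundary
    nlinarith
  all_goals push_cast; linarith

lemma nearBoundary_lt_height (hK : 0 < K) (hw : sectorAngle K ≤ 1 / 2) {ρ t : ℝ}
    (hρ : 1 - sectorAngle K ^ 2 ≤ ρ) (ht : |t| ≤ sectorAngle K) :
    nearBoundary K < ρ * Real.cos t := by
  have hw0 := sectorAngle_pos hK
  have hcos := Real.one_sub_sq_div_two_le_cos (x := t)
  have ht2 : t ^ 2 ≤ sectorAngle K ^ 2 := sq_le_sq.2 (by rwa [abs_of_pos hw0])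
  have hw2 : sectorAngle K ^ 2 ≤ 1 / 4 := by nlinarith
  calc nearBoundary K < (1 - sectorAngle K ^ 2) * (1 - sectorAngle K ^ 2 / 2) := by
        unfold nearBoundary
        nlinarith
    _ ≤ ρ * Real.cos t := by
        gcongr <;> linarith

variable {κ : Type*}

/-- Every sector contains a point at distance at most `(sectorAngle K)²` from the unit circle. -/
def Occupied (K : ℕ) (ω : κ → Plane) : Prop :=
  ∀ c : ZMod K, ∃ k, ω k ∈ outerSector K c (1 - sectorAngle K ^ 2)

lemma Occupied.nearBoundary_lt_height (hK : 0 < K) (hw : sectorAngle K ≤ 1 / 2) {ω : κ → Plane}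
    (hω : Occupied K ω) {i : κ} {φ : ℝ} (hi : ∀ k ≠ i, height φ (ω k) < height φ (ω i)) :
    nearBoundary K < height φ (ω i) := by
  obtain ⟨c, hc⟩ := polarPoint_angle_eq_of_sectorIndex hK (φ := φ)
  obtain ⟨k, hkc, hk⟩ := hω c
  obtain ⟨θ, hθ, hφθ⟩ := hc _ hkc
  have hki : height φ (ω k) ≤ height φ (ω i) := by
    rcases eq_or_ne k i with rfl | hne
    · exact le_rfl
    · exact (hi k hne).le
  refine lt_of_lt_of_le ?_ hki
  rw [hθ, height_polarPoint]
  exact _root_.nearBoundary_lt_height hK hw hk hφθ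

lemma Occupied.exposedIn_cell_iff (hK : 0 < K) (hw : sectorAngle K ≤ 1 / 2) {ω : κ → Plane}
    (hω : Occupied K ω) (hω1 : ∀ i, ‖ω i‖ ≤ 1) {s : ℝ} (hs : s ≤ nearBoundary K) (i : κ) :
    ExposedIn (nearBoundary K) (cell K (sectorIndex K (ω i))) ω i ↔
      ExposedIn s Set.univ ω i := by
  constructor
  · rintro ⟨φ, hiφ, hi⟩
    refine ⟨φ, hs.trans_lt hiφ, fun k hk _ => ?_⟩
    by_contra! hle
    exact (hi k hk (mem_cell_of_lt_height hK hw (hω1 i) (hω1 k) hiφ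
      (hiφ.trans_le hle))).not_ge hle
  · rintro ⟨φ, -, hi⟩
    exact ⟨φ, hω.nearBoundary_lt_height hK hw fun k hk => hi k hk trivial,
      fun k hk _ => hi k hk trivial⟩

lemma mem_cell_sectorIndex {x : Plane} (hx : nearBoundary K ≤ ‖x‖) :
    x ∈ cell K (sectorIndex K x) :=
  ⟨⟨7, by norm_num, by simp⟩, hx⟩

lemma exposedIn_congr {s : ℝ} {D : Set Plane} {ω ω' : κ → Plane}
    (h : ∀ i, ω i = ω' i ∨ (ω i ∉ D ∧ ω' i ∉ D)) {i : κ} (hi : ω i = ω' i) :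
    ExposedIn s D ω i ↔ ExposedIn s D ω' i := by
  refine exists_congr fun φ => ?_
  rw [hi]
  refine and_congr_right fun _ => forall₂_congr fun k _ => ?_
  rcases h k with hk | ⟨hk, hk'⟩
  · rw [hk]
  · simp only [hk, hk', false_imp_iff]

variable [Fintype κ]

open Classical in
/-- The number of points lying in `S`. -/
noncomputable def pointCount (S : Set Plane) (ω : κ → Plane) : ℝ :=
  (Finset.univ.filter fun i => ω i ∈ S).card

open Classical in
/-- The number of points of sector `c` that are exposed among the points of the cell around it,
truncated to `0` when this cell contains more than `B` points. The truncation makes the variable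
bounded by `B`. -/
noncomputable def cellCount (K : ℕ) (B : ℝ) (c : ZMod K) (ω : κ → Plane) : ℝ :=
  if pointCount (cell K c) ω ≤ B then
    (Finset.univ.filter fun i => sectorIndex K (ω i) = c ∧
      ExposedIn (nearBoundary K) (cell K c) ω i).card
  else 0

/-- The configurations on which the vertex count is the sum of the local counts `cellCount`. -/
def goodEvent (κ : Type*) [Fintype κ] (K : ℕ) (B : ℝ) : Set (κ → Plane) :=
  {ω | Occupied K ω ∧ ∀ c : ZMod K, pointCount (cell K c) ω ≤ B}

lemma exposedCount_eq_sum_cellCount [NeZero K] (hw : sectorAngle K ≤ 1 / 2) {B s : ℝ}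
    (hs : s ≤ nearBoundary K) {ω : κ → Plane} (hω : ω ∈ goodEvent κ K B)
    (hω1 : ∀ i, ‖ω i‖ ≤ 1) : exposedCount s ω = ∑ c : ZMod K, cellCount K B c ω := by
  classical
  have hiff := hω.1.exposedIn_cell_iff (NeZero.pos K) hw hω1 hs
  rw [exposedCount, Finset.card_eq_sum_card_fiberwise (f := fun i => sectorIndex K (ω i))
    (t := Finset.univ) (fun _ _ => Finset.mem_coe.2 (Finset.mem_univ _)), Nat.cast_sum]
  refine Finset.sum_congr rfl fun c _ => ?_
  rw [cellCount, if_pos (hω.2 c), Finset.filter_filter]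
  congr 2
  refine Finset.filter_congr fun i _ => ?_
  rw [and_comm]
  refine and_congr_right fun hc => ?_
  rw [← hiff, hc]

lemma localOn_pointCount (D : Set Plane) : LocalOn D (pointCount D : (κ → Plane) → ℝ) := by
  classical
  intro ω ω' h
  unfold pointCount
  congr 2
  refine Finset.filter_congr fun i _ => ?_
  rcases h i with hi | ⟨hi, hi'⟩
  · rw [hi]
  · simp only [hi, hi']

lemma localOn_cellCount (K : ℕ) (B : ℝ) (c : ZMod K) :
    LocalOn (cell K c) (cellCount K B c : (κ → Plane) → ℝ) := by
  classical
  intro ω ω' h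
  unfold cellCount
  rw [localOn_pointCount _ ω ω' h]
  congr 3
  have hnot {ω : κ → Plane} {i : κ} (hi : ω i ∉ cell K c) : ¬(sectorIndex K (ω i) = c ∧
      ExposedIn (nearBoundary K) (cell K c) ω i) := by
    rintro ⟨rfl, φ, hφ, -⟩
    exact hi (mem_cell_sectorIndex (hφ.le.trans (height_le_norm φ _)))
  refine Finset.filter_congr fun i _ => ?_
  rcases h i with hi | ⟨hi, hi'⟩
  · rw [exposedIn_congr h hi, hi]
  · simp only [hnot hi, hnot hi']

lemma cellCount_mem_Icc {B : ℝ} (hB : 0 ≤ B) (c : ZMod K) (ω : κ → Plane) :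
    cellCount K B c ω ∈ Set.Icc 0 B := by
  classical
  unfold cellCount
  split_ifs with h
  · refine ⟨Nat.cast_nonneg _, le_trans ?_ h⟩
    unfold pointCount
    gcongr with i
    rintro ⟨rfl, φ, hφ, -⟩
    exact mem_cell_sectorIndex (hφ.le.trans (height_le_norm φ _))
  · exact ⟨le_rfl, hB⟩

lemma pointCount_mem_Icc (S : Set Plane) (ω : κ → Plane) :
    pointCount S ω ∈ Set.Icc 0 (Fintype.card κ : ℝ) := by
  classical
  refine ⟨Nat.cast_nonneg _, ?_⟩
  unfold pointCount
  exact_mod_cast Finset.card_le_univ _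

lemma measurable_pointCount {S : Set Plane} (hS : MeasurableSet S) :
    Measurable (pointCount S : (κ → Plane) → ℝ) := by
  classical
  exact measurable_card_filter fun i => hS.preimage (measurable_pi_apply i)

lemma measurableSet_cell (c : ZMod K) : MeasurableSet (cell K c) :=
  measurableSet_block _ _ _

lemma measurable_cellCount (B : ℝ) (c : ZMod K) :
    Measurable (cellCount K B c : (κ → Plane) → ℝ) := by
  classical
  have hcap : MeasurableSet {ω : κ → Plane | pointCount (cell K c) ω ≤ B} :=
    measurableSet_le (measurable_pointCount (measurableSet_cell c)) measurable_const
  have hcount : Measurable fun ω : κ → Plane => ((Finset.univ.filter fun i =>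
      sectorIndex K (ω i) = c ∧ ExposedIn (nearBoundary K) (cell K c) ω i).card : ℝ) :=
    measurable_card_filter fun i =>
      ((measurableSet_sectorIndex_eq c).preimage (measurable_pi_apply i)).inter
        (measurableSet_exposedIn _ (measurableSet_cell c) i)
  exact Measurable.ite hcap hcount measurable_const

lemma card_overlap_cell_le [NeZero K] (c : ZMod K) : (overlap (cell K) c).card ≤ 29 := by
  classical
  have hsub : overlap (cell K) c ⊆ (Finset.Icc (-14) 14).image fun z : ℤ => c + z := by
    intro c' hc'
    obtain ⟨x, ⟨⟨i, hi, hxi⟩, -⟩, ⟨j, hj, hxj⟩, -⟩ := Set.not_disjoint_iff.1 (mem_overlap.1 hc')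
    refine Finset.mem_image.2 ⟨i - j, Finset.mem_Icc.2 ⟨by lia, by lia⟩, ?_⟩
    rw [hxi] at hxj
    push_cast
    linear_combination hxj
  exact (Finset.card_le_card hsub).trans (Finset.card_image_le.trans (by simp))

end Localization

section Occupancy

variable {κ : Type*} [Fintype κ]

lemma measureReal_pi_forall_notMem_le {E : Type*} [MeasurableSpace E] (μ : Measure E)
    [IsProbabilityMeasure μ] {S : Set E} (hS : MeasurableSet S) :
    (Measure.pi fun _ : κ => μ).real {ω | ∀ i, ω i ∉ S} ≤
      Real.exp (-(Fintype.card κ * μ.real S)) := by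
  have hpi : {ω : κ → E | ∀ i, ω i ∉ S} = Set.univ.pi fun _ => Sᶜ := by
    ext
    simp
  rw [hpi, measureReal_def, Measure.pi_pi, ENNReal.toReal_prod, Finset.prod_const,
    Finset.card_univ, ← measureReal_def, probReal_compl_eq_one_sub hS, ← mul_neg,
    Real.exp_nat_mul]
  have hle : μ.real S ≤ 1 := measureReal_le_one
  exact pow_le_pow_left₀ (by linarith) (by linarith [Real.add_one_le_exp (-(μ.real S))]) _

lemma exp_pointCount (S : Set Plane) (ω : κ → Plane) :
    Real.exp (pointCount S ω) = ∏ i, Real.exp (S.indicator 1 (ω i)) := by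
  classical
  rw [← Real.exp_sum, pointCount, Finset.card_filter]
  push_cast
  rfl

lemma measureReal_pi_lt_pointCount_le (μ : Measure Plane) [IsProbabilityMeasure μ]
    {S : Set Plane} (hS : MeasurableSet S) (B : ℝ) :
    (Measure.pi fun _ : κ => μ).real {ω | B < pointCount S ω} ≤
      Real.exp (2 * (Fintype.card κ * μ.real S) - B) := by
  have hlin (x : Plane) : Real.exp (S.indicator 1 x) = 1 + (Real.exp 1 - 1) * S.indicator 1 x := by
    by_cases hx : x ∈ S <;> simp [hx]
  have hone : ∫ x, Real.exp (S.indicator 1 x) ∂μ = 1 + (Real.exp 1 - 1) * μ.real S := by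
    simp only [hlin]
    rw [integral_add (integrable_const _) (((integrable_const 1).indicator hS).const_mul _),
      integral_const_mul, integral_indicator_one hS, integral_const, probReal_univ, one_smul]
  have hone_le : ∫ x, Real.exp (S.indicator 1 x) ∂μ ≤ Real.exp (2 * μ.real S) := by
    rw [hone]
    have := Real.add_one_le_exp (2 * μ.real S)
    nlinarith [Real.exp_one_lt_d9, measureReal_nonneg (μ := μ) (s := S)]
  have hmgf : ProbabilityTheory.mgf (pointCount S) (Measure.pi fun _ : κ => μ) 1 ≤
      Real.exp (2 * (Fintype.card κ * μ.real S)) := by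
    simp only [ProbabilityTheory.mgf, one_mul, exp_pointCount]
    rw [integral_fintype_prod_eq_pow (f := fun x => Real.exp (S.indicator 1 x)),
      mul_left_comm, Real.exp_nat_mul]
    exact pow_le_pow_left₀ (integral_nonneg fun x => (Real.exp_pos _).le) hone_le _
  have hint := ProbabilityTheory.integrable_exp_mul_of_mem_Icc (t := 1)
    (measurable_pointCount hS).aemeasurable
    (.of_forall (pointCount_mem_Icc S) : ∀ᵐ ω ∂Measure.pi fun _ : κ => μ, _)
  calc (Measure.pi fun _ : κ => μ).real {ω | B < pointCount S ω}
    _ ≤ (Measure.pi fun _ : κ => μ).real {ω | B ≤ pointCount S ω} :=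
      measureReal_mono fun ω (hω : B < _) => hω.le
    _ ≤ Real.exp (-1 * B) * Real.exp (2 * (Fintype.card κ * μ.real S)) :=
      (ProbabilityTheory.measure_ge_le_exp_mul_mgf B zero_le_one hint).trans (by gcongr)
    _ = Real.exp (2 * (Fintype.card κ * μ.real S) - B) := by
      rw [← Real.exp_add]
      ring_nf

variable {K : ℕ} {B : ℝ}

lemma compl_goodEvent (K : ℕ) (B : ℝ) : (goodEvent κ K B)ᶜ =
    (⋃ c : ZMod K, {ω | ∀ k, ω k ∉ outerSector K c (1 - sectorAngle K ^ 2)}) ∪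
      ⋃ c : ZMod K, {ω | B < pointCount (cell K c) ω} := by
  ext ω
  simp only [goodEvent, Occupied, Set.mem_compl_iff, Set.mem_ofPred_eq, Set.mem_union,
    Set.mem_iUnion, not_and_or, not_forall, not_exists, not_le]

lemma measurableSet_goodEvent [NeZero K] (B : ℝ) : MeasurableSet (goodEvent κ K B) := by
  simp only [goodEvent, Occupied, Set.ofPred_and, Set.ofPred_forall, Set.ofPred_exists]
  refine .inter (.iInter fun c => .iUnion fun k => ?_) (.iInter fun c => ?_)
  · exact (measurableSet_outerSector c _).preimage (measurable_pi_apply k)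
  · exact measurableSet_le (measurable_pointCount (measurableSet_cell c)) measurable_const

lemma measureReal_pi_compl_goodEvent_le [NeZero K] (μ : Measure Plane) [IsProbabilityMeasure μ]
    {p₁ p₂ : ℝ} (h₁ : ∀ c : ZMod K, p₁ ≤ μ.real (outerSector K c (1 - sectorAngle K ^ 2)))
    (h₂ : ∀ c : ZMod K, μ.real (cell K c) ≤ p₂) :
    (Measure.pi fun _ : κ => μ).real (goodEvent κ K B)ᶜ ≤
      K * Real.exp (-(Fintype.card κ * p₁)) + K * Real.exp (2 * (Fintype.card κ * p₂) - B) := by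
  have hsum (a : ℝ) : K * a = ∑ _c : ZMod K, a := by simp
  rw [compl_goodEvent, hsum, hsum]
  refine (measureReal_union_le _ _).trans (add_le_add ?_ ?_) <;>
    refine (measureReal_iUnion_fintype_le _).trans (Finset.sum_le_sum fun c _ => ?_)
  · refine (measureReal_pi_forall_notMem_le μ (measurableSet_outerSector c _)).trans ?_
    gcongr
    exact h₁ c
  · refine (measureReal_pi_lt_pointCount_le μ (measurableSet_cell c) B).trans ?_
    gcongr
    exact h₂ c

lemma inv_sq_rpow_div {x : ℝ} (hx : 0 < x) (β : ℝ) :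
    (x ^ 2)⁻¹ ^ (β + 1) / x = (x ^ (2 * β + 3))⁻¹ := by
  have hexp : 2 * β + 3 = (2 : ℕ) * (β + 1) + 1 := by push_cast; ring
  rw [hexp, Real.rpow_add_one hx.ne', Real.rpow_mul hx.le, Real.rpow_natCast,
    Real.inv_rpow (by positivity), mul_inv, div_eq_mul_inv]

lemma inv_le_sectorAngle (hK : 0 < K) : (K : ℝ)⁻¹ ≤ sectorAngle K := by
  have : (0 : ℝ) < K := by exact_mod_cast hK
  rw [sectorAngle, div_eq_mul_inv]
  exact le_mul_of_one_le_left (by positivity) (by linarith [Real.pi_gt_three])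

lemma inv_rpow_le_measureReal_outerSector_sdiff {β : ℝ} (hβ : 0 ≤ β) (hK : 0 < K) (c : ZMod K)
    {r s : ℝ} (hr : 0 < r) (hs : 0 < s) (hs1 : s ≤ 1) (hrs : sectorAngle K ^ 2 ≤ s ^ 2 - r ^ 2) :
    ((K : ℝ) ^ (2 * β + 3))⁻¹ ≤
      (betaMeasure β).real (outerSector K c r \ {x | s ≤ ‖x‖}) := by
  have := isProbabilityMeasure_betaMeasure hβ
  have hK' : (0 : ℝ) < K := by exact_mod_cast hK
  have := sectorAngle_pos hK
  have hrs' : r ≤ s := by nlinarith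
  have hring : outerSector K c r \ {x | s ≤ ‖x‖} = outerSector K c r \ outerSector K c s :=
    Set.ext fun x => and_congr_right fun hx => not_congr (and_iff_right hx.1).symm
  have hsub : outerSector K c s ⊆ outerSector K c r := fun x hx => ⟨hx.1, hrs'.trans hx.2⟩
  rw [hring, measureReal_sdiff hsub (measurableSet_outerSector c s),
    measureReal_betaMeasure_outerSector hβ hK c hr (hrs'.trans hs1),
    measureReal_betaMeasure_outerSector hβ hK c hs hs1, ← sub_div, ← inv_sq_rpow_div hK',
    ← inv_pow]
  gcongr
  rw [le_sub_iff_add_le]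
  have hKw := inv_le_sectorAngle hK
  calc ((K : ℝ)⁻¹ ^ 2) ^ (β + 1) + (1 - s ^ 2) ^ (β + 1)
    _ ≤ (sectorAngle K ^ 2) ^ (β + 1) + (1 - s ^ 2) ^ (β + 1) := by gcongr
    _ ≤ (sectorAngle K ^ 2 + (1 - s ^ 2)) ^ (β + 1) :=
      Real.add_rpow_le_rpow_add (by positivity) (by nlinarith) (by linarith)
    _ ≤ (1 - r ^ 2) ^ (β + 1) := by
      gcongr
      · nlinarith
      · linarith

lemma inv_rpow_le_measureReal_outerSector {β : ℝ} (hβ : 0 ≤ β) (hK : 0 < K) (c : ZMod K)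
    {r : ℝ} (hr : 0 < r) (hrw : sectorAngle K ^ 2 ≤ 1 - r ^ 2) :
    ((K : ℝ) ^ (2 * β + 3))⁻¹ ≤ (betaMeasure β).real (outerSector K c r) := by
  have := isProbabilityMeasure_betaMeasure hβ
  exact (inv_rpow_le_measureReal_outerSector_sdiff hβ hK c hr one_pos le_rfl
    (by linarith)).trans (measureReal_mono Set.sdiff_subset)

lemma measureReal_betaMeasure_block_le_inv_rpow {β : ℝ} (hβ : 0 ≤ β) (hK : 0 < K) (c : ZMod K)
    (L : ℕ) {a : ℝ} (ha : 0 ≤ a) (haw : a * sectorAngle K ^ 2 < 1) :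
    (betaMeasure β).real (block K c L (1 - a * sectorAngle K ^ 2)) ≤
      L * (8 * Real.pi ^ 2 * a) ^ (β + 1) * ((K : ℝ) ^ (2 * β + 3))⁻¹ := by
  have hK' : (0 : ℝ) < K := by exact_mod_cast hK
  have haw0 : 0 ≤ a * sectorAngle K ^ 2 := by positivity
  have := Real.pi_pos
  refine (measureReal_betaMeasure_block_le hβ hK c L (by linarith) (by linarith)).trans ?_
  rw [mul_assoc]
  gcongr
  calc (1 - (1 - a * sectorAngle K ^ 2) ^ 2) ^ (β + 1) / K
    _ ≤ (8 * Real.pi ^ 2 * a * ((K : ℝ) ^ 2)⁻¹) ^ (β + 1) / K := by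
      have hsq : 8 * Real.pi ^ 2 * a * ((K : ℝ) ^ 2)⁻¹ = 2 * (a * sectorAngle K ^ 2) := by
        rw [sectorAngle]
        field_simp
        ring
      rw [hsq]
      gcongr <;> nlinarith
    _ = (8 * Real.pi ^ 2 * a) ^ (β + 1) * ((K : ℝ) ^ (2 * β + 3))⁻¹ := by
      rw [Real.mul_rpow (by positivity) (by positivity), mul_div_assoc, inv_sq_rpow_div hK']

end Occupancy

section Trigonometry

lemma cos_le_of_le_abs {a t : ℝ} (ha : 0 ≤ a) (ha1 : a ≤ 1) (hat : a ≤ |t|) (ht : |t| ≤ Real.pi) :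
    Real.cos t ≤ 1 - 11 / 25 * a ^ 2 := by
  have hmono : Real.cos t ≤ Real.cos a := by
    rw [← Real.cos_abs t]
    exact Real.cos_le_cos_of_nonneg_of_le_pi ha ht hat
  have hbound := (abs_le.1 (Real.cos_bound (abs_le.2 ⟨by linarith, ha1⟩))).2
  rw [abs_of_nonneg ha] at hbound
  have hfour : a ^ 4 ≤ a ^ 2 := pow_le_pow_of_le_one ha ha1 (by norm_num)
  nlinarith [sq_nonneg a]

lemma mul_lt_of_le_of_mul_lt {r r' y h : ℝ} (hr : 0 ≤ r) (hrr : r ≤ r') (hh : 0 < h)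
    (hy : r' * y < h) : r * y < h := by
  rcases le_or_gt y 0 with hneg | hpos
  · exact (mul_nonpos_of_nonneg_of_nonpos hr hneg).trans_lt hh
  · exact (mul_le_mul_of_nonneg_right hrr hpos.le).trans_lt hy

lemma mul_cos_half_add_lt {r ρ x u v : ℝ} (hu : 0 < u) (hv : 0 < v) (huv : u + v < Real.pi)
    (hx : 0 < Real.cos x) (h₁ : r * Real.cos (x + u) < ρ * Real.cos x)
    (h₂ : r * Real.cos (x - v) < ρ * Real.cos x) :
    r * Real.cos ((u + v) / 2) < ρ * Real.cos ((u - v) / 2) := by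
  have hsu := Real.sin_pos_of_pos_of_lt_pi hu (by linarith)
  have hsv := Real.sin_pos_of_pos_of_lt_pi hv (by linarith)
  have hs := Real.sin_pos_of_pos_of_lt_pi (half_pos (add_pos hu hv)) (by linarith)
  have hcomb : Real.sin v * Real.cos (x + u) + Real.sin u * Real.cos (x - v) =
      Real.sin (u + v) * Real.cos x := by
    rw [Real.cos_add, Real.cos_sub, Real.sin_add]
    ring
  have hlt : r * Real.sin (u + v) < ρ * (Real.sin u + Real.sin v) := by
    refine lt_of_mul_lt_mul_right ?_ hx.le
    calc r * Real.sin (u + v) * Real.cos x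
      _ = Real.sin v * (r * Real.cos (x + u)) + Real.sin u * (r * Real.cos (x - v)) := by
          rw [mul_assoc, ← hcomb]
          ring
      _ < Real.sin v * (ρ * Real.cos x) + Real.sin u * (ρ * Real.cos x) := by gcongr
      _ = ρ * (Real.sin u + Real.sin v) * Real.cos x := by ring
  have hdouble : Real.sin (u + v) = 2 * Real.sin ((u + v) / 2) * Real.cos ((u + v) / 2) := by
    rw [← Real.sin_two_mul]
    ring_nf
  have hsum : Real.sin u + Real.sin v = 2 * Real.sin ((u + v) / 2) * Real.cos ((u - v) / 2) := by
    have hu' : u = (u + v) / 2 + (u - v) / 2 := by ring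
    have hv' : v = (u + v) / 2 - (u - v) / 2 := by ring
    conv_lhs => rw [hu', hv', Real.sin_add, Real.sin_sub]
    ring_nf
  rw [hdouble, hsum] at hlt
  refine lt_of_mul_lt_mul_left ?_ (by positivity : 0 ≤ 2 * Real.sin ((u + v) / 2))
  linarith

lemma lt_half_of_cos_sub_lt {x v : ℝ} (hx : x ≤ Real.pi) (hv : 0 < v)
    (h : Real.cos (x - v) < Real.cos x) : x < v / 2 := by
  by_contra! hvx
  rw [← Real.cos_abs (x - v)] at h
  exact h.not_ge (Real.cos_le_cos_of_nonneg_of_le_pi (abs_nonneg _) hx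
    (abs_le.2 ⟨by linarith, by linarith⟩))

lemma abs_lt_and_lt_of_mul_cos_lt {r ρ x u v w h : ℝ} (hw0 : 0 < w) (hw : w ≤ 1 / 100000)
    (hr : 1 - 100 * w ^ 2 ≤ r) (hρ : 0 ≤ ρ) (hρr : ρ ≤ r) (hx : |x| ≤ Real.pi) (hu : 0 < u)
    (hv : 0 < v) (huw : u ≤ 101 * w) (hvw : v ≤ 101 * w) (hh : 0 < h)
    (h₁ : r * Real.cos (x + u) < h) (h₂ : r * Real.cos (x - v) < h) (hc : h ≤ ρ * Real.cos x) :
    |x| < 51 * w ∧ 1 - 2 * (52 * w) ^ 2 < h := by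
  have hw2 : w ^ 2 ≤ 1 / 10000000000 := by nlinarith
  have hr0 : 0 < r := by linarith
  have hcos : 0 < Real.cos x := pos_of_mul_pos_right (hh.trans_le hc) hρ
  have hcr : h ≤ r * Real.cos x := hc.trans (by gcongr)
  have hxv : x < v / 2 := lt_half_of_cos_sub_lt (abs_le.1 hx).2 hv
    (lt_of_mul_lt_mul_left (h₂.trans_le hcr) hr0.le)
  have hxu : -x < u / 2 := by
    refine lt_half_of_cos_sub_lt (by linarith [(abs_le.1 hx).1]) hu ?_
    rw [← neg_add', Real.cos_neg, Real.cos_neg]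
    exact lt_of_mul_lt_mul_left (h₁.trans_le hcr) hr0.le
  have hnear : ∀ y, |y| ≤ 101 * w → r * Real.cos y < h → 1 - 2 * (52 * w) ^ 2 < h := by
    intro y hy hyh
    have hcosy : 1 - (101 * w) ^ 2 / 2 ≤ Real.cos y := by
      have hsq : y ^ 2 ≤ (101 * w) ^ 2 := sq_le_sq' (abs_le.1 hy).1 (abs_le.1 hy).2
      linarith [Real.one_sub_sq_div_two_le_cos (x := y)]
    nlinarith
  refine ⟨abs_lt.2 ⟨by linarith, by linarith⟩, ?_⟩
  rcases le_total 0 x with hx0 | hx0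
  · exact hnear (x - v) (abs_le.2 ⟨by linarith, by linarith⟩) h₂
  · exact hnear (x + u) (abs_le.2 ⟨by linarith, by linarith⟩) h₁

end Trigonometry

section SwapGeometry

/-- The angular positions, in units of the sector angle, of the three marked points of a swap
configuration. The first two (`0` and `1`) flank the third one (`2`), which is the one moved. -/
def swapSector : Fin 3 → ℤ := ![400, 600, 500]

@[simp] lemma swapSector_zero : swapSector 0 = 400 := rfl

@[simp] lemma swapSector_one : swapSector 1 = 600 := rfl

@[simp] lemma swapSector_two : swapSector 2 = 500 := rfl

/-- The cell of the marked point `t` in the swap configuration of the block starting at sector `j`.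
The middle point is at depth about `3000 * sectorAngle m ^ 2`, above the chord through the flanking
points, which has depth about `100 ^ 2 / 2 * sectorAngle m ^ 2` there. -/
noncomputable def swapCell (m : ℕ) (j : ℤ) : Fin 3 → Set Plane :=
  ![outerSector m ((j + 400 : ℤ) : ZMod m) (1 - 100 * sectorAngle m ^ 2),
    outerSector m ((j + 600 : ℤ) : ZMod m) (1 - 100 * sectorAngle m ^ 2),
    outerSector m ((j + 500 : ℤ) : ZMod m) (1 - 3100 * sectorAngle m ^ 2) \
      {x | 1 - 2900 * sectorAngle m ^ 2 ≤ ‖x‖}]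

/-- The block of `1000` sectors from `j` on that contains a swap configuration and no other points.
The depth is such that caps cut off by admissible supporting lines stay inside. -/
noncomputable def swapBlock (m : ℕ) (j : ℤ) : Set Plane :=
  block m (j : ZMod m) 1000 (1 - 2 * (52 * sectorAngle m) ^ 2)

/-- The reflection of the block that carries the middle point of a swap configuration to a position
`10` sectors from a flanking point. There the chord through the flanking points has depth about
`(100 ^ 2 - 90 ^ 2) / 2 * sectorAngle m ^ 2`, so the middle point comes to lie below it. -/
noncomputable def swapReflect (m : ℕ) (j : ℤ) : Plane ≃ₗᵢ[ℝ] Plane :=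
  reflect ((2 * j + 1091) * sectorAngle m)

variable {m : ℕ} {j : ℤ}

lemma sectorIndex_of_mem_swapCell {t : Fin 3} {x : Plane} (hx : x ∈ swapCell m j t) :
    sectorIndex m x = ((j + swapSector t : ℤ) : ZMod m) := by
  fin_cases t
  · exact hx.1
  · exact hx.1
  · exact hx.1.1

lemma exists_polarPoint_of_mem_swapCell (hm : 0 < m) {t : Fin 3} {x : Plane}
    (hx : x ∈ swapCell m j t) : ∃ θ, x = polarPoint ‖x‖ θ ∧
      (j + swapSector t) * sectorAngle m ≤ θ ∧ θ < (j + swapSector t + 1) * sectorAngle m := by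
  simpa only [Int.cast_add] using
    exists_polarPoint_of_sectorIndex_eq hm (sectorIndex_of_mem_swapCell hx)

lemma le_norm_of_mem_swapCell {t : Fin 3} {x : Plane} (hx : x ∈ swapCell m j t) :
    1 - 3100 * sectorAngle m ^ 2 ≤ ‖x‖ := by
  have hsq := sq_nonneg (sectorAngle m)
  fin_cases t
  · exact le_trans (by linarith) hx.2
  · exact le_trans (by linarith) hx.2
  · exact hx.1.2

variable (hm : 0 < m) (hw : sectorAngle m ≤ 1 / 100000)
include hm hw

lemma height_lt_of_far {ρ θ φ : ℝ} (hρ : 0 ≤ ρ) (hρ1 : ρ ≤ 1)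
    (hfar : 99 * sectorAngle m ≤ |φ - θ|) (hπ : |φ - θ| ≤ Real.pi) :
    height φ (polarPoint ρ θ) < 1 - 3100 * sectorAngle m ^ 2 := by
  have := sectorAngle_pos hm
  have hcos := cos_le_of_le_abs (by positivity) (by linarith) hfar hπ
  have hw2 : sectorAngle m ^ 2 ≤ 1 / 10000000000 := by nlinarith
  rw [height_polarPoint]
  nlinarith

lemma height_lt_of_mem_swapCell {s t : Fin 3} (hst : s ≠ t) {x : Plane} (hx1 : ‖x‖ ≤ 1)
    (hx : x ∈ swapCell m j s) {φ : ℝ} (h1 : (j + swapSector t) * sectorAngle m ≤ φ)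
    (h2 : φ < (j + swapSector t + 1) * sectorAngle m) :
    height φ x < 1 - 3100 * sectorAngle m ^ 2 := by
  have := sectorAngle_pos hm
  obtain ⟨θ, hθ, hθ1, hθ2⟩ := exists_polarPoint_of_mem_swapCell hm hx
  have hlow : (100 : ℝ) ≤ |(swapSector t - swapSector s : ℝ)| := by
    fin_cases s <;> fin_cases t <;> first | exact absurd rfl hst | norm_num [swapSector]
  have hupp : |(swapSector t - swapSector s : ℝ)| ≤ 200 := by
    fin_cases s <;> fin_cases t <;> first | exact absurd rfl hst | norm_num [swapSector]
  rw [hθ]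
  refine height_lt_of_far hm hw (norm_nonneg x) hx1 ?_ ?_
  · rcases le_abs.1 hlow with h | h
    · exact le_abs.2 (.inl (by nlinarith))
    · exact le_abs.2 (.inr (by nlinarith))
  · obtain ⟨h, h'⟩ := abs_le.1 hupp
    exact abs_le.2 ⟨by nlinarith [Real.pi_gt_three], by nlinarith [Real.pi_gt_three]⟩

lemma height_lt_of_notMem_swapBlock {z : Plane} (hz1 : ‖z‖ ≤ 1) (hz : z ∉ swapBlock m j) {φ : ℝ}
    (h1 : (j + 400) * sectorAngle m ≤ φ) (h2 : φ ≤ (j + 601) * sectorAngle m) :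
    height φ z < 1 - 3100 * sectorAngle m ^ 2 := by
  have := sectorAngle_pos hm
  by_cases hnorm : 1 - 2 * (52 * sectorAngle m) ^ 2 ≤ ‖z‖
  · have hpos : 0 < ‖z‖ := by nlinarith
    obtain ⟨θ, hθ, hπ⟩ := exists_polarPoint_eq_of_abs_sub_le_pi z φ
    rw [hθ]
    refine height_lt_of_far hm hw hpos.le hz1 ?_ hπ
    by_contra! hcon
    obtain ⟨hc1, hc2⟩ := abs_lt.1 hcon
    rw [hθ] at hz
    exact hz (polarPoint_mem_block hm hpos hnorm (by nlinarith) (by push_cast; nlinarith))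
  · nlinarith [height_le_norm φ z]

lemma swapCell_subset_swapBlock (t : Fin 3) : swapCell m j t ⊆ swapBlock m j := by
  intro x hx
  have := sectorAngle_pos hm
  have hnorm := le_norm_of_mem_swapCell hx
  obtain ⟨θ, hθ, hθ1, hθ2⟩ := exists_polarPoint_of_mem_swapCell hm hx
  have hrange : (400 : ℝ) ≤ swapSector t ∧ (swapSector t : ℝ) ≤ 600 := by
    fin_cases t <;> norm_num [swapSector]
  rw [hθ]
  exact polarPoint_mem_block hm (by nlinarith) (by nlinarith) (by nlinarith)
    (by push_cast; nlinarith)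

/-- If `z` beats the flanking points `a` and `b` in some direction but not `c`, then this direction
is close to that of `c`, and `z` lies so far out in it that `z` must belong to the block. -/
lemma height_lt_of_height_flanks_lt {a b c z : Plane} (ha : a ∈ swapCell m j 0)
    (hb : b ∈ swapCell m j 1) (hc : c ∈ swapCell m j 2) (hz1 : ‖z‖ ≤ 1) (hz : z ∉ swapBlock m j)
    {φ : ℝ} (hz0 : 0 < height φ z) (haz : height φ a < height φ z)
    (hbz : height φ b < height φ z) : height φ c < height φ z := by
  by_contra! hzc
  have hw0 := sectorAngle_pos hm
  obtain ⟨α, hα, hα1, hα2⟩ := exists_polarPoint_of_mem_swapCell hm ha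
  obtain ⟨β, hβ, hβ1, hβ2⟩ := exists_polarPoint_of_mem_swapCell hm hb
  obtain ⟨γ, hγ, hγ1, hγ2⟩ := exists_polarPoint_of_mem_swapCell hm hc
  obtain ⟨k, hk⟩ := exists_int_abs_add_mul_two_pi_sub_le_pi φ γ
  set ψ := φ + k * (2 * Real.pi)
  have hψφ : ∀ x, height φ x = height ψ x := fun x => (height_add_int_mul_two_pi φ k x).symm
  rw [hψφ] at hz0
  rw [hψφ, hψφ] at haz hbz hzc
  have hr0 : 0 ≤ 1 - 100 * sectorAngle m ^ 2 := by nlinarith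
  have hcr : ‖c‖ ≤ 1 - 100 * sectorAngle m ^ 2 := by
    have hcn : ‖c‖ < 1 - 2900 * sectorAngle m ^ 2 := not_le.1 hc.2
    linarith [sq_nonneg (sectorAngle m)]
  rw [hα, height_polarPoint] at haz
  rw [hβ, height_polarPoint] at hbz
  rw [hγ, height_polarPoint] at hzc
  simp only [swapSector_zero, swapSector_one, swapSector_two, Int.cast_ofNat]
    at hα1 hα2 hβ1 hβ2 hγ1 hγ2
  have haz' := mul_lt_of_le_of_mul_lt hr0 ha.2 hz0 haz
  have hbz' := mul_lt_of_le_of_mul_lt hr0 hb.2 hz0 hbz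
  rw [show ψ - α = ψ - γ + (γ - α) by ring] at haz'
  rw [show ψ - β = ψ - γ - (β - γ) by ring] at hbz'
  obtain ⟨hψ, hlow⟩ := abs_lt_and_lt_of_mul_cos_lt hw0 hw le_rfl (norm_nonneg c) hcr hk
    (by linarith) (by linarith) (by linarith) (by linarith) hz0 haz' hbz' hzc
  obtain ⟨θ, hθ, hψθ⟩ := exists_polarPoint_eq_of_lt_height hz1 (by positivity) (by linarith) hlow
  obtain ⟨hψ1, hψ2⟩ := abs_lt.1 hψ
  have hπ : Real.pi * (52 * sectorAngle m) < 164 * sectorAngle m := by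
    nlinarith [Real.pi_lt_d2]
  obtain ⟨hθ1, hθ2⟩ := abs_lt.1 (hψθ.trans hπ)
  rw [hθ] at hz
  exact hz (polarPoint_mem_block hm (hz0.trans_le (height_le_norm ψ z))
    (hlow.le.trans (height_le_norm ψ z)) (by linarith) (by push_cast; linarith))

lemma height_swapReflect_le_height_flank {a b c : Plane} (ha : a ∈ swapCell m j 0)
    (hb : b ∈ swapCell m j 1) (hc : c ∈ swapCell m j 2) {φ : ℝ}
    (hpos : 0 < height φ (swapReflect m j c))
    (hac : height φ a < height φ (swapReflect m j c)) :
    height φ (swapReflect m j c) ≤ height φ b := by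
  by_contra! hbc
  have := sectorAngle_pos hm
  obtain ⟨α, hα, hα1, hα2⟩ := exists_polarPoint_of_mem_swapCell hm ha
  obtain ⟨β, hβ, hβ1, hβ2⟩ := exists_polarPoint_of_mem_swapCell hm hb
  obtain ⟨γ, hγ, hγ1, hγ2⟩ := exists_polarPoint_of_mem_swapCell hm hc
  have hr0 : 0 ≤ 1 - 100 * sectorAngle m ^ 2 := by nlinarith
  have hcn : ‖c‖ < 1 - 2900 * sectorAngle m ^ 2 := not_le.1 hc.2
  have hac' := mul_lt_of_le_of_mul_lt hr0 ha.2 hpos (by rwa [hα, height_polarPoint] at hac)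
  have hbc' := mul_lt_of_le_of_mul_lt hr0 hb.2 hpos (by rwa [hβ, height_polarPoint] at hbc)
  rw [hγ, swapReflect, reflect_polarPoint, height_polarPoint] at hpos hac' hbc'
  simp only [swapSector_zero, swapSector_one, swapSector_two, Int.cast_ofNat]
    at hα1 hα2 hβ1 hβ2 hγ1 hγ2
  set γ' := (2 * j + 1091) * sectorAngle m - γ with hγ'
  rw [show φ - α = φ - γ' + (γ' - α) by ring] at hac'
  rw [show φ - β = φ - γ' - (β - γ') by ring] at hbc'
  have hkey := mul_cos_half_add_lt (by linarith) (by linarith)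
    (by linarith [Real.pi_gt_three]) (pos_of_mul_pos_right hpos (norm_nonneg c)) hac' hbc'
  have hlow : 1 - (101 * sectorAngle m) ^ 2 / 2 ≤ Real.cos ((γ' - α + (β - γ')) / 2) := by
    have hsq : ((γ' - α + (β - γ')) / 2) ^ 2 ≤ (101 * sectorAngle m) ^ 2 :=
      sq_le_sq' (by linarith) (by linarith)
    linarith [Real.one_sub_sq_div_two_le_cos (x := (γ' - α + (β - γ')) / 2)]
  have hupp : Real.cos ((γ' - α - (β - γ')) / 2) ≤ 1 - 11 / 25 * (89 * sectorAngle m) ^ 2 :=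
    cos_le_of_le_abs (by positivity) (by linarith) (le_abs.2 (.inl (by linarith)))
      (abs_le.2 ⟨by linarith [Real.pi_gt_three], by linarith [Real.pi_gt_three]⟩)
  have hw2 : sectorAngle m ^ 2 ≤ 1 / 10000000000 := by nlinarith
  have hupp0 : 0 ≤ 1 - 11 / 25 * (89 * sectorAngle m) ^ 2 := by nlinarith
  have hleft := mul_le_mul_of_nonneg_left hlow hr0
  have hright := (mul_le_mul_of_nonneg_left hupp (norm_nonneg c)).trans
    (mul_le_mul_of_nonneg_right hcn.le hupp0)
  nlinarith [hleft.trans (hkey.le.trans hright)]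

end SwapGeometry

section LocalInvolution

open scoped ProbabilityTheory

open Classical in
/-- The involution `σ` performed only on `R` and its image; all other points are fixed. -/
noncomputable def involutionOn {E : Type*} (σ : E → E) (R : Set E) : E → E :=
  (R ∪ σ ⁻¹' R).piecewise σ id

variable {E : Type*} {σ : E → E} {R : Set E}

open Classical in
lemma involutionOn_of_mem {x : E} (hx : x ∈ R ∪ σ ⁻¹' R) : involutionOn σ R x = σ x :=
  Set.piecewise_eq_of_mem _ _ _ hx

open Classical in
lemma involutionOn_of_notMem {x : E} (hx : x ∉ R ∪ σ ⁻¹' R) : involutionOn σ R x = x :=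
  Set.piecewise_eq_of_notMem _ _ _ hx

lemma preimage_union_preimage_of_involutive (hσ : Function.Involutive σ) :
    σ ⁻¹' (R ∪ σ ⁻¹' R) = R ∪ σ ⁻¹' R := by
  rw [Set.preimage_union, ← Set.preimage_comp, hσ.comp_self, Set.preimage_id, Set.union_comm]

lemma involutive_involutionOn (hσ : Function.Involutive σ) :
    Function.Involutive (involutionOn σ R) := by
  intro x
  by_cases hx : x ∈ R ∪ σ ⁻¹' R
  · have hσx : σ x ∈ R ∪ σ ⁻¹' R := by
      rwa [← Set.mem_preimage, preimage_union_preimage_of_involutive hσ]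
    rw [involutionOn_of_mem hx, involutionOn_of_mem hσx, hσ x]
  · rw [involutionOn_of_notMem hx, involutionOn_of_notMem hx]

open Classical in
lemma measurePreserving_involutionOn [MeasurableSpace E] {μ : Measure E}
    (hσ : Function.Involutive σ) (hσμ : MeasurePreserving σ μ μ) (hR : MeasurableSet R) :
    MeasurePreserving (involutionOn σ R) μ μ :=
  measurePreserving_piecewise_id hσμ (hR.union (hσμ.measurable hR))
    (preimage_union_preimage_of_involutive hσ)

lemma half_sum_measureReal_le_variance_pi {ι κ : Type*} [Fintype ι] [Fintype κ] [MeasurableSpace E]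
    {μ : Measure E} [IsProbabilityMeasure μ] {V : (κ → E) → ℝ} {A : ι → Set (κ → E)}
    {C : ι → Set E} {T : ι → E → E} (hV : MemLp V 2 (Measure.pi fun _ => μ))
    (hA : ∀ j, MeasurableSet (A j)) (hAC : ∀ j, LocalOn (C j) fun ω => ω ∈ A j)
    (hC : ∀ j k, j ≠ k → Disjoint (C j) (C k)) (hT : ∀ j, MeasurePreserving (T j) μ μ)
    (hTT : ∀ j, Function.Involutive (T j)) (hTC : ∀ j x, T j x = x ∨ (x ∈ C j ∧ T j x ∈ C j))
    (hgain : ∀ j, ∀ᵐ ω ∂Measure.pi fun _ => μ, ω ∈ A j → 1 ≤ V ω - V fun i => T j (ω i)) :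
    1 / 2 * ∑ j, (Measure.pi fun _ => μ).real (A j) ≤ Var[V; Measure.pi fun _ => μ] := by
  have hfix {k : ι} {x : E} (hx : x ∉ C k) : T k x = x := (hTC k x).resolve_right fun h => hx h.1
  refine half_sum_measureReal_le_variance (T := fun j ω i => T j (ω i)) hV hA
    (fun j => measurePreserving_pi _ _ fun _ => hT j) (fun j ω => funext fun i => hTT j (ω i))
    hgain (fun j k hjk ω => ?_) fun j k hjk ω => ?_
  all_goals
    refine iff_of_eq (hAC k _ _ fun i => ?_)
    rcases hTC j (ω i) with heq | ⟨hx, hTx⟩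
  · exact .inl heq
  · exact .inr ⟨(hC j k hjk).notMem_of_mem_left hTx, (hC j k hjk).notMem_of_mem_left hx⟩
  · exact .inl (congrArg (T k) heq)
  · have hxk := (hC j k hjk).notMem_of_mem_left hx
    have hTxk := (hC j k hjk).notMem_of_mem_left hTx
    exact .inr ⟨by rwa [hfix hTxk], by rwa [hfix hxk]⟩

end LocalInvolution

section SwapConfiguration

variable {m : ℕ} {j : ℤ}

/-- The measure preserving involution that moves the middle point of a swap configuration. -/
noncomputable def swapMap (m : ℕ) (j : ℤ) : Plane → Plane :=
  involutionOn (swapReflect m j) (swapCell m j 2)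

lemma measurableSet_swapCell (t : Fin 3) : MeasurableSet (swapCell m j t) := by
  fin_cases t
  · exact measurableSet_outerSector _ _
  · exact measurableSet_outerSector _ _
  · exact (measurableSet_outerSector _ _).diff (measurableSet_le measurable_const measurable_norm)

lemma involutive_swapMap (m : ℕ) (j : ℤ) : Function.Involutive (swapMap m j) :=
  involutive_involutionOn (reflect_reflect _)

lemma measurePreserving_swapMap (β : ℝ) (m : ℕ) (j : ℤ) :
    MeasurePreserving (swapMap m j) (betaMeasure β) (betaMeasure β) :=
  measurePreserving_involutionOn (reflect_reflect _) (measurePreserving_betaMeasure β _)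
    (measurableSet_swapCell 2)

lemma swapMap_of_mem_flank {t : Fin 3} (ht : t ≠ 2) {x : Plane} (hx : x ∈ swapCell m j t) :
    swapMap m j x = x := by
  refine involutionOn_of_notMem ?_
  have hxt : 1 - 100 * sectorAngle m ^ 2 ≤ ‖x‖ := by
    fin_cases t
    · exact hx.2
    · exact hx.2
    · exact absurd rfl ht
  have hlow {y : Plane} (hy : y ∈ swapCell m j 2) : ‖y‖ < 1 - 2900 * sectorAngle m ^ 2 :=
    not_le.1 hy.2
  have hsq := sq_nonneg (sectorAngle m)
  rintro (h | h)
  · linarith [hlow h]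
  · linarith [hlow h, (swapReflect m j).norm_map x]

variable (hm : 0 < m) (hw : sectorAngle m ≤ 1 / 100000)
include hm hw

lemma swapReflect_mem_swapBlock {x : Plane} (hx : x ∈ swapCell m j 2) :
    swapReflect m j x ∈ swapBlock m j := by
  have := sectorAngle_pos hm
  have hnorm := le_norm_of_mem_swapCell hx
  obtain ⟨θ, hθ, hθ1, hθ2⟩ := exists_polarPoint_of_mem_swapCell hm hx
  rw [swapSector_two, Int.cast_ofNat] at hθ1 hθ2
  rw [hθ, swapReflect, reflect_polarPoint]
  exact polarPoint_mem_block hm (by nlinarith) (by nlinarith) (by linarith)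
    (by push_cast; linarith)

lemma swapMap_eq_or (x : Plane) :
    swapMap m j x = x ∨ (x ∈ swapBlock m j ∧ swapMap m j x ∈ swapBlock m j) := by
  by_cases hx : x ∈ swapCell m j 2 ∪ swapReflect m j ⁻¹' swapCell m j 2
  · right
    rw [swapMap, involutionOn_of_mem hx]
    rcases hx with hx | hx
    · exact ⟨swapCell_subset_swapBlock hm hw 2 hx, swapReflect_mem_swapBlock hm hw hx⟩
    · refine ⟨?_, swapCell_subset_swapBlock hm hw 2 hx⟩
      simpa only [swapReflect, reflect_reflect] using swapReflect_mem_swapBlock hm hw hx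
  · exact .inl (involutionOn_of_notMem hx)

variable {κ : Type*} {ω : κ → Plane} (hω1 : ∀ i, ‖ω i‖ ≤ 1) {g : Fin 3 ↪ κ}
  (hg : ∀ t, ω (g t) ∈ swapCell m j t) (hgC : ∀ i ∉ Set.range g, ω i ∉ swapBlock m j)
include hω1 hg hgC

lemma exposedIn_of_mem_swapCell (t : Fin 3) : ExposedIn 0 Set.univ ω (g t) := by
  have := sectorAngle_pos hm
  obtain ⟨θ, hθ, hθ1, hθ2⟩ := exists_polarPoint_of_mem_swapCell hm (hg t)
  have hheight : height θ (ω (g t)) = ‖ω (g t)‖ := by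
    rw [hθ, height_polarPoint, sub_self, Real.cos_zero, mul_one, norm_polarPoint (norm_nonneg _)]
  have hnorm := le_norm_of_mem_swapCell (hg t)
  refine ⟨θ, by nlinarith, fun k hk _ => ?_⟩
  rw [hheight]
  refine lt_of_lt_of_le ?_ hnorm
  by_cases hkg : k ∈ Set.range g
  · obtain ⟨s, rfl⟩ := hkg
    exact height_lt_of_mem_swapCell hm hw (fun h => hk (congrArg g h)) (hω1 _) (hg s) hθ1 hθ2
  · have hrange : (400 : ℝ) ≤ swapSector t ∧ (swapSector t : ℝ) ≤ 600 := by
      fin_cases t <;> norm_num [swapSector]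
    exact height_lt_of_notMem_swapBlock hm hw (hω1 k) (hgC k hkg) (by nlinarith) (by nlinarith)

omit hω1 hgC in
lemma not_exposedIn_swapMap : ¬ ExposedIn 0 Set.univ (fun i => swapMap m j (ω i)) (g 2) := by
  rintro ⟨φ, hpos, hφ⟩
  have hmid : swapMap m j (ω (g 2)) = swapReflect m j (ω (g 2)) := involutionOn_of_mem (.inl (hg 2))
  have hflank {t : Fin 3} (ht : t ≠ 2) :
      height φ (ω (g t)) < height φ (swapReflect m j (ω (g 2))) := by
    have h := hφ (g t) (fun h => ht (g.injective h)) (Set.mem_univ _)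
    simpa only [swapMap_of_mem_flank ht (hg t), hmid] using h
  simp only [hmid] at hpos
  exact (hflank (by decide : (1 : Fin 3) ≠ 2)).not_ge
    (height_swapReflect_le_height_flank hm hw (hg 0) (hg 1) (hg 2) hpos
      (hflank (by decide : (0 : Fin 3) ≠ 2)))

lemma exposedIn_of_exposedIn_swapMap {i : κ}
    (hi : ExposedIn 0 Set.univ (fun i => swapMap m j (ω i)) i) : ExposedIn 0 Set.univ ω i := by
  by_cases hig : i ∈ Set.range g
  · obtain ⟨t, rfl⟩ := hig
    exact exposedIn_of_mem_swapCell hm hw hω1 hg hgC t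
  have hfix {k : κ} (hk : k ≠ g 2) : swapMap m j (ω k) = ω k := by
    by_cases hkg : k ∈ Set.range g
    · obtain ⟨t, rfl⟩ := hkg
      exact swapMap_of_mem_flank (fun h => hk (h ▸ rfl)) (hg t)
    · exact (swapMap_eq_or hm hw (ω k)).resolve_right fun h => hgC k hkg h.1
  have hne (t : Fin 3) : g t ≠ i := fun h => hig ⟨t, h⟩
  obtain ⟨φ, hpos, hφ⟩ := hi
  simp only [hfix (hne 2).symm] at hpos hφ
  have hfixed {k : κ} (hk : k ≠ i) (hk2 : k ≠ g 2) : height φ (ω k) < height φ (ω i) := by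
    simpa only [hfix hk2] using hφ k hk (Set.mem_univ _)
  refine ⟨φ, hpos, fun k hk _ => ?_⟩
  by_cases hk2 : k = g 2
  · rw [hk2]
    exact height_lt_of_height_flanks_lt hm hw (hg 0) (hg 1) (hg 2) (hω1 i) (hgC i hig) hpos
      (hfixed (hne 0) fun h => absurd (g.injective h) (by decide))
      (hfixed (hne 1) fun h => absurd (g.injective h) (by decide))
  · exact hfixed hk hk2

omit hg hgC in
lemma one_le_exposedCount_sub_exposedCount_swapMap [Fintype κ]
    (hω : ω ∈ patternEvent κ (swapCell m j) (swapBlock m j)) :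
    1 ≤ exposedCount 0 ω - exposedCount 0 fun i => swapMap m j (ω i) := by
  classical
  obtain ⟨g, hg, hgC⟩ := hω
  have hlt : (Finset.univ.filter (ExposedIn 0 Set.univ fun i => swapMap m j (ω i))).card <
      (Finset.univ.filter (ExposedIn 0 Set.univ ω)).card := by
    refine Finset.card_lt_card (Finset.ssubset_iff_of_subset ?_ |>.2 ⟨g 2, ?_, ?_⟩)
    · exact Finset.monotone_filter_right _ fun i _ hi =>
        exposedIn_of_exposedIn_swapMap hm hw hω1 hg hgC hi
    · exact Finset.mem_filter.2
        ⟨Finset.mem_univ _, exposedIn_of_mem_swapCell hm hw hω1 hg hgC 2⟩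
    · exact fun h => not_exposedIn_swapMap hm hw hg (Finset.mem_filter.1 h).2
  rw [le_sub_iff_add_le']
  unfold exposedCount
  exact_mod_cast hlt

end SwapConfiguration

section Blocks

lemma intCast_zmod_ne_of_abs_sub_lt {m : ℕ} {a b : ℤ} (hab : a ≠ b) (h : |b - a| < m) :
    (a : ZMod m) ≠ b := by
  rw [Ne, ZMod.intCast_eq_intCast_iff_dvd_sub]
  exact fun hdvd => hab (sub_eq_zero.1 (Int.eq_zero_of_abs_lt_dvd hdvd h)).symm

lemma disjoint_block {m : ℕ} {a b : ℤ} {L : ℕ} (r : ℝ) (hab : a + L ≤ b) (hba : b + L ≤ a + m) :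
    Disjoint (block m a L r) (block m b L r) := by
  rw [Set.disjoint_left]
  rintro x ⟨⟨i, hi, hxi⟩, -⟩ ⟨⟨k, hk, hxk⟩, -⟩
  refine intCast_zmod_ne_of_abs_sub_lt (m := m) (a := a + i) (b := b + k) (by lia)
    (abs_lt.2 ⟨by lia, by lia⟩) ?_
  push_cast
  rw [← hxi, hxk]

lemma disjoint_swapBlock {J : ℕ} {i k : Fin J} (hik : i ≠ k) :
    Disjoint (swapBlock (1000 * J) (1000 * (i : ℕ) : ℕ))
      (swapBlock (1000 * J) (1000 * (k : ℕ) : ℕ)) := by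
  wlog hlt : i < k generalizing i k
  · exact (this hik.symm (lt_of_le_of_ne (not_lt.1 hlt) hik.symm)).symm
  have : (i : ℕ) < k := hlt
  have := k.isLt
  exact disjoint_block _ (by push_cast; lia) (by push_cast; lia)

lemma disjoint_swapCell {m : ℕ} (hm : 200 < m) (j : ℤ) {s t : Fin 3} (hst : s ≠ t) :
    Disjoint (swapCell m j s) (swapCell m j t) := by
  refine Set.disjoint_left.2 fun x hs ht => ?_
  have hbound (t : Fin 3) : 400 ≤ swapSector t ∧ swapSector t ≤ 600 := by
    fin_cases t <;> decide
  have hne : swapSector s ≠ swapSector t := by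
    revert hst
    fin_cases s <;> fin_cases t <;> decide
  have := hbound s
  have := hbound t
  refine intCast_zmod_ne_of_abs_sub_lt (m := m) (a := j + swapSector s) (b := j + swapSector t)
    (by lia) (abs_lt.2 ⟨by lia, by lia⟩) ?_
  rw [← sectorIndex_of_mem_swapCell hs, sectorIndex_of_mem_swapCell ht]

variable {β : ℝ} {m : ℕ}

lemma inv_rpow_le_measureReal_swapCell (hβ : 0 ≤ β) (hm : 0 < m)
    (hw : sectorAngle m ≤ 1 / 100000) (j : ℤ) (t : Fin 3) :
    ((m : ℝ) ^ (2 * β + 3))⁻¹ ≤ (betaMeasure β).real (swapCell m j t) := by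
  have := sectorAngle_pos hm
  have hw2 : sectorAngle m ^ 2 ≤ 1 / 10000000000 := by nlinarith
  have hflank (c : ZMod m) : ((m : ℝ) ^ (2 * β + 3))⁻¹ ≤
      (betaMeasure β).real (outerSector m c (1 - 100 * sectorAngle m ^ 2)) :=
    inv_rpow_le_measureReal_outerSector hβ hm c (by linarith) (by nlinarith)
  fin_cases t
  · exact hflank _
  · exact hflank _
  · exact inv_rpow_le_measureReal_outerSector_sdiff hβ hm _ (by linarith) (by linarith)
      (by nlinarith) (by nlinarith)

lemma measureReal_swapBlock_le (hβ : 0 ≤ β) (hm : 0 < m) (hw : sectorAngle m ≤ 1 / 100000)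
    (j : ℤ) : (betaMeasure β).real (swapBlock m j) ≤
      1000 * (8 * Real.pi ^ 2 * 5408) ^ (β + 1) * ((m : ℝ) ^ (2 * β + 3))⁻¹ := by
  have := sectorAngle_pos hm
  rw [swapBlock, show 2 * (52 * sectorAngle m) ^ 2 = 5408 * sectorAngle m ^ 2 by ring]
  exact_mod_cast measureReal_betaMeasure_block_le_inv_rpow hβ hm j 1000 (by norm_num)
    (by nlinarith : 5408 * sectorAngle m ^ 2 < 1)

end Blocks

section VarianceLowerBound

open scoped ProbabilityTheory

lemma exp_neg_two_mul_le_one_sub {x : ℝ} (hx : 0 ≤ x) (hx2 : x ≤ 1 / 2) :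
    Real.exp (-(2 * x)) ≤ 1 - x := by
  rw [Real.exp_neg, inv_le_comm₀ (Real.exp_pos _) (by linarith)]
  refine le_trans ?_ (Real.add_one_le_exp _)
  rw [inv_le_iff_one_le_mul₀ (by linarith)]
  nlinarith

lemma exp_neg_le_one_sub_pow {x : ℝ} (hx : 0 ≤ x) (hx2 : x ≤ 1 / 2) (n : ℕ) :
    Real.exp (-(2 * (n * x))) ≤ (1 - x) ^ n := by
  rw [show -(2 * (n * x)) = n * -(2 * x) by ring, Real.exp_nat_mul]
  exact pow_le_pow_left₀ (Real.exp_pos _).le (exp_neg_two_mul_le_one_sub hx hx2) n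

lemma half_pow_le_descFactorial {n k : ℕ} (hkn : 2 * k ≤ n) :
    ((n : ℝ) / 2) ^ k ≤ n.descFactorial k := by
  have hsub : (n : ℝ) / 2 ≤ (n + 1 - k : ℕ) := by
    rw [div_le_iff₀ two_pos]
    exact_mod_cast (by lia : n ≤ (n + 1 - k) * 2)
  calc ((n : ℝ) / 2) ^ k
    _ ≤ ((n + 1 - k : ℕ) : ℝ) ^ k := by gcongr
    _ ≤ n.descFactorial k := by exact_mod_cast Nat.pow_sub_le_descFactorial n k

variable {β : ℝ}

lemma mul_exp_le_measureReal_patternEvent_swapCell (hβ : 0 ≤ β) {m n : ℕ} (hm : 200 < m)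
    (hw : sectorAngle m ≤ 1 / 100000) (hn : 6 ≤ n) {j : ℤ} {p p' : ℝ} (hp : 0 ≤ p)
    (hpP : ∀ t, p ≤ (betaMeasure β).real (swapCell m j t))
    (hp' : (betaMeasure β).real (swapBlock m j) ≤ p') (hp'2 : p' ≤ 1 / 2) :
    (n / 2 * p) ^ 3 * Real.exp (-(2 * (n * p'))) ≤
      (betaPi β n).real (patternEvent (Fin n) (swapCell m j) (swapBlock m j)) := by
  have := isProbabilityMeasure_betaMeasure hβ
  have hpattern := descFactorial_mul_le_measureReal_patternEvent (κ := Fin n)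
    (μ := betaMeasure β) measurableSet_swapCell (measurableSet_block _ _ _)
    (swapCell_subset_swapBlock (by lia) hw) (fun _ _ => disjoint_swapCell hm j) hp hpP hp'
    (by linarith)
  rw [Fintype.card_fin, Fintype.card_fin, ← mul_assoc] at hpattern
  refine le_trans ?_ hpattern
  rw [mul_pow]
  gcongr
  · exact half_pow_le_descFactorial hn
  · exact exp_neg_le_one_sub_pow (measureReal_nonneg.trans hp') hp'2 n

lemma half_sum_measureReal_le_variance_exposedCount (hβ : 0 ≤ β) {J : ℕ} (hJ : 0 < J) (n : ℕ)
    (hw : sectorAngle (1000 * J) ≤ 1 / 100000) :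
    1 / 2 * ∑ i : Fin J, (betaPi β n).real (patternEvent (Fin n)
      (swapCell (1000 * J) (1000 * (i : ℕ) : ℕ)) (swapBlock (1000 * J) (1000 * (i : ℕ) : ℕ))) ≤
      Var[exposedCount 0; betaPi β n] := by
  have := isProbabilityMeasure_betaMeasure hβ
  have hm : 0 < 1000 * J := by lia
  have hmem : MemLp (exposedCount 0) 2 (Measure.pi fun _ : Fin n => betaMeasure β) :=
    memLp_of_bounded (.of_forall fun ω => exposedCount_mem_Icc 0 ω)
      (measurable_exposedCount 0).aestronglyMeasurable 2
  refine half_sum_measureReal_le_variance_pi (T := fun j => swapMap (1000 * J) (1000 * (j : ℕ) : ℕ))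
    hmem (fun j => ?_) (fun j => ?_) (fun _ _ => disjoint_swapBlock)
    (fun j => measurePreserving_swapMap β _ _) (fun j => involutive_swapMap _ _)
    (fun j => swapMap_eq_or hm hw) (fun j => ?_)
  · exact measurableSet_patternEvent measurableSet_swapCell (measurableSet_block _ _ _)
  · exact localOn_patternEvent (swapCell_subset_swapBlock hm hw)
  · filter_upwards [ae_pi_forall (κ := Fin n) (ae_norm_le_one_betaMeasure β)] with ω hω
    exact one_le_exposedCount_sub_exposedCount_swapMap hm hw hω

lemma mul_exp_le_variance_exposedCount (hβ : 0 ≤ β) {J n : ℕ} (hJ : 0 < J)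
    (hw : sectorAngle (1000 * J) ≤ 1 / 100000) (hn : 6 ≤ n) {p p' : ℝ} (hp : 0 ≤ p)
    (hpP : ∀ (j : ℤ) t, p ≤ (betaMeasure β).real (swapCell (1000 * J) j t))
    (hp' : ∀ j : ℤ, (betaMeasure β).real (swapBlock (1000 * J) j) ≤ p') (hp'2 : p' ≤ 1 / 2) :
    1 / 2 * (J * ((n / 2 * p) ^ 3 * Real.exp (-(2 * (n * p'))))) ≤
      Var[exposedCount 0; betaPi β n] := by
  refine le_trans ?_ (half_sum_measureReal_le_variance_exposedCount hβ hJ n hw)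
  gcongr
  calc (J : ℝ) * ((n / 2 * p) ^ 3 * Real.exp (-(2 * (n * p'))))
    _ = ∑ _i : Fin J, (n / 2 * p) ^ 3 * Real.exp (-(2 * (n * p'))) := by
      rw [Finset.sum_const, Finset.card_fin, nsmul_eq_mul]
    _ ≤ _ := Finset.sum_le_sum fun i _ => mul_exp_le_measureReal_patternEvent_swapCell hβ
      (by lia) hw hn hp (hpP _) (hp' _) hp'2

lemma sectorAngle_le_of_thousand_le {J : ℕ} (hJ : 1000 ≤ J) :
    sectorAngle (1000 * J) ≤ 1 / 100000 := by
  have hJ' : (1000 : ℝ) ≤ J := by exact_mod_cast hJ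
  rw [sectorAngle, div_le_div_iff₀ (by positivity) (by norm_num)]
  push_cast
  linarith [Real.pi_lt_d2]

lemma eventually_mul_inv_rpow_le_half {q : ℝ} (hq : 0 < q) (D : ℝ) :
    ∀ᶠ J : ℕ in Filter.atTop, D * (((1000 * J : ℕ) : ℝ) ^ q)⁻¹ ≤ 1 / 2 := by
  have htendsto : Filter.Tendsto (fun J : ℕ => D * (((1000 * J : ℕ) : ℝ) ^ q)⁻¹) Filter.atTop
      (nhds (D * 0)) := by
    refine ((tendsto_inv_atTop_zero.comp (tendsto_rpow_atTop hq)).comp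
      (tendsto_natCast_atTop_atTop.comp ?_)).const_mul D
    exact Filter.tendsto_id.const_mul_atTop' (by norm_num)
  exact htendsto.eventually_le_const (by norm_num)

lemma exists_mul_le_variance_exposedCount (hβ : 0 ≤ β) (A : ℝ) :
    ∃ c > 0, ∀ᶠ J : ℕ in Filter.atTop, ∀ n : ℕ, (J : ℝ) ^ (2 * β + 3) ≤ n →
      n ≤ A * (J : ℝ) ^ (2 * β + 3) → c * J ≤ Var[exposedCount 0; betaPi β n] := by
  set q : ℝ := 2 * β + 3
  set D : ℝ := 1000 * (8 * Real.pi ^ 2 * 5408) ^ (β + 1)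
  set s : ℝ := ((1000 : ℝ) ^ q)⁻¹ with hs
  have : 0 < s := by positivity
  have : 0 < D := by positivity
  refine ⟨1 / 2 * ((1 / 2 * s) ^ 3 * Real.exp (-(2 * (A * (D * s))))), by positivity, ?_⟩
  filter_upwards [eventually_mul_inv_rpow_le_half (by linarith : 0 < q) D,
    Filter.eventually_ge_atTop 1000] with J hJp hJ n hJn hnJ
  have hJ' : (1000 : ℝ) ≤ J := by exact_mod_cast hJ
  have hm : 0 < 1000 * J := by lia
  have hw := sectorAngle_le_of_thousand_le hJ
  have hn : 6 ≤ n := by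
    have hJq : (J : ℝ) ≤ (J : ℝ) ^ q := Real.self_le_rpow_of_one_le (by linarith) (by linarith)
    exact_mod_cast (by linarith : (6 : ℝ) ≤ n)
  have hJq0 : 0 < (J : ℝ) ^ q := by positivity
  have hinv : (((1000 * J : ℕ) : ℝ) ^ q)⁻¹ = s * ((J : ℝ) ^ q)⁻¹ := by
    rw [hs, ← mul_inv, ← Real.mul_rpow (by norm_num) (by positivity), Nat.cast_mul,
      Nat.cast_ofNat]
  have hn1 : 1 ≤ n * ((J : ℝ) ^ q)⁻¹ := by rwa [← div_eq_mul_inv, one_le_div hJq0]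
  have hnA : n * ((J : ℝ) ^ q)⁻¹ ≤ A := by rwa [← div_eq_mul_inv, div_le_iff₀ hJq0]
  refine le_trans ?_ (mul_exp_le_variance_exposedCount hβ (by lia) hw hn (by positivity)
    (inv_rpow_le_measureReal_swapCell hβ hm hw) (measureReal_swapBlock_le hβ hm hw) hJp)
  rw [hinv, show n / 2 * (s * ((J : ℝ) ^ q)⁻¹) = n * ((J : ℝ) ^ q)⁻¹ / 2 * s by ring,
    show n * (D * (s * ((J : ℝ) ^ q)⁻¹)) = n * ((J : ℝ) ^ q)⁻¹ * (D * s) by ring,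
    mul_assoc, mul_comm _ (J : ℝ)]
  gcongr

end VarianceLowerBound

section Scales

open Filter

/-- The largest number of sectors whose `q`-th power is at most `z`. -/
noncomputable def rootFloor (q z : ℝ) : ℕ :=
  ⌊z ^ q⁻¹⌋₊

variable {q z : ℝ}

lemma rootFloor_rpow_le (hq : 0 < q) (hz : 0 ≤ z) : (rootFloor q z : ℝ) ^ q ≤ z := by
  calc (rootFloor q z : ℝ) ^ q
    _ ≤ (z ^ q⁻¹) ^ q := by
      gcongr
      exact Nat.floor_le (by positivity)
    _ = z := Real.rpow_inv_rpow hz hq.ne'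

lemma rootFloor_pos (hq : 0 < q) (hz : 1 ≤ z) : 0 < rootFloor q z :=
  Nat.floor_pos.2 (Real.one_le_rpow hz (by positivity))

lemma le_two_rpow_mul_rootFloor_rpow (hq : 0 < q) (hz : 1 ≤ z) :
    z ≤ 2 ^ q * (rootFloor q z : ℝ) ^ q := by
  have hpos : (1 : ℝ) ≤ rootFloor q z := by exact_mod_cast rootFloor_pos hq hz
  calc z
    _ = (z ^ q⁻¹) ^ q := (Real.rpow_inv_rpow (by linarith) hq.ne').symm
    _ ≤ (2 * rootFloor q z) ^ q := by
      gcongr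
      have := (Nat.lt_floor_add_one (z ^ q⁻¹)).le
      rw [← rootFloor] at this
      linarith
    _ = 2 ^ q * (rootFloor q z : ℝ) ^ q := Real.mul_rpow (by norm_num) (by positivity)

lemma tendsto_rootFloor (hq : 0 < q) : Tendsto (rootFloor q) atTop atTop :=
  tendsto_nat_floor_atTop.comp (tendsto_rpow_atTop (inv_pos.2 hq))

/-- The expected number of points in a cell, up to constants: a small power of the number `n` of
points, normalised such that `scale q n ^ 10` is of the order of the number of vertices. -/
noncomputable def scale (q : ℝ) (n : ℕ) : ℝ :=
  (n : ℝ) ^ (10 * q)⁻¹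

/-- The number of cells into which the vicinity of the circle is divided for `n` points. -/
noncomputable def cellNumber (q : ℝ) (n : ℕ) : ℕ :=
  rootFloor q (n / scale q n)

variable {n : ℕ}

lemma scale_nonneg (q : ℝ) (n : ℕ) : 0 ≤ scale q n := by
  unfold scale
  positivity

lemma scale_rpow (hq : 0 < q) : scale q n ^ (10 * q) = n :=
  Real.rpow_inv_rpow n.cast_nonneg (by positivity)

lemma scale_pow_ten_rpow (hq : 0 < q) : (scale q n ^ 10) ^ q = n := by
  rw [← Real.rpow_natCast, ← Real.rpow_mul (scale_nonneg q n), Nat.cast_ofNat, scale_rpow hq]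

lemma tendsto_scale (hq : 0 < q) : Tendsto (scale q) atTop atTop :=
  (tendsto_rpow_atTop (by positivity)).comp tendsto_natCast_atTop_atTop

lemma scale_pow_le (hq : 0 < q) (hx : 1 ≤ scale q n) {k : ℕ} (hk : k ≤ 10 * q) :
    scale q n ^ k ≤ n := by
  rw [← scale_rpow hq, ← Real.rpow_natCast]
  gcongr

lemma scale_pow_ten_le (hq : 0 < q) (hn : 1 ≤ n) :
    scale q n ^ 10 ≤ 2 * rootFloor q n := by
  rw [← Real.rpow_le_rpow_iff (by positivity) (by positivity) hq,
    scale_pow_ten_rpow hq, Real.mul_rpow (by norm_num) (by positivity)]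
  exact le_two_rpow_mul_rootFloor_rpow hq (by exact_mod_cast hn)

lemma one_le_div_scale (hq : 1 ≤ q) (hx : 1 ≤ scale q n) : 1 ≤ n / scale q n := by
  rw [one_le_div (by linarith)]
  simpa only [pow_one] using
    scale_pow_le (k := 1) (by linarith) hx (by push_cast; linarith)

lemma cellNumber_pos (hq : 1 ≤ q) (hx : 1 ≤ scale q n) : 0 < cellNumber q n :=
  rootFloor_pos (by linarith) (one_le_div_scale hq hx)

lemma cellNumber_le (hq : 0 < q) (hx : 1 ≤ scale q n) : (cellNumber q n : ℝ) ≤ scale q n ^ 10 := by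
  rw [← Real.rpow_le_rpow_iff (by positivity) (by positivity) hq, scale_pow_ten_rpow hq]
  exact (rootFloor_rpow_le hq (by positivity)).trans (div_le_self n.cast_nonneg hx)

lemma scale_le_mul_inv_rpow (hq : 1 ≤ q) (hx : 1 ≤ scale q n) :
    scale q n ≤ n * ((cellNumber q n : ℝ) ^ q)⁻¹ := by
  have hK : (0 : ℝ) < cellNumber q n := by exact_mod_cast cellNumber_pos hq hx
  rw [← div_eq_mul_inv, le_div_iff₀ (by positivity), mul_comm, ← le_div_iff₀ (by linarith)]
  exact rootFloor_rpow_le (by linarith) (by have := scale_nonneg q n; positivity)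

lemma mul_inv_rpow_le_scale (hq : 1 ≤ q) (hx : 1 ≤ scale q n) :
    n * ((cellNumber q n : ℝ) ^ q)⁻¹ ≤ 2 ^ q * scale q n := by
  have hK : (0 : ℝ) < cellNumber q n := by exact_mod_cast cellNumber_pos hq hx
  rw [← div_eq_mul_inv, div_le_iff₀ (by positivity), mul_right_comm, ← div_le_iff₀ (by linarith)]
  exact le_two_rpow_mul_rootFloor_rpow (by linarith) (one_le_div_scale hq hx)

lemma tendsto_cellNumber (hq : 1 ≤ q) : Tendsto (cellNumber q) atTop atTop := by
  refine (tendsto_rootFloor (by linarith)).comp ?_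
  refine tendsto_atTop_mono' _ ?_ (tendsto_scale (by linarith : 0 < q))
  filter_upwards [(tendsto_scale (by linarith : 0 < q)).eventually_ge_atTop 1] with n hx
  rw [le_div_iff₀ (by linarith), ← sq]
  exact scale_pow_le (by linarith) hx (by push_cast; linarith)

/-- A bound for the probability that the good event fails. -/
noncomputable def failureBound (q : ℝ) (n : ℕ) : ℝ :=
  2 * scale q n ^ 10 * Real.exp (-scale q n)

lemma failureBound_nonneg (q : ℝ) (n : ℕ) : 0 ≤ failureBound q n := by
  have := scale_nonneg q n
  unfold failureBound
  positivity

lemma tendsto_sq_mul_failureBound (hq : 0 < q) :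
    Tendsto (fun n : ℕ => (n : ℝ) ^ 2 * failureBound q n) atTop (nhds 0) := by
  have hexp := ((tendsto_rpow_mul_exp_neg_mul_atTop_nhds_zero (20 * q + 10) 1 one_pos).comp
    (tendsto_scale hq)).const_mul 2
  rw [mul_zero] at hexp
  refine hexp.congr' ?_
  filter_upwards [(tendsto_scale hq).eventually_gt_atTop 0] with n hx
  have hpow : scale q n ^ (20 * q + 10) = (n : ℝ) ^ 2 * scale q n ^ 10 := by
    rw [Real.rpow_add hx, show (20 * q) = 10 * q * (2 : ℕ) by push_cast; ring,
      Real.rpow_mul hx.le, scale_rpow hq, Real.rpow_natCast]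
    norm_cast
  simp only [Function.comp_apply, hpow, failureBound, neg_one_mul]
  ring

end Scales

section Asymptotics

open Filter
open scoped ProbabilityTheory

lemma tendsto_clt_error {c b r δ₁ δ₂ : ℕ → ℝ} (hb : Tendsto b atTop (nhds 0))
    (hcb : Tendsto (fun n => c n * b n ^ 3) atTop (nhds 0))
    (hr₂ : Tendsto (fun n => c n ^ 2 * r n) atTop (nhds 0))
    (hr₃ : Tendsto (fun n => c n ^ 3 * b n ^ 2 * r n) atTop (nhds 0))
    (hδ₁ : Tendsto δ₁ atTop (nhds 0)) (hδ₂ : Tendsto δ₂ atTop (nhds 0)) (d t : ℝ) :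
    Tendsto (fun n => |t| * δ₁ n + (4 * c n ^ 2 * b n * r n +
      |t| * (√(4 * d ^ 4 * c n ^ 2 * b n ^ 4 * r n + 2 * d ^ 5 * c n * b n ^ 4) +
        (4 * c n ^ 3 * b n ^ 2 * r n + δ₂ n)) + 2 * d ^ 2 * c n * b n ^ 3 * t ^ 2) * |t|)
      atTop (nhds 0) := by
  have h₁ := (hr₂.mul hb).const_mul 4
  have h₂ := ((hr₂.mul (hb.pow 4)).const_mul (4 * d ^ 4)).add
    ((hcb.mul hb).const_mul (2 * d ^ 5))
  have h₃ := (hr₃.const_mul 4).add hδ₂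
  have h₄ := hcb.const_mul (2 * d ^ 2 * t ^ 2)
  have h := (hδ₁.const_mul |t|).add
    (((h₁.add ((h₂.sqrt.add h₃).const_mul |t|)).add h₄).mul_const |t|)
  norm_num at h
  exact h.congr fun n => by ring_nf

/-- The constant in the bound `measureReal_cell_le` for the mass of a cell. -/
noncomputable def cellConst (β : ℝ) : ℝ :=
  15 * (8 * Real.pi ^ 2 * 2) ^ (β + 1)

lemma cellConst_pos (β : ℝ) : 0 < cellConst β := by
  unfold cellConst
  positivity

variable {β : ℝ}

lemma measureReal_cell_le (hβ : 0 ≤ β) {K : ℕ} (hK : 0 < K) (hw : sectorAngle K ≤ 1 / 2)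
    (c : ZMod K) :
    (betaMeasure β).real (cell K c) ≤ cellConst β * ((K : ℝ) ^ (2 * β + 3))⁻¹ := by
  have := sectorAngle_pos hK
  exact_mod_cast measureReal_betaMeasure_block_le_inv_rpow hβ hK (c - 7) 15 (a := 2) (by norm_num)
    (by nlinarith)

/-- The number of points allowed in a cell on the good event. -/
noncomputable def capacity (β : ℝ) (n : ℕ) : ℝ :=
  (2 * (cellConst β * 2 ^ (2 * β + 3)) + 1) * scale (2 * β + 3) n

variable {n : ℕ}

lemma mul_measure_cell_le (hβ : 0 ≤ β) (hx : 1 ≤ scale (2 * β + 3) n) :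
    n * (cellConst β * ((cellNumber (2 * β + 3) n : ℝ) ^ (2 * β + 3))⁻¹) ≤
      cellConst β * 2 ^ (2 * β + 3) * scale (2 * β + 3) n := by
  rw [mul_left_comm, mul_assoc]
  exact mul_le_mul_of_nonneg_left (mul_inv_rpow_le_scale (by linarith) hx) (cellConst_pos β).le

lemma measureReal_compl_goodEvent_le_failureBound (hβ : 0 ≤ β)
    (hx : 1 ≤ scale (2 * β + 3) n) (hw : sectorAngle (cellNumber (2 * β + 3) n) ≤ 1 / 2) :
    (betaPi β n).real (goodEvent (Fin n) (cellNumber (2 * β + 3) n) (capacity β n))ᶜ ≤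
      failureBound (2 * β + 3) n := by
  have := isProbabilityMeasure_betaMeasure hβ
  have hq : 1 ≤ 2 * β + 3 := by linarith
  set K := cellNumber (2 * β + 3) n with hKdef
  have hK : 0 < K := cellNumber_pos hq hx
  have : NeZero K := ⟨hK.ne'⟩
  have := sectorAngle_pos hK
  have hw2 : sectorAngle K ^ 2 ≤ 1 / 4 := by nlinarith
  refine (measureReal_pi_compl_goodEvent_le (betaMeasure β)
    (fun c => inv_rpow_le_measureReal_outerSector hβ hK c (r := 1 - sectorAngle K ^ 2)
      (by linarith) (by nlinarith))
    (measureReal_cell_le hβ hK hw)).trans ?_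
  have hlow := scale_le_mul_inv_rpow hq hx
  have hupp := mul_measure_cell_le hβ hx
  rw [← hKdef] at hlow hupp
  have hKx : (K : ℝ) ≤ scale (2 * β + 3) n ^ 10 := cellNumber_le (by linarith) hx
  have hsplit (y : ℝ) : 2 * scale (2 * β + 3) n ^ 10 * y =
      scale (2 * β + 3) n ^ 10 * y + scale (2 * β + 3) n ^ 10 * y := by ring
  rw [Fintype.card_fin, failureBound, hsplit, capacity]
  refine add_le_add ?_ ?_ <;>
    refine mul_le_mul hKx (Real.exp_le_exp.2 ?_) (Real.exp_pos _).le (by positivity) <;>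
    linarith

lemma eventually_sectorAngle_cellNumber_le {q : ℝ} (hq : 1 ≤ q) :
    ∀ᶠ n in atTop, sectorAngle (cellNumber q n) ≤ 1 / 2 := by
  have htendsto : Tendsto (fun n => sectorAngle (cellNumber q n)) atTop (nhds 0) :=
    (tendsto_natCast_atTop_atTop.comp (tendsto_cellNumber hq)).const_div_atTop _
  exact htendsto.eventually_le_const (by norm_num)

lemma isProbabilityMeasure_betaPi (hβ : 0 ≤ β) (n : ℕ) : IsProbabilityMeasure (betaPi β n) := by
  have := isProbabilityMeasure_betaMeasure hβ
  unfold betaPi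
  infer_instance

lemma exposedCount_fin_mem_Icc (s : ℝ) (ω : Fin n → Plane) :
    exposedCount s ω ∈ Set.Icc 0 (n : ℝ) := by
  simpa only [Fintype.card_fin] using exposedCount_mem_Icc s ω

lemma eventually_abs_variance_exposedCount_sub_le (hβ : 0 ≤ β) :
    ∀ᶠ n in atTop, |Var[exposedCount (-2); betaPi β n] - Var[exposedCount 0; betaPi β n]| ≤
      4 * (n ^ 2 * failureBound (2 * β + 3) n) := by
  have hq : 1 ≤ 2 * β + 3 := by linarith
  filter_upwards [(tendsto_scale (by linarith : 0 < 2 * β + 3)).eventually_ge_atTop 1,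
    eventually_sectorAngle_cellNumber_le hq] with n hx hw
  have hK := cellNumber_pos hq hx
  have : NeZero (cellNumber (2 * β + 3) n) := ⟨hK.ne'⟩
  have := sectorAngle_pos hK
  have hnear : 0 ≤ nearBoundary (cellNumber (2 * β + 3) n) := by
    rw [nearBoundary]
    nlinarith
  rw [← mul_assoc]
  have := isProbabilityMeasure_betaMeasure hβ
  have := isProbabilityMeasure_betaPi hβ n
  refine abs_variance_sub_variance_le_of_eqOn (measurable_exposedCount 0)
    (measurable_exposedCount (-2)) (exposedCount_fin_mem_Icc 0)
    (exposedCount_fin_mem_Icc (-2)) (measurableSet_goodEvent _)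
    (measureReal_compl_goodEvent_le_failureBound hβ hx hw) ?_
  filter_upwards [ae_pi_forall (κ := Fin n) (ae_norm_le_one_betaMeasure β)] with ω hω hgood
  rw [exposedCount_eq_sum_cellCount hw hnear hgood hω,
    exposedCount_eq_sum_cellCount hw (by linarith) hgood hω]

lemma exists_mul_scale_pow_le_variance (hβ : 0 ≤ β) :
    ∃ c > 0, ∀ᶠ n in atTop,
      c * scale (2 * β + 3) n ^ 10 ≤ Var[exposedCount (-2); betaPi β n] := by
  have hq : 0 < 2 * β + 3 := by linarith
  obtain ⟨c, hc, hvar⟩ := exists_mul_le_variance_exposedCount hβ (2 ^ (2 * β + 3))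
  refine ⟨c / 4, by positivity, ?_⟩
  have hfail := (tendsto_sq_mul_failureBound hq).const_mul 4
  rw [mul_zero] at hfail
  filter_upwards [((tendsto_rootFloor hq).comp tendsto_natCast_atTop_atTop).eventually hvar,
    eventually_abs_variance_exposedCount_sub_le hβ, hfail.eventually_le_const (half_pos hc),
    (tendsto_scale hq).eventually_ge_atTop 2, eventually_ge_atTop 1] with n hn hdiff herr hx hn1
  have hJ := hn n (rootFloor_rpow_le hq n.cast_nonneg)
    (le_two_rpow_mul_rootFloor_rpow hq (by exact_mod_cast hn1))
  have hscale := mul_le_mul_of_nonneg_left (scale_pow_ten_le hq hn1) hc.le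
  have hlarge : c * 2 ≤ c * scale (2 * β + 3) n ^ 10 :=
    mul_le_mul_of_nonneg_left (hx.trans (le_self_pow₀ (by linarith) (by norm_num))) hc.le
  simp only [Function.comp_apply] at hJ
  linarith [abs_le.1 hdiff]

end Asymptotics

section GaussianLimit

open Filter ProbabilityTheory
open scoped ProbabilityTheory

variable {q β : ℝ} {n : ℕ}

lemma tendsto_zero_of_le_const_mul_inv_scale_pow (hq : 0 < q) {f : ℕ → ℝ} {C : ℝ} {k : ℕ}
    (hk : k ≠ 0) (hf : ∀ᶠ n in atTop, 0 ≤ f n)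
    (hfC : ∀ᶠ n in atTop, f n ≤ C * (scale q n ^ k)⁻¹) : Tendsto f atTop (nhds 0) := by
  have hinv := ((tendsto_pow_atTop hk).comp (tendsto_scale hq)).inv_tendsto_atTop.const_mul C
  rw [mul_zero] at hinv
  exact squeeze_zero' hf hfC hinv

/-- The uniform bound for the summands of the standardised vertex count on the good event. -/
noncomputable def summandBound (β : ℝ) (n : ℕ) : ℝ :=
  capacity β n / √Var[exposedCount (-2); betaPi β n]

/-- The bound `measureReal_cell_le` for the mass of a cell when there are `n` points. -/
noncomputable def cellMassBound (β : ℝ) (n : ℕ) : ℝ :=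
  cellConst β * ((cellNumber (2 * β + 3) n : ℝ) ^ (2 * β + 3))⁻¹

lemma capacity_nonneg (β : ℝ) (n : ℕ) : 0 ≤ capacity β n := by
  have := scale_nonneg (2 * β + 3) n
  have := cellConst_pos β
  unfold capacity
  positivity

lemma summandBound_nonneg (β : ℝ) (n : ℕ) : 0 ≤ summandBound β n :=
  div_nonneg (capacity_nonneg β n) (Real.sqrt_nonneg _)

lemma exists_summandBound_le (hβ : 0 ≤ β) :
    ∃ C ≥ 0, ∀ᶠ n in atTop, summandBound β n ≤ C * (scale (2 * β + 3) n ^ 4)⁻¹ := by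
  obtain ⟨c, hc, hvar⟩ := exists_mul_scale_pow_le_variance hβ
  set A := 2 * (cellConst β * 2 ^ (2 * β + 3)) + 1 with hA
  have hA0 : 0 ≤ A := by
    have := cellConst_pos β
    positivity
  refine ⟨A / √c, by positivity, ?_⟩
  filter_upwards [hvar, (tendsto_scale (by linarith : 0 < 2 * β + 3)).eventually_gt_atTop 0]
    with n hn hx
  have hσ : √c * scale (2 * β + 3) n ^ 5 ≤ √Var[exposedCount (-2); betaPi β n] := by
    refine Real.le_sqrt_of_sq_le ?_
    rw [mul_pow, Real.sq_sqrt hc.le]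
    linarith
  calc summandBound β n
    _ ≤ A * scale (2 * β + 3) n / (√c * scale (2 * β + 3) n ^ 5) := by
      rw [summandBound, capacity, ← hA]
      gcongr
    _ = A / √c * (scale (2 * β + 3) n ^ 4)⁻¹ := by field_simp

lemma exists_mul_cellMassBound_sq_le (hβ : 0 ≤ β) :
    ∃ C ≥ 0, ∀ᶠ n : ℕ in atTop,
      n * cellMassBound β n ^ 2 ≤ C * (scale (2 * β + 3) n ^ 28)⁻¹ := by
  set A := cellConst β * 2 ^ (2 * β + 3)
  refine ⟨A ^ 2, by positivity, ?_⟩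
  filter_upwards [(tendsto_scale (by linarith : 0 < 2 * β + 3)).eventually_ge_atTop 1] with n hx
  have : 0 < scale (2 * β + 3) n := by linarith
  have hmass : n * cellMassBound β n ≤ A * scale (2 * β + 3) n := mul_measure_cell_le hβ hx
  have hmass0 : 0 ≤ n * cellMassBound β n := by
    have := cellConst_pos β
    unfold cellMassBound
    positivity
  have hn : scale (2 * β + 3) n ^ 30 ≤ n :=
    scale_pow_le (by linarith) hx (by push_cast; linarith)
  rw [← div_eq_mul_inv, le_div_iff₀ (by positivity)]
  refine le_of_mul_le_mul_right ?_ (by positivity : 0 < scale (2 * β + 3) n ^ 2)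
  calc n * cellMassBound β n ^ 2 * scale (2 * β + 3) n ^ 28 * scale (2 * β + 3) n ^ 2
    _ = n * cellMassBound β n ^ 2 * scale (2 * β + 3) n ^ 30 := by ring
    _ ≤ n * cellMassBound β n ^ 2 * n := by gcongr
    _ = (n * cellMassBound β n) ^ 2 := by ring
    _ ≤ (A * scale (2 * β + 3) n) ^ 2 := by gcongr
    _ = A ^ 2 * scale (2 * β + 3) n ^ 2 := mul_pow _ _ _

lemma eventually_cellNumber_le (hβ : 0 ≤ β) :
    ∀ᶠ n in atTop, (cellNumber (2 * β + 3) n : ℝ) ≤ scale (2 * β + 3) n ^ 10 := by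
  filter_upwards [(tendsto_scale (by linarith : 0 < 2 * β + 3)).eventually_ge_atTop 1] with n hx
  exact cellNumber_le (by linarith) hx

lemma tendsto_summandBound (hβ : 0 ≤ β) : Tendsto (summandBound β) atTop (nhds 0) := by
  obtain ⟨C, -, hb⟩ := exists_summandBound_le hβ
  exact tendsto_zero_of_le_const_mul_inv_scale_pow (by linarith) (by norm_num)
    (.of_forall (summandBound_nonneg β)) hb

lemma tendsto_cellNumber_mul_summandBound_pow (hβ : 0 ≤ β) :
    Tendsto (fun n => cellNumber (2 * β + 3) n * summandBound β n ^ 3) atTop (nhds 0) := by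
  obtain ⟨C, _, hb⟩ := exists_summandBound_le hβ
  have hq : 0 < 2 * β + 3 := by linarith
  have hb0 := summandBound_nonneg β
  refine tendsto_zero_of_le_const_mul_inv_scale_pow hq (C := C ^ 3) two_ne_zero
    (.of_forall fun n => mul_nonneg (Nat.cast_nonneg _) (pow_nonneg (hb0 n) 3)) ?_
  filter_upwards [hb, eventually_cellNumber_le hβ, (tendsto_scale hq).eventually_gt_atTop 0]
    with n hbn hK hx
  calc cellNumber (2 * β + 3) n * summandBound β n ^ 3
    _ ≤ scale (2 * β + 3) n ^ 10 * (C * (scale (2 * β + 3) n ^ 4)⁻¹) ^ 3 := by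
      have := hb0 n
      gcongr
    _ = C ^ 3 * (scale (2 * β + 3) n ^ 2)⁻¹ := by field_simp

lemma tendsto_cellNumber_sq_mul_cellMassBound_sq (hβ : 0 ≤ β) :
    Tendsto (fun n : ℕ => (cellNumber (2 * β + 3) n : ℝ) ^ 2 * (n * cellMassBound β n ^ 2))
      atTop (nhds 0) := by
  obtain ⟨C, _, hr⟩ := exists_mul_cellMassBound_sq_le hβ
  have hq : 0 < 2 * β + 3 := by linarith
  refine tendsto_zero_of_le_const_mul_inv_scale_pow hq (C := C) (k := 8) (by norm_num)
    (.of_forall fun n => by positivity) ?_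
  filter_upwards [hr, eventually_cellNumber_le hβ, (tendsto_scale hq).eventually_gt_atTop 0]
    with n hrn hK hx
  calc (cellNumber (2 * β + 3) n : ℝ) ^ 2 * (n * cellMassBound β n ^ 2)
    _ ≤ (scale (2 * β + 3) n ^ 10) ^ 2 * (C * (scale (2 * β + 3) n ^ 28)⁻¹) := by gcongr
    _ = C * (scale (2 * β + 3) n ^ 8)⁻¹ := by field_simp

lemma tendsto_cellNumber_pow_mul_summandBound_sq_mul_cellMassBound_sq (hβ : 0 ≤ β) :
    Tendsto (fun n : ℕ => (cellNumber (2 * β + 3) n : ℝ) ^ 3 * summandBound β n ^ 2 *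
      (n * cellMassBound β n ^ 2)) atTop (nhds 0) := by
  obtain ⟨C₁, _, hb⟩ := exists_summandBound_le hβ
  obtain ⟨C₂, _, hr⟩ := exists_mul_cellMassBound_sq_le hβ
  have hq : 0 < 2 * β + 3 := by linarith
  have hb0 := summandBound_nonneg β
  refine tendsto_zero_of_le_const_mul_inv_scale_pow hq (C := C₁ ^ 2 * C₂) (k := 6) (by norm_num)
    (.of_forall fun n => by positivity) ?_
  filter_upwards [hb, hr, eventually_cellNumber_le hβ, (tendsto_scale hq).eventually_gt_atTop 0]
    with n hbn hrn hK hx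
  calc (cellNumber (2 * β + 3) n : ℝ) ^ 3 * summandBound β n ^ 2 * (n * cellMassBound β n ^ 2)
    _ ≤ (scale (2 * β + 3) n ^ 10) ^ 3 * (C₁ * (scale (2 * β + 3) n ^ 4)⁻¹) ^ 2 *
        (C₂ * (scale (2 * β + 3) n ^ 28)⁻¹) := by
      gcongr
      exact hb0 n
    _ = C₁ ^ 2 * C₂ * (scale (2 * β + 3) n ^ 6)⁻¹ := by field_simp

lemma eventually_one_le_sqrt_variance (hβ : 0 ≤ β) :
    ∀ᶠ n in atTop, 1 ≤ √Var[exposedCount (-2); betaPi β n] := by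
  obtain ⟨c, hc, hvar⟩ := exists_mul_scale_pow_le_variance hβ
  have hlarge := ((tendsto_pow_atTop (by norm_num : 10 ≠ 0)).comp
    (tendsto_scale (by linarith : 0 < 2 * β + 3))).const_mul_atTop hc
  filter_upwards [hvar, hlarge.eventually_ge_atTop 1] with n hn hn1
  exact Real.one_le_sqrt.2 (hn1.trans hn)

/-- A bound, of the order of the number of points, for both the vertex count and the sum of the
truncated cell counts. -/
noncomputable def countBound (β : ℝ) (n : ℕ) : ℝ :=
  (2 * (cellConst β * 2 ^ (2 * β + 3)) + 2) * n

lemma le_countBound (β : ℝ) (n : ℕ) : n ≤ countBound β n := by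
  have := cellConst_pos β
  exact le_mul_of_one_le_left n.cast_nonneg
    (by linarith [show 0 < cellConst β * 2 ^ (2 * β + 3) by positivity])

lemma cellNumber_mul_capacity_le (hβ : 0 ≤ β) (hx : 1 ≤ scale (2 * β + 3) n) :
    cellNumber (2 * β + 3) n * capacity β n ≤ countBound β n := by
  have hc := cellConst_pos β
  have hK : (cellNumber (2 * β + 3) n : ℝ) ≤ scale (2 * β + 3) n ^ 10 :=
    cellNumber_le (by linarith) hx
  have hn : scale (2 * β + 3) n ^ 11 ≤ n :=
    scale_pow_le (by linarith) hx (by push_cast; linarith)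
  set A := cellConst β * 2 ^ (2 * β + 3)
  have : 0 < A := by positivity
  calc cellNumber (2 * β + 3) n * capacity β n
    _ ≤ scale (2 * β + 3) n ^ 10 * ((2 * A + 1) * scale (2 * β + 3) n) :=
      mul_le_mul_of_nonneg_right hK (capacity_nonneg β n)
    _ = (2 * A + 1) * scale (2 * β + 3) n ^ 11 := by ring
    _ ≤ (2 * A + 2) * n := by gcongr; linarith

lemma tendsto_countBound_sq_mul_failureBound (hβ : 0 ≤ β) :
    Tendsto (fun n => countBound β n ^ 2 * failureBound (2 * β + 3) n) atTop (nhds 0) := by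
  have h := (tendsto_sq_mul_failureBound (by linarith : 0 < 2 * β + 3)).const_mul
    ((2 * (cellConst β * 2 ^ (2 * β + 3)) + 2) ^ 2)
  rw [mul_zero] at h
  exact h.congr fun n => by rw [countBound]; ring

lemma tendsto_countBound_sq_mul_failureBound_div (hβ : 0 ≤ β) :
    Tendsto (fun n => 4 * countBound β n ^ 2 * failureBound (2 * β + 3) n /
      √Var[exposedCount (-2); betaPi β n] ^ 2) atTop (nhds 0) := by
  have h := (tendsto_countBound_sq_mul_failureBound hβ).const_mul 4
  rw [mul_zero] at h
  have hε := failureBound_nonneg (2 * β + 3)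
  refine squeeze_zero' (.of_forall fun n => ?_) ?_ h
  · have := hε n
    positivity
  · filter_upwards [eventually_one_le_sqrt_variance hβ] with n hσ
    rw [← mul_assoc]
    exact div_le_self (by have := hε n; positivity) (one_le_pow₀ hσ)

lemma tendsto_countBound_mul_failureBound_div (hβ : 0 ≤ β) :
    Tendsto (fun n => 2 * countBound β n * failureBound (2 * β + 3) n /
      √Var[exposedCount (-2); betaPi β n]) atTop (nhds 0) := by
  have h := (tendsto_countBound_sq_mul_failureBound hβ).const_mul 2
  rw [mul_zero] at h
  have hε := failureBound_nonneg (2 * β + 3)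
  have hM (n : ℕ) : 0 ≤ countBound β n := n.cast_nonneg.trans (le_countBound β n)
  refine squeeze_zero' (.of_forall fun n => ?_) ?_ h
  · have := hε n
    have := hM n
    positivity
  · filter_upwards [eventually_one_le_sqrt_variance hβ, eventually_ge_atTop 1] with n hσ hn
    have hM1 : 1 ≤ countBound β n := (Nat.one_le_cast.2 hn).trans (le_countBound β n)
    have hε := hε n
    calc 2 * countBound β n * failureBound (2 * β + 3) n / √Var[exposedCount (-2); betaPi β n]
      _ ≤ 2 * countBound β n * failureBound (2 * β + 3) n := div_le_self (by positivity) hσ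
      _ ≤ 2 * countBound β n ^ 2 * failureBound (2 * β + 3) n := by
        gcongr
        exact le_self_pow₀ hM1 two_ne_zero
      _ = 2 * (countBound β n ^ 2 * failureBound (2 * β + 3) n) := mul_assoc _ _ _

theorem tendsto_charFun_standardized_exposedCount (hβ : 0 ≤ β) (t : ℝ) :
    Tendsto (fun n => charFun ((betaPi β n).map fun ω =>
      (exposedCount (-2) ω - ∫ ω, exposedCount (-2) ω ∂betaPi β n) /
        √Var[exposedCount (-2); betaPi β n]) t) atTop (nhds (charFun (gaussianReal 0 1) t)) := by
  have hq : 1 ≤ 2 * β + 3 := by linarith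
  rw [tendsto_iff_norm_sub_tendsto_zero]
  refine squeeze_zero' (.of_forall fun n => norm_nonneg _) ?_
    (tendsto_clt_error (tendsto_summandBound hβ) (tendsto_cellNumber_mul_summandBound_pow hβ)
      (tendsto_cellNumber_sq_mul_cellMassBound_sq hβ)
      (tendsto_cellNumber_pow_mul_summandBound_sq_mul_cellMassBound_sq hβ)
      (tendsto_countBound_mul_failureBound_div hβ)
      (tendsto_countBound_sq_mul_failureBound_div hβ) 29 t)
  have := isProbabilityMeasure_betaMeasure hβ
  filter_upwards [(tendsto_scale (by linarith : 0 < 2 * β + 3)).eventually_ge_atTop 1,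
    eventually_sectorAngle_cellNumber_le hq, eventually_one_le_sqrt_variance hβ] with n hx hw hσ
  set K := cellNumber (2 * β + 3) n with hKdef
  have hK : 0 < K := cellNumber_pos hq hx
  have : NeZero K := ⟨hK.ne'⟩
  have hs : -2 ≤ nearBoundary K := by
    have := sectorAngle_pos hK
    rw [nearBoundary]
    nlinarith
  have hsum : ∀ᵐ ω ∂Measure.pi fun _ : Fin n => betaMeasure β, ω ∈ goodEvent (Fin n) K
      (capacity β n) → exposedCount (-2) ω = ∑ c, cellCount K (capacity β n) c ω := by
    filter_upwards [ae_pi_forall (ae_norm_le_one_betaMeasure β)] with ω hω hgood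
    exact exposedCount_eq_sum_cellCount hw hs hgood hω
  have hbound := norm_charFun_map_standardized_sub_charFun_gaussianReal_le (μ := betaMeasure β)
    measurableSet_cell (measureReal_cell_le hβ hK hw) card_overlap_cell_le
    (measurable_cellCount (capacity β n)) (localOn_cellCount K (capacity β n))
    (cellCount_mem_Icc (capacity_nonneg β n))
    (by rw [ZMod.card]; exact cellNumber_mul_capacity_le hβ hx) (measurable_exposedCount (-2))
    (fun ω => Set.Icc_subset_Icc_right (le_countBound β n) (exposedCount_fin_mem_Icc (-2) ω))
    (measurableSet_goodEvent _) (measureReal_compl_goodEvent_le_failureBound hβ hx hw) hsum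
    (zero_lt_one.trans_le hσ) (Real.sq_sqrt (variance_nonneg _ _)) rfl t
  simpa only [ZMod.card, Fintype.card_fin, Nat.cast_ofNat, cellMassBound, summandBound, betaPi,
    ← hKdef] using hbound

lemma vertCount_ae_eq_exposedCount (hβ : 0 ≤ β) (n : ℕ) :
    vertCount =ᵐ[betaPi β n] exposedCount (-2) := by
  have := isProbabilityMeasure_betaMeasure hβ
  filter_upwards [ae_pi_injective (μ := betaMeasure β),
    ae_pi_forall (ae_norm_le_one_betaMeasure β)] with ω hinj hω
  exact vertCount_eq_exposedCount hinj fun i => by linarith [hω i]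

lemma meanF0_eq_integral_exposedCount (hβ : 0 ≤ β) (n : ℕ) :
    meanF0 β n = ∫ ω, exposedCount (-2) ω ∂betaPi β n :=
  integral_congr_ae (vertCount_ae_eq_exposedCount hβ n)

lemma varF0_eq_variance_exposedCount (hβ : 0 ≤ β) (n : ℕ) :
    varF0 β n = Var[exposedCount (-2); betaPi β n] := by
  have := isProbabilityMeasure_betaPi hβ n
  have hmem : MemLp (exposedCount (-2)) 2 (betaPi β n) :=
    memLp_of_bounded (.of_forall (exposedCount_fin_mem_Icc (-2)))
      (measurable_exposedCount (-2)).aestronglyMeasurable 2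
  rw [variance_eq_sub hmem, varF0, meanF0_eq_integral_exposedCount hβ]
  congr 1
  exact integral_congr_ae ((vertCount_ae_eq_exposedCount hβ n).pow_const 2)

theorem vertex_count_clt_general (β : ℝ) (hβ : 0 ≤ β) :
    Tendsto (fun n : ℕ => ⨆ z : ℝ,
      |(betaPi β n {ω | (vertCount ω - meanF0 β n) / √(varF0 β n) ≤ z}).toReal -
        ((gaussianReal 0 1) (Set.Iic z)).toReal|) atTop (nhds 0) := by
  have hmeas (n : ℕ) : Measurable fun ω : Fin n → Plane =>
      (exposedCount (-2) ω - ∫ ω, exposedCount (-2) ω ∂betaPi β n) /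
        √Var[exposedCount (-2); betaPi β n] :=
    ((measurable_exposedCount (-2)).sub_const _).div_const _
  have hprob (n : ℕ) := isProbabilityMeasure_betaPi hβ n
  have := nullSingletonClass_gaussianReal (μ := 0) one_ne_zero
  have hprob_map (n : ℕ) :=
    Measure.isProbabilityMeasure_map (μ := betaPi β n) (hmeas n).aemeasurable
  refine (tendsto_iSup_abs_cdf_sub_of_tendsto_charFun
    (tendsto_charFun_standardized_exposedCount hβ)).congr fun n => iSup_congr fun z => ?_
  rw [cdf_eq_real, cdf_eq_real, map_measureReal_apply (hmeas n) measurableSet_Iic,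
    varF0_eq_variance_exposedCount hβ, meanF0_eq_integral_exposedCount hβ]
  congr 2
  refine measureReal_congr (eventuallyEq_set.2 ?_)
  filter_upwards [vertCount_ae_eq_exposedCount hβ n] with ω hω
  simp only [Set.mem_preimage, Set.mem_Iic, hω]

end GaussianLimit

/-- central limit theorem for the vertex count of the `β`-polygon. For
`d ≥ 4` and `β = d/2 - 2`, the Kolmogorov distance between the normalized vertex count
`(f₀(Qₙ) - Eₙ)/√Vₙ` and a standard Gaussian tends to `0` as `n → ∞`. -/
theorem vertex_count_clt (d : ℕ) (hd : 4 ≤ d)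
    (β : ℝ) (hβ : β = (d : ℝ) / 2 - 2) :
    Filter.Tendsto
      (fun n : ℕ =>
        ⨆ z : ℝ,
          |(betaPi β n {ω |
              (vertCount ω - meanF0 β n) / Real.sqrt (varF0 β n) ≤ z}).toReal -
            ((ProbabilityTheory.gaussianReal 0 1) (Set.Iic z)).toReal|)
      Filter.atTop (nhds 0) :=
  vertex_count_clt_general β <| by
    have : (4 : ℝ) ≤ d := by exact_mod_cast hd
    linarith
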